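/- Assume Ω is a bounded C¹ domain with 0 ∈ Ω, b is Lipschitz with b(0)=0, the origin is globally asymptotically stable for Ẋ = b(X), b(x)·x ≤ −b₀|x|² on B_{r₀}, and a^ε ∈ C(Q̄;𝕊ⁿ(θ₀)). For any δ > 0 there exist ε₀ ∈ (0,1), a family {τ(ε)}_{0<ε≤ε₀} ⊂ (0,∞) (both depending on r₀, θ₀, b, δ, n), a constant γ ∈ (0,1), and a constant C > 0 (depending on r₀, θ₀, b, δ, n) with τ(ε) ≤ C(|log ε| + 1) for all ε ∈ (0,ε₀], such that: if, for ε ∈ (0,ε₀], u^ε is a classical solution of (L) satisfying, for some T(ε) ∈ (τ(ε), ∞], u^ε ≤ 1 in B_{r₀}×(0,T(ε)) and u^ε(0,t) ≤ 0 for all t ∈ (0,T(ε)), then u^ε ≤ δ in B_{γr₀}×(τ(ε), T(ε)). -/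

import Mathlib

open Set Filter Metric Topology
open scoped ENNReal

noncomputable section

/-- `n`-dimensional Euclidean space. -/
abbrev Eu (n : ℕ) := EuclideanSpace ℝ (Fin n)

variable {n : ℕ}

/-- Euclidean dot product. -/
def dotp (x y : Eu n) : ℝ := ∑ i, x i * y i

/-- The quadratic form `A p · p` of a matrix `A`. -/
def mquad (A : Matrix (Fin n) (Fin n) ℝ) (p : Eu n) : ℝ := ∑ i, ∑ j, A i j * p i * p j

/-- `A ∈ 𝕊ⁿ(θ)`: symmetric with `θ I ≤ A ≤ θ⁻¹ I`. -/
def memS (θ : ℝ) (A : Matrix (Fin n) (Fin n) ℝ) : Prop :=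
  A.IsSymm ∧ ∀ p : Eu n, θ * ‖p‖ ^ 2 ≤ mquad A p ∧ mquad A p ≤ θ⁻¹ * ‖p‖ ^ 2

/-- order of symmetric matrices (via quadratic forms). -/
def mle (A B : Matrix (Fin n) (Fin n) ℝ) : Prop := ∀ p : Eu n, mquad A p ≤ mquad B p

/-- trace of the product `A·H`. -/
def trMul (A H : Matrix (Fin n) (Fin n) ℝ) : ℝ := ∑ i, ∑ j, A i j * H j i

/-- the Pucci maximal operator associated with `𝕊ⁿ(θ)`. -/
def pucci (θ : ℝ) (X : Matrix (Fin n) (Fin n) ℝ) : ℝ :=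
  sSup ((fun A => trMul A X) '' {A | memS θ A})

/-- time derivative of `u(x,t)`. -/
def tD (u : Eu n → ℝ → ℝ) (x : Eu n) (t : ℝ) : ℝ := deriv (u x) t

/-- spatial gradient of `u(x,t)`. -/
def sG (u : Eu n → ℝ → ℝ) (x : Eu n) (t : ℝ) : Eu n := gradient (fun y => u y t) x

/-- spatial Hessian matrix of `u(x,t)`. -/
def sH (u : Eu n → ℝ → ℝ) (x : Eu n) (t : ℝ) : Matrix (Fin n) (Fin n) ℝ :=
  fun i j => fderiv ℝ (fun y => sG u y t i) x (EuclideanSpace.single j 1)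

/-- Hessian matrix of a static function. -/
def hessS (v : Eu n → ℝ) (x : Eu n) : Matrix (Fin n) (Fin n) ℝ :=
  fun i j => fderiv ℝ (fun y => gradient v y i) x (EuclideanSpace.single j 1)

/-- closed parabolic cylinder `Q̄_T = closure Ω × [0,T]` (with `T ∈ (0,∞]`). -/
def cylC (Ω : Set (Eu n)) (T : ℝ≥0∞) : Set (Eu n × ℝ) :=
  {p | p.1 ∈ closure Ω ∧ 0 ≤ p.2 ∧ ENNReal.ofReal p.2 ≤ T}

/-- open parabolic cylinder `Q_T = Ω × (0,T)`. -/
def cylO (Ω : Set (Eu n)) (T : ℝ≥0∞) : Set (Eu n × ℝ) :=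
  {p | p.1 ∈ Ω ∧ 0 < p.2 ∧ ENNReal.ofReal p.2 < T}

/-- `u ∈ C^{2,1}(Q_T)`. -/
def C21 (u : Eu n → ℝ → ℝ) (Ω : Set (Eu n)) (T : ℝ≥0∞) : Prop :=
  (∀ x ∈ Ω, ∀ t : ℝ, 0 < t → ENNReal.ofReal t < T →
     ContDiffAt ℝ 2 (fun y => u y t) x ∧ DifferentiableAt ℝ (u x) t) ∧
  ContinuousOn (fun p : Eu n × ℝ => tD u p.1 p.2) (cylO Ω T) ∧
  ContinuousOn (fun p : Eu n × ℝ => sH u p.1 p.2) (cylO Ω T)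

/-- `u ∈ C(Q̄_T) ∩ C^{2,1}(Q_T)`. -/
def Classical21 (u : Eu n → ℝ → ℝ) (Ω : Set (Eu n)) (T : ℝ≥0∞) : Prop :=
  ContinuousOn (fun p : Eu n × ℝ => u p.1 p.2) (cylC Ω T) ∧ C21 u Ω T

/-- a coefficient field in `C(Q̄_T; 𝕊ⁿ(θ))`. -/
def MatC (θ : ℝ) (A : Eu n → ℝ → Matrix (Fin n) (Fin n) ℝ) (Ω : Set (Eu n))
    (T : ℝ≥0∞) : Prop :=
  ContinuousOn (fun p : Eu n × ℝ => A p.1 p.2) (cylC Ω T) ∧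
  ∀ p ∈ cylC Ω T, memS θ (A p.1 p.2)

/-- `u` is a classical solution of `u_t = ε tr[A D²u] + b·Du` in `Q_T`. -/
def SolveL (ε : ℝ) (A : Eu n → ℝ → Matrix (Fin n) (Fin n) ℝ) (b : Eu n → Eu n)
    (u : Eu n → ℝ → ℝ) (Ω : Set (Eu n)) (T : ℝ≥0∞) : Prop :=
  ∀ x ∈ Ω, ∀ t : ℝ, 0 < t → ENNReal.ofReal t < T →
    tD u x t = ε * trMul (A x t) (sH u x t) + dotp (b x) (sG u x t)

/-- `u` is a classical subsolution of `(L)` in `Q_T`. -/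
def SubsolL (ε : ℝ) (A : Eu n → ℝ → Matrix (Fin n) (Fin n) ℝ) (b : Eu n → Eu n)
    (u : Eu n → ℝ → ℝ) (Ω : Set (Eu n)) (T : ℝ≥0∞) : Prop :=
  ∀ x ∈ Ω, ∀ t : ℝ, 0 < t → ENNReal.ofReal t < T →
    tD u x t ≤ ε * trMul (A x t) (sH u x t) + dotp (b x) (sG u x t)

/-- `u` is a classical supersolution of `(L)` in `Q_T`. -/
def SupersolL (ε : ℝ) (A : Eu n → ℝ → Matrix (Fin n) (Fin n) ℝ) (b : Eu n → Eu n)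
    (u : Eu n → ℝ → ℝ) (Ω : Set (Eu n)) (T : ℝ≥0∞) : Prop :=
  ∀ x ∈ Ω, ∀ t : ℝ, 0 < t → ENNReal.ofReal t < T →
    ε * trMul (A x t) (sH u x t) + dotp (b x) (sG u x t) ≤ tD u x t

/-- viscosity subsolution of `H(x,Du) = 0` on `A`. -/
def ViscSub (H : Eu n → Eu n → ℝ) (A : Set (Eu n)) (u : Eu n → ℝ) : Prop :=
  ∀ φ : Eu n → ℝ, ContDiff ℝ 1 φ → ∀ x ∈ A,
    IsLocalMaxOn (fun y => u y - φ y) A x → H x (gradient φ x) ≤ 0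

/-- viscosity supersolution of `H(x,Du) = 0` on `A`. -/
def ViscSup (H : Eu n → Eu n → ℝ) (A : Set (Eu n)) (u : Eu n → ℝ) : Prop :=
  ∀ φ : Eu n → ℝ, ContDiff ℝ 1 φ → ∀ x ∈ A,
    IsLocalMinOn (fun y => u y - φ y) A x → 0 ≤ H x (gradient φ x)

/-- the Hamiltonian `H_α(x,p) = α(x) p·p + b(x)·p`. -/
def Ham (α : Eu n → Matrix (Fin n) (Fin n) ℝ) (b : Eu n → Eu n) (x p : Eu n) : ℝ :=
  mquad (α x) p + dotp (b x) p

/-- the quasi-potential `V_α`: the pointwise supremum (= maximal element) of all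
Lipschitz viscosity subsolutions of `H_α(x,Du)=0` in `Ω` vanishing at the origin. -/
def Vq (α : Eu n → Matrix (Fin n) (Fin n) ℝ) (b : Eu n → Eu n) (Ω : Set (Eu n))
    (x : Eu n) : ℝ :=
  sSup {r | ∃ u : Eu n → ℝ, (∃ K : NNReal, LipschitzOnWith K u (closure Ω)) ∧
    u 0 = 0 ∧ ViscSub (Ham α b) Ω u ∧ r = u x}

/-- `M_α = min_{∂Ω} V_α`. -/
def Mq (α : Eu n → Matrix (Fin n) (Fin n) ℝ) (b : Eu n → Eu n) (Ω : Set (Eu n)) : ℝ :=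
  sInf (Vq α b Ω '' frontier Ω)

/-- `argmin (V_α | ∂Ω)`. -/
def argminV (α : Eu n → Matrix (Fin n) (Fin n) ℝ) (b : Eu n → Eu n)
    (Ω : Set (Eu n)) : Set (Eu n) :=
  {x ∈ frontier Ω | ∀ y ∈ frontier Ω, Vq α b Ω x ≤ Vq α b Ω y}

/-- `Σ_α^m = {x ∈ Ω̄ : V_α(x) ≤ m}`. -/
def SigmaM (α : Eu n → Matrix (Fin n) (Fin n) ℝ) (b : Eu n → Eu n) (Ω : Set (Eu n))
    (m : ℝ) : Set (Eu n) :=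
  {x ∈ closure Ω | Vq α b Ω x ≤ m}

/-- `Ω` is a bounded `C¹` domain with outward unit normal `ν`. -/
def IsBdC1With (Ω : Set (Eu n)) (ν : Eu n → Eu n) : Prop :=
  IsOpen Ω ∧ Bornology.IsBounded Ω ∧
  ∃ ρ : Eu n → ℝ, ContDiff ℝ 1 ρ ∧ Ω = {x | ρ x < 0} ∧
    ∀ x ∈ frontier Ω, gradient ρ x ≠ 0 ∧ ν x = ‖gradient ρ x‖⁻¹ • gradient ρ x

/-- `X` is the flow of `b`, and the origin is globally asymptotically stable. -/
def GAS (b : Eu n → Eu n) (X : ℝ → Eu n → Eu n) : Prop :=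
  (∀ x, X 0 x = x) ∧ (∀ x t, HasDerivAt (fun s => X s x) (b (X t x)) t) ∧
  (∀ x, Tendsto (fun t => X t x) atTop (nhds 0)) ∧
  (∀ ε > (0:ℝ), ∃ δ > (0:ℝ), ∀ x : Eu n, ‖x‖ < δ → ∀ t ≥ (0:ℝ), ‖X t x‖ < ε)

/-- `Ω_δ = {x ∈ Ω : dist(x,∂Ω) > δ}`. -/
def Omd (Ω : Set (Eu n)) (δ : ℝ) : Set (Eu n) := {x ∈ Ω | δ < infDist x (frontier Ω)}

/-- `Ω^Π_δ = {x ∈ Ω̄ : dist(x, ∂Ω \ Π) > δ}`. -/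
def OmPid (Ω Pset : Set (Eu n)) (δ : ℝ) : Set (Eu n) :=
  {x ∈ closure Ω | δ < infDist x (frontier Ω \ Pset)}

/-- the standing assumptions (B). -/
structure SettingB (n : ℕ) where
  Ω : Set (Eu n)
  ν : Eu n → Eu n
  g : Eu n → ℝ
  θ₀ : ℝ
  a : Eu n → ℝ → Matrix (Fin n) (Fin n) ℝ
  b : Eu n → Eu n
  b₀ : ℝ
  r₀ : ℝ
  θ₀_mem : θ₀ ∈ Set.Ioc (0 : ℝ) 1
  domain : IsBdC1With Ω ν
  zero_mem : (0 : Eu n) ∈ Ω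
  g_cont : ContinuousOn g (closure Ω)
  a_cont : ContinuousOn (fun p : Eu n × ℝ => a p.1 p.2) (closure Ω ×ˢ Set.univ)
  a_mem : ∀ x ∈ closure Ω, ∀ c : ℝ, memS θ₀ (a x c)
  b_lip : ∃ K : NNReal, LipschitzWith K b
  b_zero : b 0 = 0
  b_gas : ∃ X : ℝ → Eu n → Eu n, GAS b X
  b_inward : ∀ x ∈ frontier Ω, dotp (b x) (ν x) < 0
  b₀_pos : 0 < b₀
  r₀_pos : 0 < r₀
  ball_sub : closedBall (0 : Eu n) r₀ ⊆ Ω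
  b_coerc : ∀ x ∈ ball (0 : Eu n) r₀, dotp (b x) x ≤ -b₀ * ‖x‖ ^ 2

namespace SettingB

variable (S : SettingB n)

/-- the quasi-potential `V^c` associated with `(a(·,c), b)`. -/
def Vc (c : ℝ) : Eu n → ℝ := Vq (fun x => S.a x c) S.b S.Ω

/-- `M(c) = min_{∂Ω} V^c`. -/
def M (c : ℝ) : ℝ := sInf (S.Vc c '' frontier S.Ω)

/-- `G(c) = {g(x) : x ∈ argmin(V^c|∂Ω)}`. -/
def Gset (c : ℝ) : Set ℝ := S.g '' argminV (fun x => S.a x c) S.b S.Ω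

/-- `G⁺(c) = max G(c)`. -/
def Gp (c : ℝ) : ℝ := sSup (S.Gset c)

/-- `G⁻(c) = min G(c)`. -/
def Gm (c : ℝ) : ℝ := sInf (S.Gset c)

/-- `c₀ = g(0)`. -/
def c0 : ℝ := S.g 0

/-- `g_min = min_{Ω̄} g`. -/
def gmin : ℝ := sInf (S.g '' closure S.Ω)

/-- `g_max = max_{Ω̄} g`. -/
def gmax : ℝ := sSup (S.g '' closure S.Ω)

/-- the crossing value `c₁`. -/
def c1 : ℝ :=
  if S.c0 ≤ S.Gp S.c0 then sInf {c | S.c0 ≤ c ∧ S.Gm c ≤ c}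
  else sSup {c | c ≤ S.c0 ∧ c ≤ S.Gp c}

/-- the function `c̄ : (0,∞) → I_g`. -/
def cbar (l : ℝ) : ℝ :=
  if l < S.M S.c0 ∨ S.c1 = S.c0 then S.c0
  else if S.c0 < S.c1 then min S.c1 (sInf {c | c ∈ Set.Icc S.c0 S.c1 ∧ S.M c = l})
  else max S.c1 (sSup {c | c ∈ Set.Icc S.c1 S.c0 ∧ S.M c = l})

/-- assumption (FK13): `G⁺(c₀) = G⁻(c₀)`. -/
def FK13 : Prop := S.Gp S.c0 = S.Gm S.c0

/-- assumption (FK12). -/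
def FK12 : Prop :=
  ∀ δ₀ > (0:ℝ), ∃ δ ∈ Set.Ioc (0:ℝ) δ₀,
    (S.c1 ≤ S.c0 ∧ S.gmin < S.c1 → S.c1 - δ < S.Gm (S.c1 - δ)) ∧
    (S.c0 ≤ S.c1 ∧ S.c1 < S.gmax → S.Gp (S.c1 + δ) < S.c1 + δ)

/-- `u` is a classical (`C(Q̄) ∩ C^{2,1}(Q)`) solution of the quasi-linear equation (QL). -/
def SolvesQL (ε : ℝ) (u : Eu n → ℝ → ℝ) : Prop :=
  Classical21 u S.Ω ⊤ ∧ SolveL ε (fun x t => S.a x (u x t)) S.b u S.Ω ⊤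

/-- the boundary condition (BC): `u = g` on the parabolic boundary of `Q`. -/
def BC (u : Eu n → ℝ → ℝ) : Prop :=
  (∀ x ∈ closure S.Ω, u x 0 = S.g x) ∧ ∀ x ∈ frontier S.Ω, ∀ t > (0:ℝ), u x t = S.g x

end SettingB

/-!
On balls of radius comparable to `√ε` the parabolic scaling turns the equation into one with unit
diffusivity and drift of size at most one, uniformly in `ε`. If `u ≤ M` there, then `1 - u / M` is a
nonnegative solution which is at least `1` on the axis, so the Krylov–Safonov Harnack inequality
lowers the supremum of `u` by a fixed factor on a smaller ball; iterating, `u ≤ δ / 2` for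
`|x| ≤ ρ √ε` after a bounded time. On the annulus `ρ √ε ≤ |x| ≤ r₀ / 2` the drift points inwards,
and `u` is compared with a radial supersolution which behaves like `log (|x|² / ε)` minus a multiple
of time. Its oscillation over the annulus is of order `|log ε|`, whence the waiting time.

The Harnack inequality comes from sliding paraboloids `c - 2|x - y|²` from below: the contact sets
carry enough measure for a solution which is mostly large in measure to be large everywhere at some
time. Barriers spread this to later times, a Vitali covering turns it into growth of superlevel
sets, and a solution too large at one point would then be unbounded.
-/

/-! ### Quadratic forms and traces -/

/-- The operator on Euclidean space with matrix `M`. -/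
abbrev matCLM (M : Matrix (Fin n) (Fin n) ℝ) : Eu n →L[ℝ] Eu n :=
  Matrix.toEuclideanCLM (𝕜 := ℝ) M

lemma det_matCLM (M : Matrix (Fin n) (Fin n) ℝ) : (matCLM M).det = M.det := by
  rw [ContinuousLinearMap.det, Matrix.coe_toEuclideanCLM_eq_toEuclideanLin,
    Matrix.toEuclideanLin_eq_toLin_orthonormal, LinearMap.det_toLin]

lemma matCLM_vecMulVec (v z : Eu n) :
    matCLM (Matrix.vecMulVec v.ofLp v.ofLp) z = (inner ℝ v z) • v := by
  ext i
  simp [Matrix.vecMulVec_mulVec, PiLp.inner_apply, dotProduct, mul_comm]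

lemma dotp_eq_inner (x y : Eu n) : dotp x y = inner ℝ x y := by
  simp [dotp, PiLp.inner_apply, mul_comm]

lemma mquad_eq_dotProduct (M : Matrix (Fin n) (Fin n) ℝ) (v : Eu n) :
    mquad M v = v.ofLp ⬝ᵥ M.mulVec v.ofLp := by
  simp only [mquad, dotProduct, Matrix.mulVec, Finset.mul_sum]
  exact Finset.sum_congr rfl fun i _ => Finset.sum_congr rfl fun j _ => by ring

lemma mquad_eq_inner (M : Matrix (Fin n) (Fin n) ℝ) (v : Eu n) :
    mquad M v = inner ℝ v (matCLM M v) := by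
  rw [mquad_eq_dotProduct, Matrix.inner_toEuclideanCLM]

lemma mquad_sub_smul_one (M : Matrix (Fin n) (Fin n) ℝ) (c : ℝ) (v : Eu n) :
    mquad (M - c • 1) v = mquad M v - c * ‖v‖ ^ 2 := by
  simp [mquad_eq_inner, inner_sub_right, inner_smul_right]

lemma mquad_single (A : Matrix (Fin n) (Fin n) ℝ) (i : Fin n) :
    mquad A (EuclideanSpace.single i 1) = A i i := by
  rw [mquad, Finset.sum_eq_single i, Finset.sum_eq_single i] <;> simp +contextual

lemma posSemidef_of_mquad_nonneg {M : Matrix (Fin n) (Fin n) ℝ} (hsymm : M.IsSymm)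
    (hM : ∀ v : Eu n, 0 ≤ mquad M v) : M.PosSemidef := by
  refine Matrix.PosSemidef.of_dotProduct_mulVec_nonneg ?_ fun x => ?_
  · rwa [Matrix.IsHermitian, Matrix.conjTranspose_eq_transpose_of_trivial]
  · simpa [mquad_eq_dotProduct] using hM (WithLp.toLp 2 x)

lemma trMul_eq_trace (A M : Matrix (Fin n) (Fin n) ℝ) : trMul A M = (A * M).trace := by
  simp [trMul, Matrix.trace, Matrix.mul_apply]

lemma trMul_sub (A M N : Matrix (Fin n) (Fin n) ℝ) :
    trMul A (M - N) = trMul A M - trMul A N := by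
  simp [trMul_eq_trace, Matrix.mul_sub]

lemma trMul_smul (c : ℝ) (A M : Matrix (Fin n) (Fin n) ℝ) : trMul A (c • M) = c * trMul A M := by
  simp [trMul_eq_trace]

lemma trMul_vecMulVec (A : Matrix (Fin n) (Fin n) ℝ) (v : Eu n) :
    trMul A (Matrix.vecMulVec v.ofLp v.ofLp) = mquad A v := by
  simp only [trMul, mquad, Matrix.vecMulVec_apply]
  exact Finset.sum_congr rfl fun i _ => Finset.sum_congr rfl fun j _ => by ring

open scoped MatrixOrder ComplexOrder in
lemma trMul_nonneg {A M : Matrix (Fin n) (Fin n) ℝ} (hA : A.PosSemidef) (hM : M.PosSemidef) :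
    0 ≤ trMul A M := by
  obtain ⟨B, hB⟩ := CStarAlgebra.nonneg_iff_eq_star_mul_self.mp hM.nonneg
  rw [Matrix.star_eq_conjTranspose] at hB
  rw [trMul_eq_trace, hB, ← Matrix.mul_assoc, Matrix.trace_mul_comm, ← Matrix.mul_assoc]
  exact (hA.mul_mul_conjTranspose_same B).trace_nonneg

lemma abs_det_le_trace_pow {M : Matrix (Fin n) (Fin n) ℝ} (hM : M.PosSemidef) :
    |M.det| ≤ M.trace ^ n := by
  have eigenvalue_le_trace (i : Fin n) : hM.1.eigenvalues i ≤ M.trace := by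
    rw [hM.1.trace_eq_sum_eigenvalues]
    exact Finset.single_le_sum (f := fun i => hM.1.eigenvalues i)
      (fun j _ => hM.eigenvalues_nonneg j) (Finset.mem_univ i)
  rw [hM.1.det_eq_prod_eigenvalues]
  simp only [RCLike.ofReal_real_eq_id, id]
  rw [abs_of_nonneg (Finset.prod_nonneg fun i _ => hM.eigenvalues_nonneg i)]
  calc ∏ i, hM.1.eigenvalues i ≤ ∏ _i : Fin n, M.trace :=
        Finset.prod_le_prod (fun i _ => hM.eigenvalues_nonneg i) fun i _ => eigenvalue_le_trace i
    _ = M.trace ^ n := by simp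

lemma memS.posSemidef {θ : ℝ} {A : Matrix (Fin n) (Fin n) ℝ} (hθ : 0 < θ) (hA : memS θ A) :
    A.PosSemidef :=
  posSemidef_of_mquad_nonneg hA.1 fun v => le_trans (by positivity) (hA.2 v).1

lemma memS.trace_le {θ : ℝ} {A : Matrix (Fin n) (Fin n) ℝ} (hA : memS θ A) :
    A.trace ≤ n / θ := by
  have diag_le (i : Fin n) : A i i ≤ θ⁻¹ := by
    simpa [mquad_single] using (hA.2 (EuclideanSpace.single i 1)).2
  calc A.trace = ∑ i, A i i := rfl
    _ ≤ ∑ _i : Fin n, θ⁻¹ := Finset.sum_le_sum fun i _ => diag_le i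
    _ = n / θ := by simp [div_eq_mul_inv]

lemma memS.mul_trace_le_trMul {θ : ℝ} {A M : Matrix (Fin n) (Fin n) ℝ} (hA : memS θ A)
    (hM : M.PosSemidef) : θ * M.trace ≤ trMul A M := by
  have hAθ : (A - θ • (1 : Matrix (Fin n) (Fin n) ℝ)).PosSemidef := by
    refine posSemidef_of_mquad_nonneg (hA.1.sub (Matrix.isSymm_one.smul θ)) fun v => ?_
    rw [mquad_sub_smul_one]
    linarith [(hA.2 v).1]
  have h := trMul_nonneg hAθ hM
  rw [trMul_eq_trace, Matrix.sub_mul, Matrix.trace_sub, smul_mul_assoc, one_mul,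
    Matrix.trace_smul, smul_eq_mul] at h
  rw [trMul_eq_trace]
  linarith

/-! ### Second-order calculus -/

lemma gradient_apply (f : Eu n → ℝ) (y : Eu n) (i : Fin n) :
    gradient f y i = fderiv ℝ f y (EuclideanSpace.single i 1) := by
  rw [← InnerProductSpace.toDual_symm_apply, EuclideanSpace.inner_single_right, gradient]
  simp

lemma hasFDerivAt_matCLM_of_differentiableAt {g : Eu n → Eu n} {x : Eu n}
    (hg : DifferentiableAt ℝ g x) :
    HasFDerivAt g (matCLM (.of fun i j =>
      fderiv ℝ (fun y => g y i) x (EuclideanSpace.single j 1))) x := by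
  refine hg.hasFDerivAt.congr_fderiv ?_
  refine ContinuousLinearMap.coe_injective
    ((EuclideanSpace.basisFun (Fin n) ℝ).toBasis.ext fun j => ?_)
  ext i
  have coord (i : Fin n) :
      fderiv ℝ (fun y => g y i) x = (EuclideanSpace.proj i).comp (fderiv ℝ g x) :=
    ((EuclideanSpace.proj (𝕜 := ℝ) i).hasFDerivAt.comp x hg.hasFDerivAt).fderiv
  simp [coord]

lemma hasFDerivAt_gradient {f : Eu n → ℝ} {x : Eu n} (hf : ContDiffAt ℝ 2 f x) :
    HasFDerivAt (gradient f) (matCLM (hessS f x)) x := by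
  refine hasFDerivAt_matCLM_of_differentiableAt (differentiableAt_euclidean.2 fun i => ?_)
  simp only [gradient_apply]
  have h : DifferentiableAt ℝ (fderiv ℝ f) x :=
    (hf.fderiv_right (m := 1) (by norm_num)).differentiableAt one_ne_zero
  exact h.clm_apply (differentiableAt_const _)

lemma eventually_hasGradientAt {f : Eu n → ℝ} {x : Eu n} (hf : ContDiffAt ℝ 2 f x) :
    ∀ᶠ y in 𝓝 x, HasGradientAt f (gradient f y) y := by
  filter_upwards [hf.eventually (by simp)] with y hy
  exact (hy.differentiableAt two_ne_zero).hasGradientAt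

lemma isSymm_hessS {f : Eu n → ℝ} {x : Eu n} (hf : ContDiffAt ℝ 2 f x) : (hessS f x).IsSymm := by
  have entry (i j : Fin n) : hessS f x i j = fderiv ℝ (fderiv ℝ f) x
      (EuclideanSpace.single j 1) (EuclideanSpace.single i 1) := by
    have h : DifferentiableAt ℝ (fderiv ℝ f) x :=
      (hf.fderiv_right (m := 1) (by norm_num)).differentiableAt one_ne_zero
    simp only [hessS, gradient_apply]
    rw [fderiv_clm_apply h (differentiableAt_const _)]
    simp
  ext i j
  rw [Matrix.transpose_apply, entry, entry]
  exact hf.isSymmSndFDerivAt (by simp) _ _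

lemma nonneg_of_isLocalMin_of_hasDerivAt {g g' : ℝ → ℝ} {d a : ℝ}
    (hg : ∀ᶠ s in 𝓝 a, HasDerivAt g (g' s) s) (hg' : HasDerivAt g' d a)
    (hmin : IsLocalMin g a) : 0 ≤ d := by
  by_contra! hneg
  have deriv_eq : deriv g =ᶠ[𝓝 a] g' := hg.mono fun s hs => hs.deriv
  have deriv_deriv_eq : deriv (deriv g) a = d := deriv_eq.deriv_eq.trans hg'.deriv
  have hmax : IsLocalMax g a :=
    isLocalMax_of_deriv_deriv_neg (deriv_deriv_eq ▸ hneg) hmin.deriv_eq_zero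
      hg.self_of_nhds.continuousAt
  have const : g =ᶠ[𝓝 a] fun _ => g a := by
    filter_upwards [hmax, hmin] with s h₁ h₂ using le_antisymm h₁ h₂
  have deriv_zero : deriv (deriv g) a = 0 := by
    have h : deriv g =ᶠ[𝓝 a] fun _ => 0 := const.deriv.trans (by simp)
    rw [h.deriv_eq, deriv_const]
  linarith

lemma mquad_nonneg_of_isLocalMin {g : Eu n → ℝ} {G : Eu n → Eu n}
    {M : Matrix (Fin n) (Fin n) ℝ} {x : Eu n} (hg : ∀ᶠ y in 𝓝 x, HasGradientAt g (G y) y)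
    (hG : HasFDerivAt G (matCLM M) x) (hmin : IsLocalMin g x) (v : Eu n) : 0 ≤ mquad M v := by
  set line : ℝ → Eu n := fun s => x + s • v with line_def
  have line_deriv (s : ℝ) : HasDerivAt line v s := by
    have h := ((hasDerivAt_id s).smul_const v).const_add x
    rw [one_smul] at h
    exact h
  have line_zero : line 0 = x := by simp [line_def]
  have line_tendsto : Tendsto line (𝓝 0) (𝓝 x) := line_zero ▸ (line_deriv 0).continuousAt
  have first_deriv : ∀ᶠ s in 𝓝 (0 : ℝ),
      HasDerivAt (g ∘ line) (inner ℝ (G (line s)) v) s := by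
    filter_upwards [line_tendsto.eventually hg] with s hs
    simpa using hs.hasFDerivAt.comp_hasDerivAt s (line_deriv s)
  have second_deriv : HasDerivAt (fun s => inner ℝ (G (line s)) v) (mquad M v) 0 := by
    have hGl : HasDerivAt (fun s => G (line s)) (matCLM M v) 0 :=
      (line_zero.symm ▸ hG : HasFDerivAt G (matCLM M) (line 0)).comp_hasDerivAt (0 : ℝ)
        (line_deriv 0)
    rw [mquad_eq_inner, real_inner_comm]
    simpa using hGl.inner ℝ (hasDerivAt_const (0 : ℝ) v)
  refine nonneg_of_isLocalMin_of_hasDerivAt first_deriv second_deriv ?_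
  exact IsLocalMin.comp_continuous (line_zero.symm ▸ hmin) (line_deriv 0).continuousAt

/-! ### Touching by radial functions -/

lemma hasGradientAt_radial {F : ℝ → ℝ} {f₁ : ℝ} {y x : Eu n}
    (hF : HasDerivAt F f₁ (‖x - y‖ ^ 2)) :
    HasGradientAt (fun z => F (‖z - y‖ ^ 2)) ((2 * f₁) • (x - y)) x := by
  refine (hF.comp_hasFDerivAt x ((hasFDerivAt_id x).sub_const y).norm_sq).congr_fderiv ?_
  ext v
  simp
  ring

/-- The Hessian at `y + z` of `x ↦ F (‖x - y‖ ^ 2)`, where `f₁` and `f₂` are the values of `F'` and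
`F''` at `‖z‖ ^ 2`. -/
def radialHess (f₁ f₂ : ℝ) (z : Eu n) : Matrix (Fin n) (Fin n) ℝ :=
  (2 * f₁) • 1 + (4 * f₂) • Matrix.vecMulVec z.ofLp z.ofLp

lemma isSymm_radialHess (f₁ f₂ : ℝ) (z : Eu n) : (radialHess f₁ f₂ z).IsSymm := by
  refine (Matrix.isSymm_one.smul _).add (Matrix.IsSymm.smul ?_ _)
  ext i j
  simp [Matrix.vecMulVec_apply, mul_comm]

lemma trMul_radialHess (A : Matrix (Fin n) (Fin n) ℝ) (f₁ f₂ : ℝ) (z : Eu n) :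
    trMul A (radialHess f₁ f₂ z) = 2 * f₁ * A.trace + 4 * f₂ * mquad A z := by
  rw [← trMul_vecMulVec]
  simp [radialHess, trMul_eq_trace, Matrix.mul_add]

lemma hasFDerivAt_radial_gradient {F₁ : ℝ → ℝ} {f₂ : ℝ} {y x : Eu n}
    (hF : HasDerivAt F₁ f₂ (‖x - y‖ ^ 2)) :
    HasFDerivAt (fun z => (2 * F₁ (‖z - y‖ ^ 2)) • (z - y))
      (matCLM (radialHess (F₁ (‖x - y‖ ^ 2)) f₂ (x - y))) x := by
  have h := ((hasGradientAt_radial hF).hasFDerivAt.const_mul 2).smul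
    ((hasFDerivAt_id x).sub_const y)
  refine h.congr_fderiv ?_
  ext1 v
  simp only [radialHess, map_add, map_smul, add_apply, smul_apply, matCLM_vecMulVec]
  simp [inner_sub_left, smul_smul]
  ring_nf

lemma gradient_eq_of_isLocalMin_sub_radial {W : Eu n → ℝ} {F : ℝ → ℝ} {f₁ : ℝ} {x y : Eu n}
    (hW : DifferentiableAt ℝ W x) (hF : HasDerivAt F f₁ (‖x - y‖ ^ 2))
    (hmin : IsLocalMin (fun z => W z - F (‖z - y‖ ^ 2)) x) :
    gradient W x = (2 * f₁) • (x - y) := by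
  have h := hmin.hasFDerivAt_eq_zero
    (hW.hasGradientAt.hasFDerivAt.sub (hasGradientAt_radial hF).hasFDerivAt)
  rw [← map_sub, LinearIsometryEquiv.map_eq_zero_iff] at h
  exact sub_eq_zero.1 h

lemma posSemidef_hessS_sub_radialHess {W : Eu n → ℝ} {F F₁ : ℝ → ℝ} {f₂ : ℝ} {x y : Eu n}
    (hW : ContDiffAt ℝ 2 W x) (hF : ∀ᶠ s in 𝓝 (‖x - y‖ ^ 2), HasDerivAt F (F₁ s) s)
    (hF₁ : HasDerivAt F₁ f₂ (‖x - y‖ ^ 2))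
    (hmin : IsLocalMin (fun z => W z - F (‖z - y‖ ^ 2)) x) :
    (hessS W x - radialHess (F₁ (‖x - y‖ ^ 2)) f₂ (x - y)).PosSemidef := by
  refine posSemidef_of_mquad_nonneg ((isSymm_hessS hW).sub (isSymm_radialHess _ _ _)) ?_
  have norm_sq_tendsto : Tendsto (fun z : Eu n => ‖z - y‖ ^ 2) (𝓝 x) (𝓝 (‖x - y‖ ^ 2)) :=
    Continuous.tendsto (by fun_prop) x
  refine mquad_nonneg_of_isLocalMin
    (G := fun z => gradient W z - (2 * F₁ (‖z - y‖ ^ 2)) • (z - y)) ?_ ?_ hmin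
  · filter_upwards [eventually_hasGradientAt hW, norm_sq_tendsto.eventually hF] with z hz hFz
    rw [hasGradientAt_iff_hasFDerivAt, map_sub]
    exact hz.hasFDerivAt.sub (hasGradientAt_radial hFz).hasFDerivAt
  · rw [matCLM, map_sub]
    exact (hasFDerivAt_gradient hW).sub (hasFDerivAt_radial_gradient hF₁)

/-! ### Solutions with bounded measurable coefficients -/

/-- `w` is a `C^{2,1}` solution on `U` of some equation `w_t = ε tr[A D²w] + β · Dw` with
`A ∈ 𝕊ⁿ(θ)` and drift `β ∈ 𝓑 x`. The coefficients may depend on the point without any regularity,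
so that the class is stable under rescaling. -/
structure IsSolOn (θ ε : ℝ) (𝓑 : Eu n → Set (Eu n)) (U : Set (Eu n × ℝ))
    (w : Eu n → ℝ → ℝ) : Prop where
  continuousOn : ContinuousOn (fun z : Eu n × ℝ => w z.1 z.2) U
  continuousOn_tD : ContinuousOn (fun z : Eu n × ℝ => tD w z.1 z.2) U
  continuousOn_sH : ContinuousOn (fun z : Eu n × ℝ => sH w z.1 z.2) U
  differentiableAt : ∀ z ∈ U, DifferentiableAt ℝ (w z.1) z.2
  contDiffAt : ∀ z ∈ U, ContDiffAt ℝ 2 (fun y => w y z.2) z.1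
  equation : ∀ z ∈ U, ∃ A β, memS θ A ∧ β ∈ 𝓑 z.1 ∧
    tD w z.1 z.2 = ε * trMul A (sH w z.1 z.2) + inner ℝ β (sG w z.1 z.2)

lemma isSolOn_of_solveL {θ ε : ℝ} {b : Eu n → Eu n} {Ω : Set (Eu n)} {T : ℝ≥0∞}
    {u : Eu n → ℝ → ℝ} {A : Eu n → ℝ → Matrix (Fin n) (Fin n) ℝ} (hA : MatC θ A Ω T)
    (hu : Classical21 u Ω T) (hL : SolveL ε A b u Ω T) :
    IsSolOn θ ε (fun x => {b x}) (cylO Ω T) u := by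
  have cylO_subset : cylO Ω T ⊆ cylC Ω T :=
    fun z hz => ⟨subset_closure hz.1, hz.2.1.le, hz.2.2.le⟩
  refine ⟨hu.1.mono cylO_subset, hu.2.2.1, hu.2.2.2,
    fun z hz => (hu.2.1 z.1 hz.1 z.2 hz.2.1 hz.2.2).2,
    fun z hz => (hu.2.1 z.1 hz.1 z.2 hz.2.1 hz.2.2).1, fun z hz => ?_⟩
  refine ⟨A z.1 z.2, b z.1, hA.2 z (cylO_subset hz), rfl, ?_⟩
  rw [← dotp_eq_inner]
  exact hL z.1 hz.1 z.2 hz.2.1 hz.2.2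

lemma IsSolOn.mono {θ ε : ℝ} {𝓑 𝓑' : Eu n → Set (Eu n)} {U V : Set (Eu n × ℝ)}
    {w : Eu n → ℝ → ℝ} (h : IsSolOn θ ε 𝓑 U w) (hV : V ⊆ U)
    (h𝓑 : ∀ z ∈ V, 𝓑 z.1 ⊆ 𝓑' z.1) : IsSolOn θ ε 𝓑' V w where
  continuousOn := h.continuousOn.mono hV
  continuousOn_tD := h.continuousOn_tD.mono hV
  continuousOn_sH := h.continuousOn_sH.mono hV
  differentiableAt z hz := h.differentiableAt z (hV hz)
  contDiffAt z hz := h.contDiffAt z (hV hz)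
  equation z hz := by
    obtain ⟨A, β, hA, hβ, heq⟩ := h.equation z (hV hz)
    exact ⟨A, β, hA, h𝓑 z hz hβ, heq⟩

lemma hessS_apply (f : Eu n → ℝ) (x : Eu n) (i j : Fin n) :
    hessS f x i j = fderiv ℝ (fun y => gradient f y i) x (EuclideanSpace.single j 1) :=
  rfl

lemma fderiv_const_mul_eq_smul (f : Eu n → ℝ) (l : ℝ) (x : Eu n) :
    fderiv ℝ (fun y => l * f y) x = l • fderiv ℝ f x :=
  congrFun (fderiv_const_smul_field (f := f) l) x

lemma gradient_const_add_const_mul (f : Eu n → ℝ) (c l : ℝ) (x : Eu n) :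
    gradient (fun y => c + l * f y) x = l • gradient f x := by
  ext i
  simp [gradient_apply, fderiv_const_mul_eq_smul]

lemma hessS_const_add_const_mul (f : Eu n → ℝ) (c l : ℝ) (x : Eu n) :
    hessS (fun y => c + l * f y) x = l • hessS f x := by
  ext i j
  simp [hessS_apply, gradient_const_add_const_mul, fderiv_const_mul_eq_smul]

lemma IsSolOn.const_add_const_mul {θ ε : ℝ} {𝓑 : Eu n → Set (Eu n)} {U : Set (Eu n × ℝ)}
    {w : Eu n → ℝ → ℝ} (h : IsSolOn θ ε 𝓑 U w) (c l : ℝ) :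
    IsSolOn θ ε 𝓑 U (fun x t => c + l * w x t) := by
  have htD (x t) : tD (fun x t => c + l * w x t) x t = l * tD w x t := by simp [tD]
  have hsG (x t) : sG (fun x t => c + l * w x t) x t = l • sG w x t :=
    gradient_const_add_const_mul _ c l x
  have hsH (x t) : sH (fun x t => c + l * w x t) x t = l • sH w x t :=
    hessS_const_add_const_mul _ c l x
  refine ⟨continuousOn_const.add (continuousOn_const.mul h.continuousOn), ?_, ?_,
    fun z hz => ((h.differentiableAt z hz).const_mul l).const_add c,
    fun z hz => contDiffAt_const.add (contDiffAt_const.mul (h.contDiffAt z hz)), fun z hz => ?_⟩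
  · simp only [htD]
    exact continuousOn_const.mul h.continuousOn_tD
  · simp only [hsH]
    exact h.continuousOn_sH.const_smul l
  · obtain ⟨A, β, hA, hβ, heq⟩ := h.equation z hz
    refine ⟨A, β, hA, hβ, ?_⟩
    rw [htD, hsG, hsH, heq, trMul_smul, inner_smul_right]
    ring

lemma gradient_comp_add_smul (f : Eu n → ℝ) (x₀ : Eu n) (l : ℝ) (x : Eu n) :
    gradient (fun y => f (x₀ + l • y)) x = l • gradient f (x₀ + l • x) := by
  have h : fderiv ℝ (fun y => f (x₀ + l • y)) x = l • fderiv ℝ f (x₀ + l • x) := by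
    rw [fderiv_comp_smul (f := fun y => f (x₀ + y)), fderiv_comp_add_left]
  ext i
  simp [gradient_apply, h]

lemma hessS_comp_add_smul (f : Eu n → ℝ) (x₀ : Eu n) (l : ℝ) (x : Eu n) :
    hessS (fun y => f (x₀ + l • y)) x = l ^ 2 • hessS f (x₀ + l • x) := by
  ext i j
  have h : fderiv ℝ (fun y => l * gradient f (x₀ + l • y) i) x
      = l • l • fderiv ℝ (fun y => gradient f y i) (x₀ + l • x) := by
    rw [fderiv_const_mul_eq_smul, fderiv_comp_smul (f := fun y => gradient f (x₀ + y) i),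
      fderiv_comp_add_left (f := fun y => gradient f y i)]
  simp [hessS_apply, gradient_comp_add_smul, h, pow_two, mul_assoc]

lemma IsSolOn.comp_scaling {θ ε : ℝ} {𝓑 : Eu n → Set (Eu n)} {U : Set (Eu n × ℝ)}
    {w : Eu n → ℝ → ℝ} (h : IsSolOn θ ε 𝓑 U w) (x₀ : Eu n) (t₀ k : ℝ) {l : ℝ} (hl : l ≠ 0) :
    IsSolOn θ (k * ε / l ^ 2) (fun x => (fun β => (k / l) • β) '' 𝓑 (x₀ + l • x))
      ((fun z => (x₀ + l • z.1, t₀ + k * z.2)) ⁻¹' U)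
      (fun x t => w (x₀ + l • x) (t₀ + k * t)) := by
  set w' : Eu n → ℝ → ℝ := fun x t => w (x₀ + l • x) (t₀ + k * t)
  have htD (x t) : tD w' x t = k * tD w (x₀ + l • x) (t₀ + k * t) := by
    rw [tD, tD, deriv_comp_mul_left k (fun s => w (x₀ + l • x) (t₀ + s)), deriv_comp_const_add,
      smul_eq_mul]
  have hsG (x t) : sG w' x t = l • sG w (x₀ + l • x) (t₀ + k * t) :=
    gradient_comp_add_smul (fun y => w y (t₀ + k * t)) x₀ l x
  have hsH (x t) : sH w' x t = l ^ 2 • sH w (x₀ + l • x) (t₀ + k * t) :=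
    hessS_comp_add_smul (fun y => w y (t₀ + k * t)) x₀ l x
  have hcont : Continuous (fun z : Eu n × ℝ => (x₀ + l • z.1, t₀ + k * z.2)) := by fun_prop
  have hmaps := mapsTo_preimage (fun z : Eu n × ℝ => (x₀ + l • z.1, t₀ + k * z.2)) U
  refine ⟨h.continuousOn.comp hcont.continuousOn hmaps, ?_, ?_, fun z hz => ?_, fun z hz => ?_,
    fun z hz => ?_⟩
  · simp only [htD]
    exact continuousOn_const.mul (h.continuousOn_tD.comp hcont.continuousOn hmaps)
  · simp only [hsH]
    exact (h.continuousOn_sH.comp hcont.continuousOn hmaps).const_smul (l ^ 2)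
  · exact (h.differentiableAt _ hz).comp z.2 (by fun_prop : DifferentiableAt ℝ (t₀ + k * ·) z.2)
  · exact (h.contDiffAt _ hz).comp z.1 (by fun_prop : ContDiffAt ℝ 2 (x₀ + l • ·) z.1)
  · obtain ⟨A, β, hA, hβ, heq⟩ := h.equation _ hz
    refine ⟨A, (k / l) • β, hA, mem_image_of_mem _ hβ, ?_⟩
    rw [htD, hsG, hsH, heq, trMul_smul, inner_smul_left, inner_smul_right]
    simp only [conj_trivial]
    field_simp

lemma IsSolOn.le_tD_of_isLocalMin {θ ε : ℝ} {𝓑 : Eu n → Set (Eu n)} {U : Set (Eu n × ℝ)}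
    {w : Eu n → ℝ → ℝ} (h : IsSolOn θ ε 𝓑 U w) (hθ : 0 < θ) (hε : 0 ≤ ε) {x y : Eu n} {t : ℝ}
    (hxt : (x, t) ∈ U) {F F₁ : ℝ → ℝ} {f₂ : ℝ}
    (hF : ∀ᶠ s in 𝓝 (‖x - y‖ ^ 2), HasDerivAt F (F₁ s) s)
    (hF₁ : HasDerivAt F₁ f₂ (‖x - y‖ ^ 2))
    (hmin : IsLocalMin (fun z => w z t - F (‖z - y‖ ^ 2)) x) :
    ∃ A β, memS θ A ∧ β ∈ 𝓑 x ∧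
      ε * (2 * F₁ (‖x - y‖ ^ 2) * A.trace + 4 * f₂ * mquad A (x - y))
        + 2 * F₁ (‖x - y‖ ^ 2) * inner ℝ β (x - y) ≤ tD w x t := by
  obtain ⟨A, β, hA, hβ, heq⟩ := h.equation _ hxt
  have hW : ContDiffAt ℝ 2 (fun z => w z t) x := h.contDiffAt _ hxt
  have hgrad : sG w x t = (2 * F₁ (‖x - y‖ ^ 2)) • (x - y) :=
    gradient_eq_of_isLocalMin_sub_radial (hW.differentiableAt two_ne_zero) hF.self_of_nhds hmin
  have htr : 0 ≤ trMul A (sH w x t - radialHess (F₁ (‖x - y‖ ^ 2)) f₂ (x - y)) :=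
    trMul_nonneg (hA.posSemidef hθ) (posSemidef_hessS_sub_radialHess hW hF hF₁ hmin)
  rw [trMul_sub, trMul_radialHess, sub_nonneg] at htr
  refine ⟨A, β, hA, hβ, ?_⟩
  rw [heq, hgrad, inner_smul_right]
  gcongr

/-- Solutions of uniformly parabolic equations with drift bounded by `L` on the closed cylinder
`closedBall c R × [a, b]`. -/
def IsCylSol (θ L : ℝ) (c : Eu n) (R a b : ℝ) (w : Eu n → ℝ → ℝ) : Prop :=
  IsSolOn θ 1 (fun _ => closedBall 0 L) (closedBall c R ×ˢ Icc a b) w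

lemma IsCylSol.mono {θ L L' : ℝ} {c c' : Eu n} {R R' a a' b b' : ℝ} {w : Eu n → ℝ → ℝ}
    (h : IsCylSol θ L c R a b w) (hL : L ≤ L') (hc : dist c' c + R' ≤ R) (ha : a ≤ a')
    (hb : b' ≤ b) : IsCylSol θ L' c' R' a' b' w :=
  IsSolOn.mono h
    (prod_mono (closedBall_subset_closedBall' (by linarith)) (Icc_subset_Icc ha hb))
    fun _ _ => closedBall_subset_closedBall hL

lemma IsCylSol.comp_scaling {θ L : ℝ} {x₀ : Eu n} {R a b t₀ r : ℝ} {w : Eu n → ℝ → ℝ}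
    (hr : 0 < r) (h : IsCylSol θ L x₀ (r * R) (t₀ + r ^ 2 * a) (t₀ + r ^ 2 * b) w) :
    IsCylSol θ (r * L) 0 R a b (fun x t => w (x₀ + r • x) (t₀ + r ^ 2 * t)) := by
  have key := IsSolOn.comp_scaling h x₀ t₀ (r ^ 2) hr.ne'
  rw [mul_one, div_self (by positivity), pow_two, mul_div_assoc, div_self hr.ne', mul_one,
    ← pow_two] at key
  refine key.mono ?_ ?_
  · rintro ⟨x, t⟩ ⟨hx, hat, htb⟩
    refine ⟨?_, ?_, ?_⟩
    · rw [mem_closedBall, dist_zero_right] at hx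
      rw [mem_closedBall, dist_self_add_left, norm_smul, Real.norm_of_nonneg hr.le]
      gcongr
    · dsimp only at hat ⊢
      gcongr
    · dsimp only at htb ⊢
      gcongr
  · rintro - - - ⟨β, hβ, rfl⟩
    rw [mem_closedBall_zero_iff] at hβ ⊢
    rw [norm_smul, Real.norm_of_nonneg hr.le]
    gcongr

/-! ### Positivity at one time from a measure estimate -/

section Contact

open MeasureTheory

variable {θ L : ℝ} {w : Eu n → ℝ → ℝ}

/-- The map sending a point where a paraboloid `c - 2‖· - y‖²` touches `w(·, t)` from below to the
vertex `y` of that paraboloid. -/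
def vertexMap (w : Eu n → ℝ → ℝ) (t : ℝ) (x : Eu n) : Eu n :=
  x + (1 / 4 : ℝ) • sG w x t

/-- The Jacobian matrix of `vertexMap w t` at `x`. -/
def vertexJacobian (w : Eu n → ℝ → ℝ) (t : ℝ) (x : Eu n) : Matrix (Fin n) (Fin n) ℝ :=
  1 + (1 / 4 : ℝ) • sH w x t

/-- The points of the unit ball at which `w(·, t) ≤ 1` and `vertexMap w t` expands volumes by a
factor of at most `D`. -/
def contactSet (w : Eu n → ℝ → ℝ) (t D : ℝ) : Set (Eu n) :=
  {x ∈ closedBall 0 1 | w x t ≤ 1 ∧ |(vertexJacobian w t x).det| ≤ D}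

lemma vertexJacobian_eq (t : ℝ) (x z : Eu n) :
    vertexJacobian w t x = (1 / 4 : ℝ) • (sH w x t - radialHess (-2) 0 z) := by
  rw [vertexJacobian, radialHess, smul_sub, smul_add, smul_smul, smul_smul]
  norm_num [add_comm]

lemma hasFDerivAt_vertexMap {t : ℝ} {x : Eu n} (hw : ContDiffAt ℝ 2 (fun y => w y t) x) :
    HasFDerivAt (vertexMap w t) (matCLM (vertexJacobian w t x)) x := by
  refine ((hasFDerivAt_id x).add
    ((hasFDerivAt_gradient hw).const_smul (1 / 4 : ℝ))).congr_fderiv ?_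
  simp only [vertexJacobian, matCLM, map_add, map_one, map_smul]
  rfl

lemma vertexMap_eq_of_isLocalMin {t : ℝ} {x y : Eu n}
    (hw : DifferentiableAt ℝ (fun y => w y t) x)
    (hmin : IsLocalMin (fun z => w z t + 2 * ‖z - y‖ ^ 2) x) : vertexMap w t x = y := by
  have hgrad : sG w x t = (2 * (-2) : ℝ) • (x - y) :=
    gradient_eq_of_isLocalMin_sub_radial (F := fun s => -2 * s) hw
      (by simpa using (hasDerivAt_id _).const_mul (-2 : ℝ))
      (by simpa only [neg_mul, sub_neg_eq_add] using hmin)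
  rw [vertexMap, hgrad, smul_smul]
  norm_num

lemma posSemidef_vertexJacobian_of_isLocalMin {t : ℝ} {x y : Eu n}
    (hw : ContDiffAt ℝ 2 (fun y => w y t) x)
    (hmin : IsLocalMin (fun z => w z t + 2 * ‖z - y‖ ^ 2) x) :
    (vertexJacobian w t x).PosSemidef := by
  rw [vertexJacobian_eq t x (x - y)]
  refine Matrix.PosSemidef.smul ?_ (by norm_num)
  exact posSemidef_hessS_sub_radialHess (F := fun s => -2 * s) (F₁ := fun _ => -2) hw
    (Eventually.of_forall fun s => by simpa using (hasDerivAt_id s).const_mul (-2 : ℝ))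
    (hasDerivAt_const _ _) (by simpa only [neg_mul, sub_neg_eq_add] using hmin)

lemma le_trMul_of_posSemidef_vertexJacobian {A : Matrix (Fin n) (Fin n) ℝ} {t : ℝ} {x : Eu n}
    (hA : memS θ A) (hJ : (vertexJacobian w t x).PosSemidef) :
    4 * θ * (vertexJacobian w t x).trace - 4 * n / θ ≤ trMul A (sH w x t) := by
  have hellip := hA.mul_trace_le_trMul hJ
  have htr := hA.trace_le
  rw [vertexJacobian_eq t x 0, trMul_smul, trMul_sub, trMul_radialHess,
    ← vertexJacobian_eq] at hellip
  have hdiv : 4 * (n : ℝ) / θ = 4 * (n / θ) := by ring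
  linarith

/-- Bound for the rate at which `w` can decrease at a contact point. -/
def contactRate (n : ℕ) (θ L : ℝ) : ℝ := 4 * n / θ + 5 * L

lemma contactRate_nonneg (n : ℕ) (hθ : 0 < θ) (hL : 0 ≤ L) : 0 ≤ contactRate n θ L := by
  rw [contactRate]; positivity

lemma IsCylSol.trace_vertexJacobian_le (hL : 0 ≤ L) (hs : IsCylSol θ L 0 1 0 1 w)
    {t : ℝ} (ht : t ∈ Icc (0 : ℝ) 1) {x : Eu n} (hx : x ∈ closedBall 0 1)
    (hy : ‖vertexMap w t x‖ ≤ 1 / 4) (hJ : (vertexJacobian w t x).PosSemidef) :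
    4 * θ * (vertexJacobian w t x).trace - contactRate n θ L ≤ tD w x t := by
  obtain ⟨A, β, hA, hβ, heq⟩ := hs.equation (x, t) ⟨hx, ht⟩
  have hgrad : ‖sG w x t‖ ≤ 5 := by
    have hsG : sG w x t = (4 : ℝ) • (vertexMap w t x - x) := by
      rw [vertexMap, add_sub_cancel_left, smul_smul]; norm_num
    have hnorm : ‖x‖ ≤ 1 := by simpa using hx
    have htri := norm_sub_le (vertexMap w t x) x
    rw [hsG, norm_smul, Real.norm_of_nonneg (by norm_num)]
    linarith
  have hdrift : -(L * 5) ≤ inner ℝ β (sG w x t) := by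
    have hβL : ‖β‖ ≤ L := by simpa using hβ
    have hprod : ‖β‖ * ‖sG w x t‖ ≤ L * 5 := by gcongr
    linarith [(abs_le.1 (abs_real_inner_le_norm β (sG w x t))).1]
  have hdiff := le_trMul_of_posSemidef_vertexJacobian hA hJ
  rw [contactRate]
  simp only [one_mul] at heq
  linarith

lemma mem_ball_one_of_sq_lt {x y : Eu n} (hy : ‖y‖ ≤ 1 / 4) (hxy : 2 * ‖x - y‖ ^ 2 < 1) :
    x ∈ ball (0 : Eu n) 1 := by
  rw [mem_ball_zero_iff]
  by_contra! hx
  have h := norm_sub_norm_le x y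
  nlinarith

-- Either `w` increases at rate `R`, or the equation bounds the Hessian from above, so that the
-- vertex map has a controlled Jacobian there.
lemma IsCylSol.le_tD_or_mem_image_contactSet (hθ : 0 < θ) (hL : 0 ≤ L)
    (hs : IsCylSol θ L 0 1 0 1 w)
    (hw : ∀ x ∈ closedBall (0 : Eu n) 1, ∀ t ∈ Icc (0 : ℝ) 1, 0 ≤ w x t)
    {t : ℝ} (ht : t ∈ Icc (0 : ℝ) 1) {x y : Eu n} (hy : ‖y‖ ≤ 1 / 4) (hx : x ∈ closedBall 0 1)
    (hmin : IsMinOn (fun z => w z t + 2 * ‖z - y‖ ^ 2) (closedBall 0 1) x)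
    (hlt : w x t + 2 * ‖x - y‖ ^ 2 < 1) (R : ℝ) :
    R ≤ tD w x t ∨ -contactRate n θ L ≤ tD w x t ∧
      y ∈ vertexMap w t '' contactSet w t (((R + contactRate n θ L) / (4 * θ)) ^ n) := by
  have hsmooth := hs.contDiffAt (x, t) ⟨hx, ht⟩
  have hx_ball : x ∈ ball (0 : Eu n) 1 :=
    mem_ball_one_of_sq_lt hy (by linarith [hw x hx t ht])
  have hloc := hmin.isLocalMin
    (mem_of_superset (isOpen_ball.mem_nhds hx_ball) ball_subset_closedBall)
  have hvertex := vertexMap_eq_of_isLocalMin (hsmooth.differentiableAt (by norm_num)) hloc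
  have hJ := posSemidef_vertexJacobian_of_isLocalMin hsmooth hloc
  have htrace := hs.trace_vertexJacobian_le hL ht hx (hvertex ▸ hy) hJ
  have htrace_nonneg : 0 ≤ 4 * θ * (vertexJacobian w t x).trace :=
    mul_nonneg (by positivity) hJ.trace_nonneg
  refine or_iff_not_imp_left.2 fun hR => ⟨by linarith, x, ⟨hx, ?_, ?_⟩, hvertex⟩
  · nlinarith [sq_nonneg ‖x - y‖]
  · refine (abs_det_le_trace_pow hJ).trans (pow_le_pow_left₀ hJ.trace_nonneg ?_ n)
    rw [le_div_iff₀ (by positivity)]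
    linarith

lemma IsCylSol.isCompact_contactSet (hs : IsCylSol θ L 0 1 0 1 w) {t : ℝ}
    (ht : t ∈ Icc (0 : ℝ) 1) (D : ℝ) : IsCompact (contactSet w t D) := by
  have hslice : ContinuousOn (fun x : Eu n => (x, t)) (closedBall 0 1) := by fun_prop
  have hmaps : MapsTo (fun x : Eu n => (x, t)) (closedBall 0 1) (closedBall 0 1 ×ˢ Icc 0 1) :=
    fun x hx => ⟨hx, ht⟩
  have hw : ContinuousOn (fun x => w x t) (closedBall (0 : Eu n) 1) :=
    hs.continuousOn.comp hslice hmaps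
  have hdet : ContinuousOn (fun x => |(vertexJacobian w t x).det|) (closedBall (0 : Eu n) 1) := by
    have h : Continuous fun M : Matrix (Fin n) (Fin n) ℝ => |(1 + (1 / 4 : ℝ) • M).det| :=
      (Continuous.matrix_det (by fun_prop)).abs
    have hH := hs.continuousOn_sH.comp hslice hmaps
    exact h.comp_continuousOn hH
  refine (isCompact_closedBall (0 : Eu n) 1).of_isClosed_subset ?_ fun x hx => hx.1
  exact (hw.prodMk hdet).preimage_isClosed_of_isClosed isClosed_closedBall
    (isClosed_Iic (a := (1 : ℝ)) |>.prod (isClosed_Iic (a := D)))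

lemma IsCylSol.measurableSet_image_contactSet (hs : IsCylSol θ L 0 1 0 1 w) {t : ℝ}
    (ht : t ∈ Icc (0 : ℝ) 1) (D : ℝ) : MeasurableSet (vertexMap w t '' contactSet w t D) :=
  ((hs.isCompact_contactSet ht D).image_of_continuousOn fun x hx =>
    (hasFDerivAt_vertexMap (hs.contDiffAt (x, t) ⟨hx.1, ht⟩)).continuousAt.continuousWithinAt
    ).measurableSet

lemma IsCylSol.volume_image_contactSet_le (hs : IsCylSol θ L 0 1 0 1 w) {t : ℝ}
    (ht : t ∈ Icc (0 : ℝ) 1) (D : ℝ) :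
    volume (vertexMap w t '' contactSet w t D) ≤
      ENNReal.ofReal D * volume {x ∈ closedBall (0 : Eu n) 1 | w x t ≤ 1} :=
  calc volume (vertexMap w t '' contactSet w t D)
      ≤ ∫⁻ x in contactSet w t D, ENNReal.ofReal |(matCLM (vertexJacobian w t x)).det| :=
        addHaar_image_le_lintegral_abs_det_fderiv volume
          (hs.isCompact_contactSet ht D).measurableSet fun x hx =>
            (hasFDerivAt_vertexMap (hs.contDiffAt (x, t) ⟨hx.1, ht⟩)).hasFDerivWithinAt
    _ ≤ ∫⁻ _ in contactSet w t D, ENNReal.ofReal D :=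
        setLIntegral_mono measurable_const fun x hx => by
          rw [det_matCLM]; exact ENNReal.ofReal_le_ofReal hx.2.2
    _ ≤ ENNReal.ofReal D * volume {x ∈ closedBall (0 : Eu n) 1 | w x t ≤ 1} := by
        rw [setLIntegral_const]
        gcongr
        exact fun x hx => ⟨hx.1, hx.2.1⟩

/-- The amount by which one must lower the paraboloid `1 - 2‖· - y‖²` for it to lie below
`W(·, t)` on the unit ball. -/
def paraboloidDeficit (W : Eu n × ℝ → ℝ) (y : Eu n) (t : ℝ) : ℝ :=
  max 0 (1 - sInf ((fun x => W (x, t) + 2 * ‖x - y‖ ^ 2) '' closedBall (0 : Eu n) 1))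

section Deficit

variable {W : Eu n × ℝ → ℝ}

lemma paraboloidDeficit_nonneg (y : Eu n) (t : ℝ) : 0 ≤ paraboloidDeficit W y t :=
  le_max_left _ _

lemma continuous_paraboloidDeficit (hW : Continuous W) :
    Continuous fun z : ℝ × Eu n => paraboloidDeficit W z.2 z.1 := by
  refine continuous_const.max (continuous_const.sub ?_)
  refine IsCompact.continuous_sInf (f := fun z : ℝ × Eu n => fun x : Eu n =>
    W (x, z.1) + 2 * ‖x - z.2‖ ^ 2) (isCompact_closedBall _ _) ?_
  simp only [Function.HasUncurry.uncurry, id]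
  fun_prop

lemma exists_paraboloidDeficit_eq (hW : Continuous W) (y : Eu n) (t : ℝ) :
    ∃ x ∈ closedBall (0 : Eu n) 1,
      IsMinOn (fun z => W (z, t) + 2 * ‖z - y‖ ^ 2) (closedBall 0 1) x ∧
      paraboloidDeficit W y t = max 0 (1 - (W (x, t) + 2 * ‖x - y‖ ^ 2)) := by
  obtain ⟨x, hx, hinf, hmin⟩ := (isCompact_closedBall (0 : Eu n) 1).exists_sInf_image_eq_and_le
    ⟨0, by simp⟩ (f := fun x => W (x, t) + 2 * ‖x - y‖ ^ 2) (by fun_prop)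
  exact ⟨x, hx, hmin, by rw [paraboloidDeficit, hinf]⟩

lemma le_paraboloidDeficit (hW : Continuous W) (y : Eu n) (t : ℝ) {z : Eu n}
    (hz : z ∈ closedBall 0 1) : 1 - (W (z, t) + 2 * ‖z - y‖ ^ 2) ≤ paraboloidDeficit W y t := by
  obtain ⟨x, -, hmin, heq⟩ := exists_paraboloidDeficit_eq hW y t
  rw [heq]
  exact le_max_of_le_right (sub_le_sub_left (hmin hz) 1)

lemma paraboloidDeficit_le_one (hW : Continuous W) (y : Eu n) {t : ℝ}
    (hpos : ∀ x ∈ closedBall (0 : Eu n) 1, 0 ≤ W (x, t)) : paraboloidDeficit W y t ≤ 1 := by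
  obtain ⟨x, hx, -, heq⟩ := exists_paraboloidDeficit_eq hW y t
  rw [heq]
  exact max_le (by norm_num) (by nlinarith [hpos x hx, sq_nonneg ‖x - y‖])

lemma integrableOn_paraboloidDeficit (hW : Continuous W) (t : ℝ) :
    IntegrableOn (fun y => paraboloidDeficit W y t) (closedBall (0 : Eu n) (1 / 4)) :=
  ContinuousOn.integrableOn_compact (isCompact_closedBall _ _)
    ((continuous_paraboloidDeficit hW).comp
      (by fun_prop : Continuous fun y : Eu n => (t, y))).continuousOn

/-- The total deficit of the paraboloids with vertices in the ball of radius `1 / 4`. -/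
def totalDeficit (W : Eu n × ℝ → ℝ) (t : ℝ) : ℝ :=
  ∫ y in closedBall (0 : Eu n) (1 / 4), paraboloidDeficit W y t

lemma totalDeficit_nonneg (t : ℝ) : 0 ≤ totalDeficit W t :=
  integral_nonneg fun y => paraboloidDeficit_nonneg y t

lemma continuous_totalDeficit (hW : Continuous W) : Continuous (totalDeficit W) :=
  continuous_parametric_integral_of_continuous (f := fun t y => paraboloidDeficit W y t)
    (continuous_paraboloidDeficit hW) (isCompact_closedBall (0 : Eu n) (1 / 4))

lemma totalDeficit_le (hW : Continuous W) {t : ℝ}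
    (hpos : ∀ x ∈ closedBall (0 : Eu n) 1, 0 ≤ W (x, t)) :
    totalDeficit W t ≤ volume.real (closedBall (0 : Eu n) (1 / 4)) := by
  have h := setIntegral_mono (integrableOn_paraboloidDeficit hW t)
    (integrableOn_const (C := (1 : ℝ)) measure_closedBall_lt_top.ne)
    (fun y => paraboloidDeficit_le_one hW y hpos)
  simpa [totalDeficit] using h

-- If `W(x, t) < 1 / 2`, the deficit is at least `1 / 4` for all vertices within `1 / 8` of `x`.
lemma half_le_of_totalDeficit_le (hW : Continuous W) {t : ℝ}
    (hdef : totalDeficit W t ≤ volume.real (closedBall (0 : Eu n) (1 / 8)) / 8) {x : Eu n}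
    (hx : x ∈ closedBall 0 (1 / 8)) : 1 / 2 ≤ W (x, t) := by
  by_contra! hlt
  have hx_norm : ‖x‖ ≤ 1 / 8 := by simpa using hx
  have hsub : closedBall x (1 / 8) ⊆ closedBall (0 : Eu n) (1 / 4) :=
    closedBall_subset_closedBall' (by rw [dist_zero_right]; linarith)
  have hquarter : ∀ y ∈ closedBall x (1 / 8), 1 / 4 ≤ paraboloidDeficit W y t := by
    intro y hy
    refine le_trans ?_ (le_paraboloidDeficit hW y t (z := x)
      (by rw [mem_closedBall_zero_iff]; linarith))
    rw [mem_closedBall', dist_eq_norm] at hy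
    nlinarith [norm_nonneg (x - y)]
  have hvol : volume.real (closedBall x (1 / 8)) =
      volume.real (closedBall (0 : Eu n) (1 / 8)) := by
    rw [measureReal_def, measureReal_def, Measure.addHaar_closedBall_center]
  have hvol_pos : 0 < volume.real (closedBall (0 : Eu n) (1 / 8)) :=
    ENNReal.toReal_pos (measure_closedBall_pos volume _ (by norm_num)).ne'
      measure_closedBall_lt_top.ne
  have hint := setIntegral_mono_on
    (integrableOn_const (C := (1 / 4 : ℝ)) measure_closedBall_lt_top.ne)
    ((integrableOn_paraboloidDeficit hW t).mono_set hsub) measurableSet_closedBall hquarter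
  rw [setIntegral_const, hvol, smul_eq_mul] at hint
  have hmono : ∫ y in closedBall x (1 / 8), paraboloidDeficit W y t ≤ totalDeficit W t :=
    setIntegral_mono_set (integrableOn_paraboloidDeficit hW t)
      (Eventually.of_forall fun y => paraboloidDeficit_nonneg y t) hsub.eventuallyLE
  linarith

lemma totalDeficit_sub_le (hW : Continuous W) {E : Set (Eu n)} (hE : MeasurableSet E)
    {t s h R P : ℝ} (hh : 0 ≤ h) (hP : 0 ≤ P) {V : ℝ≥0∞} (hV : V ≠ ⊤) (hEV : volume E ≤ V)
    (hpt : ∀ y ∈ closedBall (0 : Eu n) (1 / 4), paraboloidDeficit W y t - paraboloidDeficit W y s ≤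
      h * (1 - R * paraboloidDeficit W y t + E.indicator (fun _ => P) y)) :
    totalDeficit W t - totalDeficit W s ≤
      h * (volume.real (closedBall (0 : Eu n) (1 / 4)) - R * totalDeficit W t + V.toReal * P) := by
  have hint := fun t => integrableOn_paraboloidDeficit hW t
  have hone : IntegrableOn (fun _ : Eu n => (1 : ℝ)) (closedBall 0 (1 / 4)) :=
    integrableOn_const measure_closedBall_lt_top.ne
  have hind : IntegrableOn (E.indicator fun _ => P) (closedBall (0 : Eu n) (1 / 4)) :=
    (integrableOn_const measure_closedBall_lt_top.ne).indicator hE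
  have hlin : IntegrableOn (fun y => 1 - R * paraboloidDeficit W y t) (closedBall 0 (1 / 4)) :=
    hone.sub ((hint t).const_mul R)
  have hind_le : ∫ y in closedBall (0 : Eu n) (1 / 4), E.indicator (fun _ => P) y ≤
      V.toReal * P := by
    rw [setIntegral_indicator hE, setIntegral_const, smul_eq_mul]
    gcongr
    exact ENNReal.toReal_mono hV ((measure_mono inter_subset_right).trans hEV)
  calc totalDeficit W t - totalDeficit W s
      = ∫ y in closedBall (0 : Eu n) (1 / 4),
          (paraboloidDeficit W y t - paraboloidDeficit W y s) :=
        (integral_sub (hint t) (hint s)).symm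
    _ ≤ ∫ y in closedBall (0 : Eu n) (1 / 4),
          h * (1 - R * paraboloidDeficit W y t + E.indicator (fun _ => P) y) :=
        setIntegral_mono_on ((hint t).sub (hint s)) ((hlin.add hind).const_mul h)
          measurableSet_closedBall hpt
    _ = h * (volume.real (closedBall (0 : Eu n) (1 / 4)) - R * totalDeficit W t +
          ∫ y in closedBall (0 : Eu n) (1 / 4), E.indicator (fun _ => P) y) := by
        rw [integral_const_mul, integral_add hlin hind,
          integral_sub hone ((hint t).const_mul R), integral_const_mul]
        simp [totalDeficit]
    _ ≤ _ := by gcongr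

end Deficit

lemma IsCylSol.exists_step_mul_tD_le (hs : IsCylSol θ L 0 1 0 1 w) :
    ∃ h ∈ Ioc (0 : ℝ) (1 / 2), ∀ x ∈ closedBall (0 : Eu n) 1, ∀ t ∈ Icc h 1,
      h * (tD w x t - 1) ≤ w x t - w x (t - h) := by
  have hcompact : IsCompact (closedBall (0 : Eu n) 1 ×ˢ Icc (0 : ℝ) 1) :=
    (isCompact_closedBall _ _).prod isCompact_Icc
  obtain ⟨d, hd, huc⟩ := Metric.uniformContinuousOn_iff.1
    (hcompact.uniformContinuousOn_of_continuous hs.continuousOn_tD) 1 one_pos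
  have hpos : 0 < min (1 / 2) (d / 2) := by positivity
  refine ⟨min (1 / 2) (d / 2), ⟨hpos, min_le_left _ _⟩, fun x hx t ht => ?_⟩
  set h := min (1 / 2) (d / 2)
  have hhd : h ≤ d / 2 := min_le_right _ _
  have hcyl : ∀ s ∈ Icc (t - h) t, (x, s) ∈ closedBall (0 : Eu n) 1 ×ˢ Icc (0 : ℝ) 1 :=
    fun s hs => ⟨hx, by linarith [hs.1, ht.1], hs.2.trans ht.2⟩
  have hderiv : ∀ s ∈ Icc (t - h) t, HasDerivAt (w x) (tD w x s) s :=
    fun s hs' => (hs.differentiableAt (x, s) (hcyl s hs')).hasDerivAt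
  obtain ⟨ξ, hξ, hslope⟩ := exists_hasDerivAt_eq_slope (w x) (tD w x) (a := t - h) (b := t)
    (by linarith) (fun s hs' => (hderiv s hs').continuousAt.continuousWithinAt)
    (fun s hs' => hderiv s (Ioo_subset_Icc_self hs'))
  have hclose := huc (x, t) (hcyl t ⟨by linarith, le_rfl⟩) (x, ξ) (hcyl ξ (Ioo_subset_Icc_self hξ))
    (by
      rw [Prod.dist_eq, dist_self, Real.dist_eq, max_eq_right (abs_nonneg _), abs_lt]
      constructor <;> linarith [hξ.1, hξ.2])
  have hrate : tD w x t - 1 ≤ tD w x ξ := by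
    linarith [(abs_lt.1 (Real.dist_eq (tD w x t) _ ▸ hclose)).2]
  calc h * (tD w x t - 1) ≤ h * tD w x ξ := by gcongr
    _ = w x t - w x (t - h) := by rw [hslope, sub_sub_cancel]; field_simp

lemma IsCylSol.paraboloidDeficit_sub_le (hθ : 0 < θ) (hL : 0 ≤ L) (hs : IsCylSol θ L 0 1 0 1 w)
    (hw : ∀ x ∈ closedBall (0 : Eu n) 1, ∀ t ∈ Icc (0 : ℝ) 1, 0 ≤ w x t) {W : Eu n × ℝ → ℝ}
    (hW : Continuous W)
    (hWw : EqOn W (fun z => w z.1 z.2) (closedBall (0 : Eu n) 1 ×ˢ Icc (0 : ℝ) 1))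
    {t h : ℝ} (hh : 0 ≤ h) (ht : t ∈ Icc h 1)
    (hstep : ∀ x ∈ closedBall (0 : Eu n) 1, h * (tD w x t - 1) ≤ w x t - w x (t - h))
    {R : ℝ} (hR : 0 ≤ R) {y : Eu n} (hy : y ∈ closedBall 0 (1 / 4)) :
    paraboloidDeficit W y t - paraboloidDeficit W y (t - h) ≤
      h * (1 - R * paraboloidDeficit W y t +
        (vertexMap w t '' contactSet w t (((R + contactRate n θ L) / (4 * θ)) ^ n)).indicator
          (fun _ => R + contactRate n θ L) y) := by
  set E := vertexMap w t '' contactSet w t (((R + contactRate n θ L) / (4 * θ)) ^ n)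
  have hP := contactRate_nonneg n hθ hL
  have hind : 0 ≤ E.indicator (fun _ => R + contactRate n θ L) y :=
    indicator_nonneg (fun _ _ => by positivity) y
  have ht₁ : t ∈ Icc (0 : ℝ) 1 := ⟨hh.trans ht.1, ht.2⟩
  have hWt : ∀ z ∈ closedBall (0 : Eu n) 1, W (z, t) = w z t := fun z hz => hWw ⟨hz, ht₁⟩
  obtain ⟨x, hx, hmin, heq⟩ := exists_paraboloidDeficit_eq hW y t
  rcases le_or_gt 1 (W (x, t) + 2 * ‖x - y‖ ^ 2) with hge | hlt
  · rw [max_eq_left (by linarith)] at heq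
    rw [heq]
    nlinarith [paraboloidDeficit_nonneg (W := W) y (t - h)]
  have hnonneg := paraboloidDeficit_nonneg (W := W) y t
  have hle_one := paraboloidDeficit_le_one hW y fun z hz => (hw z hz t ht₁).trans_eq (hWt z hz).symm
  have hprev := le_paraboloidDeficit hW y (t - h) hx
  rw [show W (x, t - h) = w x (t - h) from
    hWw ⟨hx, by linarith [ht.1], by linarith [ht.2]⟩] at hprev
  rw [max_eq_right (by linarith), hWt x hx] at heq
  have hrate : R * paraboloidDeficit W y t - E.indicator (fun _ => R + contactRate n θ L) y ≤
      tD w x t := by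
    rcases hs.le_tD_or_mem_image_contactSet hθ hL hw ht₁ (by simpa using hy) hx
      (fun z hz => by simpa only [mem_ofPred_eq, hWt x hx, hWt z hz] using hmin hz)
      (by rwa [← hWt x hx]) R with hfast | ⟨hslow, hyE⟩
    · nlinarith
    · rw [indicator_of_mem hyE]; nlinarith
  nlinarith [hstep x hx, mul_le_mul_of_nonneg_left hrate hh]

lemma half_le_add_of_sub_shift_add_le {f k : ℝ → ℝ} {Y V C a h : ℝ} (hf : Continuous f)
    (hf₀ : ∀ t, 0 ≤ f t) (hfY : ∀ t ∈ Icc (0 : ℝ) 1, f t ≤ Y) (hk : Integrable k)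
    (hk₀ : ∀ t, 0 ≤ k t) (hkV : ∫ t, k t ≤ V) (hC : 0 ≤ C) (hh : h ∈ Ioc (0 : ℝ) (1 / 2))
    (ha : 0 ≤ a) (hstep : ∀ t ∈ Icc h 1, f t - f (t - h) + h * a ≤ h * (C * k t)) :
    a / 2 ≤ Y + C * V := by
  obtain ⟨hpos, hhalf⟩ := hh
  have hfi : ∀ u v, IntervalIntegrable f volume u v := fun u v => hf.intervalIntegrable u v
  have hshift : Continuous fun t => f (t - h) := by fun_prop
  have hmono : ∫ t in h..1, (f t - f (t - h) + h * a) ≤ ∫ t in h..1, h * (C * k t) :=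
    intervalIntegral.integral_mono_on (by linarith)
      (Continuous.intervalIntegrable (by fun_prop) _ _)
      ((hk.intervalIntegrable.const_mul C).const_mul h) hstep
  have htelescope : ∫ t in h..1, (f t - f (t - h) + h * a) =
      (∫ t in (1 - h)..1, f t) - (∫ t in 0..h, f t) + (1 - h) * (h * a) := by
    rw [intervalIntegral.integral_add (Continuous.intervalIntegrable (by fun_prop) _ _) (by simp),
      intervalIntegral.integral_sub (hfi _ _) (hshift.intervalIntegrable _ _),
      intervalIntegral.integral_comp_sub_right (fun t => f t) h, intervalIntegral.integral_const]
    have hsplit₁ := intervalIntegral.integral_add_adjacent_intervals (hfi 0 h) (hfi h 1)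
    have hsplit₂ := intervalIntegral.integral_add_adjacent_intervals (hfi 0 (1 - h)) (hfi (1 - h) 1)
    simp only [sub_self, smul_eq_mul]
    linarith
  have hend : 0 ≤ ∫ t in (1 - h)..1, f t :=
    intervalIntegral.integral_nonneg (by linarith) fun t _ => hf₀ t
  have hstart : ∫ t in 0..h, f t ≤ h * Y := by
    simpa using intervalIntegral.integral_mono_on hpos.le (hfi 0 h)
      (by simp : IntervalIntegrable (fun _ : ℝ => Y) volume 0 h)
      (fun t ht => hfY t ⟨ht.1, by linarith [ht.2]⟩)
  have hsource : ∫ t in h..1, h * (C * k t) ≤ h * (C * V) := by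
    rw [intervalIntegral.integral_const_mul, intervalIntegral.integral_const_mul]
    gcongr
    rw [intervalIntegral.integral_of_le (by linarith)]
    exact (setIntegral_le_integral hk (Eventually.of_forall hk₀)).trans hkV
  have hhalf_mul : (1 / 2) * (h * a) ≤ (1 - h) * (h * a) := by gcongr; linarith
  refine le_of_mul_le_mul_left ?_ hpos
  linarith

lemma exists_continuous_eqOn {X : Type*} [TopologicalSpace X] [NormalSpace X] {s : Set X}
    {f : X → ℝ} (hs : IsClosed s) (hf : ContinuousOn f s) :
    ∃ g : X → ℝ, Continuous g ∧ EqOn g f s := by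
  obtain ⟨g, hg⟩ := ContinuousMap.exists_restrict_eq hs
    ⟨_, continuousOn_iff_continuous_domRestrict.1 hf⟩
  exact ⟨g, g.continuous, fun z hz => DFunLike.congr_fun hg ⟨z, hz⟩⟩

lemma integrable_volume_slice {S : Set (Eu n × ℝ)} (hS : MeasurableSet S) (hfin : volume S ≠ ⊤) :
    Integrable fun t => (volume ((fun x : Eu n => (x, t)) ⁻¹' S)).toReal := by
  refine integrable_toReal_of_lintegral_ne_top (measurable_measure_prodMk_right hS).aemeasurable ?_
  rwa [← Measure.prod_apply_symm hS]

lemma integral_volume_slice {S : Set (Eu n × ℝ)} (hS : MeasurableSet S)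
    (hfin : ∀ t, volume ((fun x : Eu n => (x, t)) ⁻¹' S) ≠ ⊤) :
    ∫ t, (volume ((fun x : Eu n => (x, t)) ⁻¹' S)).toReal = (volume S).toReal := by
  rw [integral_toReal (measurable_measure_prodMk_right hS).aemeasurable
    (Eventually.of_forall fun t => (hfin t).lt_top), ← Measure.prod_apply_symm hS]
  rfl

/-- The part of the unit cylinder on which `w ≤ 1`. -/
def lowSet (w : Eu n → ℝ → ℝ) : Set (Eu n × ℝ) :=
  {z | z ∈ closedBall (0 : Eu n) 1 ×ˢ Icc (0 : ℝ) 1 ∧ w z.1 z.2 ≤ 1}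

lemma volume_lowSet_slice_ne_top (t : ℝ) :
    volume ((fun x : Eu n => (x, t)) ⁻¹' lowSet w) ≠ ⊤ :=
  ne_top_of_le_ne_top (measure_closedBall_lt_top (x := (0 : Eu n)) (r := 1)).ne
    (measure_mono fun _ hx => hx.1.1)

lemma IsCylSol.measurableSet_lowSet (hs : IsCylSol θ L 0 1 0 1 w) : MeasurableSet (lowSet w) :=
  (hs.continuousOn.preimage_isClosed_of_isClosed
    (isClosed_closedBall.prod isClosed_Icc) (isClosed_Iic (a := (1 : ℝ)))).measurableSet

lemma IsCylSol.totalDeficit_sub_le (hθ : 0 < θ) (hL : 0 ≤ L) (hs : IsCylSol θ L 0 1 0 1 w)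
    (hw : ∀ x ∈ closedBall (0 : Eu n) 1, ∀ t ∈ Icc (0 : ℝ) 1, 0 ≤ w x t) {W : Eu n × ℝ → ℝ}
    (hW : Continuous W)
    (hWw : EqOn W (fun z => w z.1 z.2) (closedBall (0 : Eu n) 1 ×ˢ Icc (0 : ℝ) 1))
    {t h : ℝ} (hh : 0 ≤ h) (ht : t ∈ Icc h 1)
    (hstep : ∀ x ∈ closedBall (0 : Eu n) 1, h * (tD w x t - 1) ≤ w x t - w x (t - h))
    {R : ℝ} (hR : 0 ≤ R) :
    totalDeficit W t - totalDeficit W (t - h) ≤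
      h * (volume.real (closedBall (0 : Eu n) (1 / 4)) - R * totalDeficit W t +
        ((R + contactRate n θ L) / (4 * θ)) ^ n * (R + contactRate n θ L) *
          (volume ((fun x : Eu n => (x, t)) ⁻¹' lowSet w)).toReal) := by
  have hP := contactRate_nonneg n hθ hL
  have ht₁ : t ∈ Icc (0 : ℝ) 1 := ⟨hh.trans ht.1, ht.2⟩
  set D := ((R + contactRate n θ L) / (4 * θ)) ^ n
  have hD : 0 ≤ D := by positivity
  have hvol : volume (vertexMap w t '' contactSet w t D) ≤
      ENNReal.ofReal D * volume ((fun x : Eu n => (x, t)) ⁻¹' lowSet w) := by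
    refine (hs.volume_image_contactSet_le ht₁ D).trans ?_
    gcongr
    exact fun x hx => ⟨⟨hx.1, ht₁⟩, hx.2⟩
  have h := _root_.totalDeficit_sub_le hW (hs.measurableSet_image_contactSet ht₁ D) hh
    (add_nonneg hR hP) (ENNReal.mul_ne_top ENNReal.ofReal_ne_top (volume_lowSet_slice_ne_top t))
    hvol fun y hy => hs.paraboloidDeficit_sub_le hθ hL hw hW hWw hh ht hstep hR hy
  rwa [ENNReal.toReal_mul, ENNReal.toReal_ofReal hD, mul_right_comm] at h

-- Where the total deficit exceeds `4 |B_{1/4}| / R`, it decreases at rate `3 |B_{1/4}|` up to the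
-- contribution of `lowSet w`, whereas `0 ≤ totalDeficit ≤ |B_{1/4}|`.
lemma IsCylSol.volume_ball_le_mul_volume_lowSet (hθ : 0 < θ) (hL : 0 ≤ L)
    (hs : IsCylSol θ L 0 1 0 1 w)
    (hw : ∀ x ∈ closedBall (0 : Eu n) 1, ∀ t ∈ Icc (0 : ℝ) 1, 0 ≤ w x t)
    (hfin : volume (lowSet w) ≠ ⊤) {W : Eu n × ℝ → ℝ} (hW : Continuous W)
    (hWw : EqOn W (fun z => w z.1 z.2) (closedBall (0 : Eu n) 1 ×ˢ Icc (0 : ℝ) 1))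
    {R : ℝ} (hR : 0 ≤ R) (hlarge : ∀ t ∈ Icc (0 : ℝ) 1,
      4 * volume.real (closedBall (0 : Eu n) (1 / 4)) ≤ R * totalDeficit W t) :
    volume.real (closedBall (0 : Eu n) (1 / 4)) / 2 ≤
      ((R + contactRate n θ L) / (4 * θ)) ^ n * (R + contactRate n θ L) *
        (volume (lowSet w)).toReal := by
  have hP := contactRate_nonneg n hθ hL
  obtain ⟨h, hh, hstep⟩ := hs.exists_step_mul_tD_le
  have hS := hs.measurableSet_lowSet
  have hpos : ∀ t ∈ Icc (0 : ℝ) 1, ∀ x ∈ closedBall (0 : Eu n) 1, 0 ≤ W (x, t) :=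
    fun t ht x hx => (hw x hx t ht).trans_eq (hWw (mk_mem_prod hx ht)).symm
  have hdecr : ∀ t ∈ Icc h 1, totalDeficit W t - totalDeficit W (t - h) +
      h * (3 * volume.real (closedBall (0 : Eu n) (1 / 4))) ≤
      h * (((R + contactRate n θ L) / (4 * θ)) ^ n * (R + contactRate n θ L) *
        (volume ((fun x : Eu n => (x, t)) ⁻¹' lowSet w)).toReal) := by
    intro t ht
    have hdecr := hs.totalDeficit_sub_le hθ hL hw hW hWw hh.1.le ht
      (fun x hx => hstep x hx t ht) hR
    linarith [mul_le_mul_of_nonneg_left (hlarge t ⟨hh.1.le.trans ht.1, ht.2⟩) hh.1.le]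
  have hbound := half_le_add_of_sub_shift_add_le
    (continuous_totalDeficit hW) totalDeficit_nonneg (fun t ht => totalDeficit_le hW (hpos t ht))
    (integrable_volume_slice hS hfin) (fun _ => ENNReal.toReal_nonneg)
    (integral_volume_slice hS volume_lowSet_slice_ne_top).le (by positivity) hh (by positivity)
    hdecr
  linarith

lemma IsCylSol.exists_totalDeficit_le (n : ℕ) (hθ : 0 < θ) (hL : 0 ≤ L) {σ : ℝ} (hσ : 0 < σ) :
    ∃ μ > 0, ∀ w : Eu n → ℝ → ℝ, IsCylSol θ L 0 1 0 1 w →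
      (∀ x ∈ closedBall (0 : Eu n) 1, ∀ t ∈ Icc (0 : ℝ) 1, 0 ≤ w x t) →
      volume (lowSet w) ≤ ENNReal.ofReal μ → ∀ W : Eu n × ℝ → ℝ, Continuous W →
      EqOn W (fun z => w z.1 z.2) (closedBall (0 : Eu n) 1 ×ˢ Icc (0 : ℝ) 1) →
      ∃ t ∈ Icc (0 : ℝ) 1, totalDeficit W t ≤ σ := by
  have hP := contactRate_nonneg n hθ hL
  have hY : 0 < volume.real (closedBall (0 : Eu n) (1 / 4)) :=
    ENNReal.toReal_pos (measure_closedBall_pos volume _ (by norm_num)).ne'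
      measure_closedBall_lt_top.ne
  obtain ⟨R, hR⟩ : ∃ R, R = 4 * volume.real (closedBall (0 : Eu n) (1 / 4)) / σ := ⟨_, rfl⟩
  have hR₀ : 0 < R := by rw [hR]; positivity
  obtain ⟨C, hC⟩ : ∃ C, C = ((R + contactRate n θ L) / (4 * θ)) ^ n * (R + contactRate n θ L) :=
    ⟨_, rfl⟩
  have hC₀ : 0 ≤ C := by rw [hC]; positivity
  refine ⟨volume.real (closedBall (0 : Eu n) (1 / 4)) / (4 * (C + 1)), by positivity,
    fun w hs hw hvol W hW hWw => ?_⟩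
  by_contra! hlarge
  have hlow := hs.volume_ball_le_mul_volume_lowSet hθ hL hw
    (hvol.trans_lt ENNReal.ofReal_lt_top).ne hW hWw hR₀.le fun t ht => by
      rw [← div_mul_cancel₀ (4 * volume.real _) hσ.ne', ← hR]
      gcongr
      exact (hlarge t ht).le
  rw [← hC] at hlow
  have hsmall := mul_le_mul_of_nonneg_left
    (ENNReal.toReal_le_of_le_ofReal (by positivity) hvol) hC₀
  have hratio : C * (volume.real (closedBall (0 : Eu n) (1 / 4)) / (4 * (C + 1))) ≤
      volume.real (closedBall (0 : Eu n) (1 / 4)) / 4 := by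
    rw [mul_div_assoc', div_le_div_iff₀ (by positivity) (by norm_num)]
    nlinarith
  linarith

lemma IsCylSol.exists_half_le_of_volume_lowSet_le (n : ℕ) (hθ : 0 < θ) (hL : 0 ≤ L) :
    ∃ μ > 0, ∀ w : Eu n → ℝ → ℝ, IsCylSol θ L 0 1 0 1 w →
      (∀ x ∈ closedBall (0 : Eu n) 1, ∀ t ∈ Icc (0 : ℝ) 1, 0 ≤ w x t) →
      volume (lowSet w) ≤ ENNReal.ofReal μ →
      ∃ t ∈ Icc (0 : ℝ) 1, ∀ x ∈ closedBall (0 : Eu n) (1 / 8), 1 / 2 ≤ w x t := by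
  have hσ : 0 < volume.real (closedBall (0 : Eu n) (1 / 8)) / 8 := by
    refine div_pos (ENNReal.toReal_pos (measure_closedBall_pos volume _ (by norm_num)).ne'
      measure_closedBall_lt_top.ne) (by norm_num)
  obtain ⟨μ, hμ, H⟩ := IsCylSol.exists_totalDeficit_le n hθ hL hσ
  refine ⟨μ, hμ, fun w hs hw hvol => ?_⟩
  obtain ⟨W, hW, hWw⟩ :=
    exists_continuous_eqOn (isClosed_closedBall.prod isClosed_Icc) hs.continuousOn
  obtain ⟨t, ht, hdef⟩ := H w hs hw hvol W hW hWw
  exact ⟨t, ht, fun x hx => (half_le_of_totalDeficit_le hW hdef hx).trans_eq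
    (hWw ⟨closedBall_subset_closedBall (by norm_num) hx, ht⟩)⟩

end Contact

/-! ### Comparison with radial barriers and growth of positivity -/

lemma nonpos_of_hasDerivAt_of_eventually_nhdsLT {f : ℝ → ℝ} {d t : ℝ} (h : HasDerivAt f d t)
    (hmin : ∀ᶠ s in 𝓝[<] t, f t ≤ f s) : d ≤ 0 := by
  have hslope := (hasDerivAt_iff_tendsto_slope.1 h).mono_left
    (nhdsWithin_mono t fun s hs => ne_of_lt hs : 𝓝[<] t ≤ 𝓝[≠] t)
  refine le_of_tendsto hslope ?_
  filter_upwards [hmin, self_mem_nhdsWithin] with s hs hst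
  rw [slope_def_field]
  exact div_nonpos_of_nonneg_of_nonpos (sub_nonneg.2 hs) (sub_nonpos.2 (le_of_lt hst))

-- At a negative minimum of `w - Φ` over `D`, the equation for `w` contradicts `hstrict`.
lemma IsSolOn.radial_le {θ ε : ℝ} {𝓑 : Eu n → Set (Eu n)} {U D : Set (Eu n × ℝ)}
    {w : Eu n → ℝ → ℝ} (h : IsSolOn θ ε 𝓑 U w) (hθ : 0 < θ) (hε : 0 ≤ ε) (hD : IsCompact D)
    (hDU : D ⊆ U) {Φ Φ₁ Φ₂ Φₜ : ℝ → ℝ → ℝ}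
    (hΦ : ContinuousOn (fun z : Eu n × ℝ => Φ (‖z.1‖ ^ 2) z.2) D)
    (hΦ₁ : ∀ z ∈ D, ∀ᶠ ζ in 𝓝 (‖z.1‖ ^ 2), HasDerivAt (Φ · z.2) (Φ₁ ζ z.2) ζ)
    (hΦ₂ : ∀ z ∈ D, HasDerivAt (Φ₁ · z.2) (Φ₂ (‖z.1‖ ^ 2) z.2) (‖z.1‖ ^ 2))
    (hΦₜ : ∀ z ∈ D, HasDerivAt (Φ (‖z.1‖ ^ 2)) (Φₜ (‖z.1‖ ^ 2) z.2) z.2)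
    (hint : ∀ x t, (x, t) ∈ D → w x t < Φ (‖x‖ ^ 2) t →
      (∀ᶠ y in 𝓝 x, (y, t) ∈ D) ∧ ∀ᶠ s in 𝓝[<] t, (x, s) ∈ D)
    (hstrict : ∀ x t, (x, t) ∈ D → ∀ A β, memS θ A → β ∈ 𝓑 x → Φₜ (‖x‖ ^ 2) t <
      ε * (2 * Φ₁ (‖x‖ ^ 2) t * A.trace + 4 * Φ₂ (‖x‖ ^ 2) t * mquad A x)
        + 2 * Φ₁ (‖x‖ ^ 2) t * inner ℝ β x)
    {z : Eu n × ℝ} (hz : z ∈ D) : Φ (‖z.1‖ ^ 2) z.2 ≤ w z.1 z.2 := by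
  obtain ⟨⟨x, t⟩, hxt, hmin⟩ :=
    hD.exists_isMinOn ⟨z, hz⟩ ((h.continuousOn.mono hDU).sub hΦ)
  have hmin (y s) (hys : (y, s) ∈ D) :
      w x t - Φ (‖x‖ ^ 2) t ≤ w y s - Φ (‖y‖ ^ 2) s := hmin hys
  by_contra! hlt
  obtain ⟨hspace, htime⟩ := hint x t hxt (by linarith [hmin z.1 z.2 hz])
  have hderiv : HasDerivAt (fun s => w x s - Φ (‖x‖ ^ 2) s) (tD w x t - Φₜ (‖x‖ ^ 2) t) t :=
    (h.differentiableAt (x, t) (hDU hxt)).hasDerivAt.sub (hΦₜ (x, t) hxt)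
  have htD := nonpos_of_hasDerivAt_of_eventually_nhdsLT hderiv (htime.mono fun s => hmin x s)
  obtain ⟨A, β, hA, hβ, hle⟩ := h.le_tD_of_isLocalMin hθ hε (hDU hxt) (y := 0)
    (F := (Φ · t)) (F₁ := (Φ₁ · t)) (f₂ := Φ₂ (‖x‖ ^ 2) t)
    (by rw [sub_zero]; exact hΦ₁ (x, t) hxt) (by rw [sub_zero]; exact hΦ₂ (x, t) hxt)
    (hspace.mono fun y hy => by simpa only [sub_zero] using hmin y t hy)
  rw [sub_zero] at hle
  linarith [hstrict x t hxt A β hA hβ]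

/-- The paraboloid `|x|² ≤ 1/64 + 8 (t - t₁)`, `t₁ ≤ t ≤ s`, over which positivity spreads from
the ball of radius `1/8`. -/
def spreadRegion (t₁ s : ℝ) : Set (Eu n × ℝ) :=
  {z | z.2 ∈ Icc t₁ s ∧ ‖z.1‖ ^ 2 ≤ 1 / 64 + 8 * (z.2 - t₁)}

/-- The barrier supported in `spreadRegion t₁ s`, as a function of `ζ = |x|²` and `t`. The last
term makes it a strict subsolution. -/
def spreadBarrier (K t₁ ζ t : ℝ) : ℝ :=
  Real.exp (-(K * (t - t₁))) * (1 / 64 + 8 * (t - t₁) - ζ) ^ 2 - Real.exp (-(6 * K)) * (t - t₁)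

section Spread

variable {K t₁ s θ L : ℝ}

lemma spreadRegion_subset (hs : s ≤ t₁ + 6) :
    spreadRegion t₁ s ⊆ closedBall (0 : Eu n) 7 ×ˢ Icc t₁ s := by
  rintro ⟨x, t⟩ ⟨ht, hx⟩
  refine ⟨mem_closedBall_zero_iff.2 (abs_le_of_sq_le_sq' ?_ (by norm_num)).2, ht⟩
  dsimp only at ht hx ⊢
  linarith [ht.2]

lemma isCompact_spreadRegion (hs : s ≤ t₁ + 6) : IsCompact (spreadRegion (n := n) t₁ s) := by
  refine ((isCompact_closedBall (0 : Eu n) 7).prod isCompact_Icc).of_isClosed_subset ?_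
    (spreadRegion_subset hs)
  have hclosed : IsClosed {z : Eu n × ℝ | ‖z.1‖ ^ 2 ≤ 1 / 64 + 8 * (z.2 - t₁)} :=
    isClosed_le (by fun_prop) (by fun_prop)
  exact (isClosed_Icc.preimage continuous_snd).inter hclosed

lemma hasDerivAt_spreadBarrier_left (ζ t : ℝ) :
    HasDerivAt (spreadBarrier K t₁ · t)
      (-2 * Real.exp (-(K * (t - t₁))) * (1 / 64 + 8 * (t - t₁) - ζ)) ζ := by
  have h := ((((hasDerivAt_id ζ).const_sub (1 / 64 + 8 * (t - t₁))).pow 2).const_mul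
    (Real.exp (-(K * (t - t₁))))).sub_const (Real.exp (-(6 * K)) * (t - t₁))
  refine h.congr_deriv ?_
  simp only [id]
  ring

lemma hasDerivAt_spreadBarrier (ζ t : ℝ) :
    HasDerivAt (spreadBarrier K t₁ ζ)
      (Real.exp (-(K * (t - t₁))) * (16 * (1 / 64 + 8 * (t - t₁) - ζ)
        - K * (1 / 64 + 8 * (t - t₁) - ζ) ^ 2) - Real.exp (-(6 * K))) t := by
  have hlin : HasDerivAt (fun τ => τ - t₁) 1 t := (hasDerivAt_id t).sub_const t₁
  have h := ((hlin.const_mul K).neg.exp.mul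
    ((((hlin.const_mul 8).const_add (1 / 64)).sub_const ζ).pow 2)).sub
    (hlin.const_mul (Real.exp (-(6 * K))))
  refine h.congr_deriv ?_
  simp only [Pi.neg_apply, Pi.pow_apply]
  ring

/-- The decay rate making `spreadBarrier` a subsolution for all equations with ellipticity `θ` and
drift at most `L`. -/
def spreadRate (n : ℕ) (θ L : ℝ) : ℝ := 2 * (8 * θ + 4 * (n / θ) + 28 * L + 16) ^ 2 / θ

-- The quadratic in `S` has discriminant `c² - K θ / 2 = 0`, with `c` the linear coefficient.
lemma le_spreadRate_mul_sq (hθ : 0 < θ) (S : ℝ) :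
    S * (8 * θ + 4 * (n / θ) + 28 * L + 16) ≤ θ / 8 + spreadRate n θ L * S ^ 2 := by
  obtain ⟨c, hc⟩ : ∃ c, c = 8 * θ + 4 * (n / θ) + 28 * L + 16 := ⟨_, rfl⟩
  rw [spreadRate, ← hc, ← sub_nonneg]
  have hsq : θ / 8 + 2 * c ^ 2 / θ * S ^ 2 - S * c = (θ - 4 * c * S) ^ 2 / (8 * θ) := by
    field_simp
    ring
  rw [hsq]
  positivity

lemma spreadBarrier_strict_subsolution (hθ : 0 < θ) {x β : Eu n} {t : ℝ}
    (hxt : (x, t) ∈ spreadRegion t₁ s) (hx : ‖x‖ ≤ 7) {A : Matrix (Fin n) (Fin n) ℝ}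
    (hA : memS θ A) (hβ : ‖β‖ ≤ L) {E S : ℝ} (hE : 0 < E)
    (hS : S = 1 / 64 + 8 * (t - t₁) - ‖x‖ ^ 2) :
    E * (16 * S - spreadRate n θ L * S ^ 2) ≤
      2 * (-2 * E * S) * A.trace + 4 * (2 * E) * mquad A x + 2 * (-2 * E * S) * inner ℝ β x := by
  have hS₀ : 0 ≤ S := by rw [hS]; linarith [hxt.2]
  have htr := mul_le_mul_of_nonneg_left hA.trace_le hS₀
  have hquad := (hA.2 x).1
  have hinner : inner ℝ β x ≤ L * 7 :=
    (real_inner_le_norm β x).trans (by gcongr; exact (norm_nonneg β).trans hβ)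
  have hdrift := mul_le_mul_of_nonneg_left hinner hS₀
  have hrate := le_spreadRate_mul_sq (n := n) (L := L) hθ S
  have hbottom : θ * (1 / 64) ≤ θ * (S + ‖x‖ ^ 2) := by
    gcongr
    rw [hS]
    linarith [hxt.1.1]
  have key : 16 * S - spreadRate n θ L * S ^ 2 ≤
      -4 * (S * A.trace) + 8 * mquad A x - 4 * (S * inner ℝ β x) := by linarith
  calc _ ≤ E * (-4 * (S * A.trace) + 8 * mquad A x - 4 * (S * inner ℝ β x)) := by gcongr
    _ = _ := by ring

lemma spreadBarrier_le_half {x : Eu n} (hx : (x, t₁) ∈ spreadRegion t₁ s) :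
    ‖x‖ ≤ 1 / 8 ∧ spreadBarrier K t₁ (‖x‖ ^ 2) t₁ ≤ 1 / 2 := by
  have hx2 : ‖x‖ ^ 2 ≤ 1 / 64 := by simpa using hx.2
  refine ⟨(abs_le_of_sq_le_sq' (by linarith) (by norm_num)).2, ?_⟩
  simp only [spreadBarrier, sub_self, mul_zero, neg_zero, Real.exp_zero]
  nlinarith [sq_nonneg ‖x‖]

lemma spreadRegion_interior {x : Eu n} {t : ℝ} (hxt : (x, t) ∈ spreadRegion t₁ s) (ht : t₁ < t)
    (hpos : 0 < spreadBarrier K t₁ (‖x‖ ^ 2) t) :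
    (∀ᶠ y in 𝓝 x, (y, t) ∈ spreadRegion t₁ s) ∧
      ∀ᶠ τ in 𝓝[<] t, (x, τ) ∈ spreadRegion (n := n) t₁ s := by
  have hlt : ‖x‖ ^ 2 < 1 / 64 + 8 * (t - t₁) := by
    refine lt_of_le_of_ne hxt.2 fun heq => ?_
    have : 0 ≤ Real.exp (-(6 * K)) * (t - t₁) := mul_nonneg (Real.exp_pos _).le (by linarith)
    rw [spreadBarrier, heq, sub_self] at hpos
    linarith
  constructor
  · have hcont : Continuous fun y : Eu n => ‖y‖ ^ 2 := by fun_prop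
    filter_upwards [hcont.continuousAt.eventually_lt continuousAt_const hlt] with y hy
    exact ⟨hxt.1, hy.le⟩
  · have hcont : Continuous fun τ => 1 / 64 + 8 * (τ - t₁) := by fun_prop
    filter_upwards [Ioo_mem_nhdsLT ht,
      nhdsWithin_le_nhds (continuousAt_const.eventually_lt hcont.continuousAt hlt)] with τ hτ hy
    exact ⟨⟨hτ.1.le, hτ.2.le.trans hxt.1.2⟩, hy.le⟩

lemma exp_le_spreadBarrier (hK : 0 ≤ K) (hs : s ∈ Icc (t₁ + 1) (t₁ + 6)) {ζ : ℝ} (hζ : ζ ≤ 4) :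
    Real.exp (-(6 * K)) ≤ spreadBarrier K t₁ ζ s := by
  have hexp : Real.exp (-(6 * K)) ≤ Real.exp (-(K * (s - t₁))) := by
    refine Real.exp_le_exp.2 (neg_le_neg ?_)
    nlinarith [hs.2]
  have hsq : 4 ^ 2 ≤ (1 / 64 + 8 * (s - t₁) - ζ) ^ 2 := by
    gcongr
    linarith [hs.1]
  have hmain : Real.exp (-(6 * K)) * 4 ^ 2 ≤
      Real.exp (-(K * (s - t₁))) * (1 / 64 + 8 * (s - t₁) - ζ) ^ 2 := by gcongr
  have htime : Real.exp (-(6 * K)) * (s - t₁) ≤ Real.exp (-(6 * K)) * 6 := by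
    gcongr
    linarith [hs.2]
  rw [spreadBarrier]
  linarith [Real.exp_pos (-(6 * K))]

lemma IsCylSol.spreadBarrier_le (hθ : 0 < θ) {w : Eu n → ℝ → ℝ} (hs : s ≤ t₁ + 6)
    (hsol : IsCylSol θ L 0 8 t₁ s w)
    (hw : ∀ x ∈ closedBall (0 : Eu n) 8, ∀ t ∈ Icc t₁ s, 0 ≤ w x t)
    (hhalf : ∀ x ∈ closedBall (0 : Eu n) (1 / 8), 1 / 2 ≤ w x t₁) {y : Eu n}
    (hys : (y, s) ∈ spreadRegion t₁ s) :
    spreadBarrier (spreadRate n θ L) t₁ (‖y‖ ^ 2) s ≤ w y s := by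
  have hnorm (x : Eu n) (t) (hxt : (x, t) ∈ spreadRegion t₁ s) : ‖x‖ ≤ 7 :=
    mem_closedBall_zero_iff.1 (spreadRegion_subset hs hxt).1
  have hball (x : Eu n) (t) (hxt : (x, t) ∈ spreadRegion t₁ s) : x ∈ closedBall 0 8 :=
    mem_closedBall_zero_iff.2 (by linarith [hnorm x t hxt])
  refine IsSolOn.radial_le (z := (y, s)) hsol hθ zero_le_one (isCompact_spreadRegion hs)
    (fun z hz => mk_mem_prod (hball z.1 z.2 hz) hz.1)
    (Φ₁ := fun ζ t => -2 * Real.exp (-(spreadRate n θ L * (t - t₁))) *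
      (1 / 64 + 8 * (t - t₁) - ζ))
    (Φ₂ := fun _ t => 2 * Real.exp (-(spreadRate n θ L * (t - t₁))))
    (Φₜ := fun ζ t => Real.exp (-(spreadRate n θ L * (t - t₁))) *
      (16 * (1 / 64 + 8 * (t - t₁) - ζ) - spreadRate n θ L * (1 / 64 + 8 * (t - t₁) - ζ) ^ 2)
        - Real.exp (-(6 * spreadRate n θ L))) ?_
    (fun z _ => .of_forall fun ζ => hasDerivAt_spreadBarrier_left ζ z.2) (fun z _ => ?_)
    (fun z _ => hasDerivAt_spreadBarrier _ z.2) (fun x t hxt hlt => ?_)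
    (fun x t hxt A β hA hβ => ?_) hys
  · simp only [spreadBarrier]
    fun_prop
  · have h := ((hasDerivAt_id (‖z.1‖ ^ 2)).const_sub (1 / 64 + 8 * (z.2 - t₁))).const_mul
      (-2 * Real.exp (-(spreadRate n θ L * (z.2 - t₁))))
    exact h.congr_deriv (by ring)
  · have hwxt := hw x (hball x t hxt) t hxt.1
    have ht : t₁ < t := by
      refine lt_of_le_of_ne hxt.1.1 fun heq => ?_
      subst heq
      obtain ⟨hx, hle⟩ := spreadBarrier_le_half (K := spreadRate n θ L) hxt
      linarith [hhalf x (mem_closedBall_zero_iff.2 hx)]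
    exact spreadRegion_interior hxt ht (hwxt.trans_lt hlt)
  · have hsub := spreadBarrier_strict_subsolution hθ hxt (hnorm x t hxt) hA
      (mem_closedBall_zero_iff.1 hβ) (Real.exp_pos (-(spreadRate n θ L * (t - t₁)))) rfl
    linarith [Real.exp_pos (-(6 * spreadRate n θ L))]

lemma IsCylSol.exists_le_of_half_le (n : ℕ) (L : ℝ) (hθ : 0 < θ) :
    ∃ c > 0, ∀ (w : Eu n → ℝ → ℝ) (t₁ s : ℝ), s ∈ Icc (t₁ + 1) (t₁ + 6) →
      IsCylSol θ L 0 8 t₁ s w →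
      (∀ x ∈ closedBall (0 : Eu n) 8, ∀ t ∈ Icc t₁ s, 0 ≤ w x t) →
      (∀ x ∈ closedBall (0 : Eu n) (1 / 8), 1 / 2 ≤ w x t₁) →
      ∀ y ∈ closedBall (0 : Eu n) 2, c ≤ w y s := by
  refine ⟨Real.exp (-(6 * spreadRate n θ L)), Real.exp_pos _,
    fun w t₁ s hs hsol hw hhalf y hy => ?_⟩
  have hy4 : ‖y‖ ^ 2 ≤ 4 := by
    have := pow_le_pow_left₀ (norm_nonneg y) (mem_closedBall_zero_iff.1 hy) 2
    linarith
  have hrate : 0 ≤ spreadRate n θ L := by rw [spreadRate]; positivity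
  exact (exp_le_spreadBarrier hrate hs hy4).trans <| hsol.spreadBarrier_le hθ hs.2 hw hhalf
    ⟨⟨by linarith [hs.1], le_rfl⟩, by dsimp only; linarith [hs.1]⟩

end Spread

section Growth

open MeasureTheory

lemma volume_preimage_parabolic_scaling (x : Eu n) (t : ℝ) {r : ℝ} (hr : 0 < r)
    (S : Set (Eu n × ℝ)) :
    volume ((fun z : Eu n × ℝ => (x + r • z.1, t + r ^ 2 * z.2)) ⁻¹' S) =
      ENNReal.ofReal ((r ^ (n + 2))⁻¹) * volume S := by
  set f : (Eu n × ℝ) →ₗ[ℝ] (Eu n × ℝ) :=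
    LinearMap.prodMap (r • LinearMap.id) ((r ^ 2) • LinearMap.id) with hf
  have hdet : LinearMap.det f = r ^ (n + 2) := by
    rw [hf, LinearMap.det_prodMap, LinearMap.det_smul, LinearMap.det_smul]
    simp [pow_add]
  have hpreimage : (fun z : Eu n × ℝ => (x + r • z.1, t + r ^ 2 * z.2)) ⁻¹' S =
      f ⁻¹' ((fun z => (x, t) + z) ⁻¹' S) := by
    ext z
    simp [hf]
  have hHaar : (volume : Measure (Eu n × ℝ)).IsAddHaarMeasure := by
    rw [Measure.volume_eq_prod]
    infer_instance
  rw [hpreimage, Measure.addHaar_preimage_linearMap _ (by rw [hdet]; positivity), hdet,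
    measure_preimage_add, abs_of_nonneg (by positivity)]

/-- The closed parabolic cylinder of radius `r` with bottom centre `(x, t)`. -/
def forwardCyl (x : Eu n) (t r : ℝ) : Set (Eu n × ℝ) := closedBall x r ×ˢ Icc t (t + r ^ 2)

/-- `w` exceeds `lam` on the cylinder `forwardCyl x t r` up to a set of relative measure of
order `μ`. -/
def MostlyAbove (μ : ℝ) (w : Eu n → ℝ → ℝ) (lam : ℝ) (x : Eu n) (t r : ℝ) : Prop :=
  volume {z | z ∈ forwardCyl x t r ∧ w z.1 z.2 ≤ lam} ≤ ENNReal.ofReal (μ * r ^ (n + 2))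

/-- Nonnegative solutions with drift at most one on the cylinder `closedBall x R × [a, b]`. -/
def IsNonnegSol (θ : ℝ) (x : Eu n) (R a b : ℝ) (w : Eu n → ℝ → ℝ) : Prop :=
  IsCylSol θ 1 x R a b w ∧ ∀ y ∈ closedBall x R, ∀ τ ∈ Icc a b, 0 ≤ w y τ

/-- The growth property: a nonnegative solution mostly above `lam` on a cylinder is above
`c * lam` on twice the ball at comparable later times. -/
def GrowthProperty (n : ℕ) (θ μ c : ℝ) : Prop :=
  ∀ (w : Eu n → ℝ → ℝ) (x : Eu n) (t r s lam : ℝ), 0 < r → r ≤ 4 → 0 < lam →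
    s ∈ Icc (t + 2 * r ^ 2) (t + 6 * r ^ 2) → IsNonnegSol θ x (8 * r) t s w →
    MostlyAbove μ w lam x t r → ∀ y ∈ closedBall x (2 * r), c * lam < w y s

lemma IsNonnegSol.mono {θ : ℝ} {w : Eu n → ℝ → ℝ} {x x' : Eu n} {R R' a a' b b' : ℝ}
    (h : IsNonnegSol θ x R a b w) (hc : dist x' x + R' ≤ R) (ha : a ≤ a') (hb : b' ≤ b) :
    IsNonnegSol θ x' R' a' b' w :=
  ⟨h.1.mono le_rfl hc ha hb, fun y hy τ hτ =>
    h.2 y (closedBall_subset_closedBall' (by linarith) hy) τ ⟨ha.trans hτ.1, hτ.2.trans hb⟩⟩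

section Rescaling

variable {θ r t lam μ : ℝ} {x : Eu n} {w : Eu n → ℝ → ℝ}

lemma add_smul_mem_closedBall (hr : 0 ≤ r) {R : ℝ} {y : Eu n} (hy : y ∈ closedBall 0 R) :
    x + r • y ∈ closedBall x (r * R) := by
  rw [mem_closedBall_zero_iff] at hy
  rw [mem_closedBall, dist_self_add_left, norm_smul, Real.norm_of_nonneg hr]
  gcongr

lemma IsNonnegSol.rescale (hr : 0 < r) (hlam : 0 < lam) {R S : ℝ}
    (h : IsNonnegSol θ x (r * R) t (t + r ^ 2 * S) w) :
    IsCylSol θ r 0 R 0 S (fun y τ => 0 + lam⁻¹ * w (x + r • y) (t + r ^ 2 * τ)) ∧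
      ∀ y ∈ closedBall 0 R, ∀ τ ∈ Icc 0 S,
        0 ≤ 0 + lam⁻¹ * w (x + r • y) (t + r ^ 2 * τ) := by
  constructor
  · have hsol : IsCylSol θ 1 x (r * R) (t + r ^ 2 * 0) (t + r ^ 2 * S) w := by
      rw [mul_zero, add_zero]
      exact h.1
    have hscale := IsSolOn.const_add_const_mul (hsol.comp_scaling hr) 0 lam⁻¹
    rw [mul_one] at hscale
    exact hscale
  · intro y hy τ hτ
    rw [zero_add]
    refine mul_nonneg (by positivity) (h.2 _ (add_smul_mem_closedBall hr.le hy) _ ⟨?_, ?_⟩)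
    · linarith [mul_nonneg (sq_nonneg r) hτ.1]
    · gcongr
      exact hτ.2

lemma MostlyAbove.volume_lowSet_le (h : MostlyAbove μ w lam x t r) (hr : 0 < r) (hlam : 0 < lam) :
    volume (lowSet fun y τ => 0 + lam⁻¹ * w (x + r • y) (t + r ^ 2 * τ)) ≤ ENNReal.ofReal μ := by
  have hsub : lowSet (fun y τ => 0 + lam⁻¹ * w (x + r • y) (t + r ^ 2 * τ)) ⊆
      (fun z : Eu n × ℝ => (x + r • z.1, t + r ^ 2 * z.2)) ⁻¹'
        {z | z ∈ forwardCyl x t r ∧ w z.1 z.2 ≤ lam} := by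
    rintro ⟨y, τ⟩ ⟨⟨hy, hτ⟩, hle⟩
    refine ⟨⟨?_, ?_, ?_⟩, ?_⟩
    · simpa only [mul_one] using add_smul_mem_closedBall (x := x) hr.le hy
    · exact le_add_of_nonneg_right (mul_nonneg (sq_nonneg r) hτ.1)
    · exact add_le_add le_rfl (mul_le_of_le_one_right (sq_nonneg r) hτ.2)
    · dsimp only at hle
      rwa [zero_add, inv_mul_le_iff₀ hlam, mul_one] at hle
  calc _ ≤ ENNReal.ofReal ((r ^ (n + 2))⁻¹) * ENNReal.ofReal (μ * r ^ (n + 2)) := by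
        refine (measure_mono hsub).trans ?_
        rw [volume_preimage_parabolic_scaling x t hr]
        gcongr
        exact h
    _ = ENNReal.ofReal μ := by
        rw [← ENNReal.ofReal_mul (by positivity)]
        congr 1
        field_simp

end Rescaling

lemma exists_growthProperty (n : ℕ) {θ : ℝ} (hθ : 0 < θ) :
    ∃ μ > 0, ∃ c ∈ Ioo (0 : ℝ) 1, GrowthProperty n θ μ c := by
  obtain ⟨μ, hμ, hhalf⟩ := IsCylSol.exists_half_le_of_volume_lowSet_le n hθ (L := 4) (by norm_num)
  obtain ⟨c, hc, hspread⟩ := IsCylSol.exists_le_of_half_le n 4 hθ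
  have hcc : min c 1 / 2 < c := by linarith [min_le_left c 1, lt_min hc one_pos]
  refine ⟨μ, hμ, min c 1 / 2, ⟨by positivity, by linarith [min_le_right c 1]⟩,
    fun w x t r s lam hr hr4 hlam hs hsol hfull y hy => ?_⟩
  have hr2 : 0 < r ^ 2 := by positivity
  obtain ⟨S, rfl⟩ : ∃ S, s = t + r ^ 2 * S := ⟨(s - t) / r ^ 2, by field_simp; ring⟩
  have hS2 : 2 ≤ S := le_of_mul_le_mul_left (by linarith [hs.1]) hr2
  have hS6 : S ≤ 6 := le_of_mul_le_mul_left (by linarith [hs.2]) hr2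
  rw [mul_comm] at hsol
  obtain ⟨hW, hWnonneg⟩ := hsol.rescale hr hlam
  obtain ⟨t₁, ht₁, hhalf⟩ := hhalf _ (hW.mono hr4 (by simp) le_rfl (by linarith))
    (fun y hy τ hτ => hWnonneg y (closedBall_subset_closedBall (by norm_num) hy) τ
      ⟨hτ.1, by linarith [hτ.2]⟩) (hfull.volume_lowSet_le hr hlam)
  have hlow := hspread _ t₁ S ⟨by linarith [ht₁.2], by linarith [ht₁.1]⟩
    (hW.mono hr4 (by simp) ht₁.1 le_rfl)
    (fun y hy τ hτ => hWnonneg y hy τ ⟨ht₁.1.trans hτ.1, hτ.2⟩) hhalf (r⁻¹ • (y - x)) (by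
      rw [mem_closedBall_zero_iff, norm_smul, norm_inv, Real.norm_of_nonneg hr.le,
        inv_mul_le_iff₀ hr, ← dist_eq_norm, mul_comm]
      exact hy)
  rw [zero_add, smul_smul, mul_inv_cancel₀ hr.ne', one_smul, add_sub_cancel, inv_mul_eq_div,
    le_div_iff₀ hlam] at hlow
  exact (mul_lt_mul_of_pos_right hcc hlam).trans_le hlow

end Growth

/-! ### Propagation of positivity in measure -/

section Propagation

open MeasureTheory

variable {θ μ c r t lam : ℝ} {x : Eu n} {w : Eu n → ℝ → ℝ}

lemma mostlyAbove_of_forall_lt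
    (h : ∀ y ∈ closedBall x r, ∀ s ∈ Icc t (t + r ^ 2), lam < w y s) :
    MostlyAbove μ w lam x t r := by
  have hempty : {z : Eu n × ℝ | z ∈ forwardCyl x t r ∧ w z.1 z.2 ≤ lam} = ∅ :=
    eq_empty_of_forall_notMem fun z hz => (h z.1 hz.1.1 z.2 hz.1.2).not_ge hz.2
  rw [MostlyAbove, hempty, measure_empty]
  exact zero_le

namespace GrowthProperty

lemma lt_of_mostlyAbove (hG : GrowthProperty n θ μ c) {T : ℝ} (hr : 0 < r) (hr4 : r ≤ 4)
    (hlam : 0 < lam) (hsol : IsNonnegSol θ x (8 * r) t T w) (hT : t + 6 * r ^ 2 ≤ T)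
    (h : MostlyAbove μ w lam x t r) : ∀ y ∈ closedBall x (2 * r),
      ∀ s ∈ Icc (t + 2 * r ^ 2) (t + 2 * r ^ 2 + (2 * r) ^ 2), c * lam < w y s := by
  intro y hy s hs
  have hs6 : s ≤ t + 6 * r ^ 2 := by linarith [hs.2]
  exact hG w x t r s lam hr hr4 hlam ⟨hs.1, hs6⟩ (hsol.mono (by simp) le_rfl (hs6.trans hT)) h y hy

-- The radius doubles at every step, so the elapsed time is a geometric sum.
lemma pow_mul_lt (hG : GrowthProperty n θ μ c) (hc : 0 < c) (w : Eu n → ℝ → ℝ) (x : Eu n)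
    (s : ℝ) (j : ℕ) : ∀ t r lam : ℝ, 0 < r → 2 ^ j * r ≤ 4 → 0 < lam →
      s ∈ Icc (t + (2 / 3) * (4 ^ (j + 1) - 1) * r ^ 2)
        (t + (2 / 3) * (4 ^ (j + 1) - 1) * r ^ 2 + 4 ^ (j + 1) * r ^ 2) →
      IsNonnegSol θ x (8 * (2 ^ j * r)) t s w → MostlyAbove μ w lam x t r →
      ∀ y ∈ closedBall x (2 ^ (j + 1) * r), c ^ (j + 1) * lam < w y s := by
  induction j with
  | zero =>
    intro t r lam hr hr4 hlam hs hsol h y hy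
    simp only [zero_add, pow_one, pow_zero, one_mul] at *
    exact hG w x t r s lam hr hr4 hlam ⟨by linarith [hs.1], by linarith [hs.2]⟩ hsol h y hy
  | succ j ih =>
    intro t r lam hr hr4 hlam hs hsol h y hy
    have h2r : r ≤ 2 ^ j * r := le_mul_of_one_le_left hr.le (one_le_pow₀ (by norm_num))
    have h4r : r ^ 2 ≤ 4 ^ j * r ^ 2 :=
      le_mul_of_one_le_left (sq_nonneg r) (one_le_pow₀ (by norm_num))
    have e2 : (2 : ℝ) ^ (j + 1) * r = 2 * (2 ^ j * r) := by ring
    have e4 : (4 : ℝ) ^ (j + 1 + 1) = 16 * 4 ^ j := by ring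
    have e4' : (4 : ℝ) ^ (j + 1) = 4 * 4 ^ j := by ring
    have hs₁ := hs.1
    have hs₂ := hs.2
    rw [e4] at hs₁ hs₂
    rw [e2] at hr4 hsol
    have hstep := hG.lt_of_mostlyAbove hr (by linarith) hlam
      (hsol.mono (x' := x) (by rw [dist_self]; linarith) le_rfl le_rfl) (by linarith) h
    have hrest := ih (t + 2 * r ^ 2) (2 * r) (c * lam) (by positivity) (by linarith)
      (mul_pos hc hlam) (by rw [e4']; constructor <;> linarith)
      (hsol.mono (by rw [dist_self]; linarith) (by linarith [sq_nonneg r]) le_rfl)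
      (mostlyAbove_of_forall_lt hstep) y
      (by rw [show (2 : ℝ) ^ (j + 1) * (2 * r) = 2 ^ (j + 1 + 1) * r by ring]; exact hy)
    rwa [pow_succ c (j + 1), mul_assoc]

lemma pow_mul_lt_of_dyadic (hG : GrowthProperty n θ μ c) (hc : 0 < c) {s : ℝ} {i : ℕ}
    (hr : r = 2⁻¹ ^ i) (hlam : 0 < lam) (hs : s ∈ Icc (t + 32 / 3) (t + 26))
    (hsol : IsNonnegSol θ x 16 t s w) (h : MostlyAbove μ w lam x t r) :
    ∀ y ∈ closedBall x 4, c ^ (i + 2) * lam < w y s := by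
  have hr₀ : 0 < r := by rw [hr]; positivity
  have h2r : (2 : ℝ) ^ i * r = 1 := by rw [hr, ← mul_pow]; norm_num
  have h4r : (4 : ℝ) ^ i * r ^ 2 = 1 := by
    rw [hr, ← pow_mul, mul_comm i, pow_mul, ← mul_pow]
    norm_num
  have hr2 : r ^ 2 ≤ 1 := by
    rw [← h4r]
    exact le_mul_of_one_le_left (sq_nonneg r) (one_le_pow₀ (by norm_num))
  have e2 : (2 : ℝ) ^ (i + 1) * r = 2 := by rw [pow_succ]; linarith
  have e3 : (2 : ℝ) ^ (i + 1 + 1) * r = 4 := by rw [pow_succ, pow_succ]; linarith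
  have e4 : (4 : ℝ) ^ (i + 1 + 1) * r ^ 2 = 16 := by rw [pow_succ, pow_succ]; linarith
  have hpow := hG.pow_mul_lt hc w x s (i + 1) t r lam hr₀ (by rw [e2]; norm_num) hlam
    (by rw [mul_assoc, sub_mul, e4]; constructor <;> linarith [hs.1, hs.2, sq_nonneg r])
    (by rw [e2]; norm_num; exact hsol) h
  rwa [e3] at hpow

-- Keep doubling the radius until the cylinder stops being mostly above `lam`.
lemma exists_not_mostlyAbove (hG : GrowthProperty n θ μ c) {R T : ℝ} (hlam : 0 < lam)
    (hR : R ≤ 1) (hT : t + 7 ≤ T) (hsol : IsNonnegSol θ x 8 t T w)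
    (hR' : ∀ s ∈ Icc t (t + (2 / 3) * R ^ 2), ¬ MostlyAbove μ w lam x s R) (j : ℕ) :
    ∀ s ϱ : ℝ, 0 < ϱ → 2 ^ j * ϱ = R → s ∈ Icc t (t + (2 / 3) * ϱ ^ 2) →
      MostlyAbove μ w lam x s ϱ →
      ∃ s' ϱ' : ℝ, 0 < ϱ' ∧ ϱ' ≤ R ∧ s' ∈ Icc t (t + (2 / 3) * ϱ' ^ 2) ∧
        ¬ MostlyAbove μ w lam x s' ϱ' ∧ ∀ z ∈ forwardCyl x s' ϱ', c * lam < w z.1 z.2 := by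
  induction j with
  | zero =>
    intro s ϱ _ he hs h
    rw [pow_zero, one_mul] at he
    subst he
    exact absurd h (hR' s hs)
  | succ j ih =>
    intro s ϱ hϱ he hs h
    have h2j : ϱ ≤ 2 ^ j * ϱ := le_mul_of_one_le_left hϱ.le (one_le_pow₀ (by norm_num))
    have e2 : 2 ^ j * (2 * ϱ) = R := by rw [← he]; ring
    have hϱ2 : ϱ ^ 2 ≤ 1 / 4 := by nlinarith
    have hstep := hG.lt_of_mostlyAbove hϱ (by linarith) hlam
      (hsol.mono (x' := x) (R' := 8 * ϱ) (by rw [dist_self]; linarith) hs.1 le_rfl)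
      (by linarith [hs.2]) h
    have hs' : s + 2 * ϱ ^ 2 ∈ Icc t (t + (2 / 3) * (2 * ϱ) ^ 2) :=
      ⟨by linarith [hs.1, sq_nonneg ϱ], by linarith [hs.2]⟩
    by_cases hnext : MostlyAbove μ w lam x (s + 2 * ϱ ^ 2) (2 * ϱ)
    · exact ih _ _ (by positivity) e2 hs' hnext
    · exact ⟨_, _, by positivity, by linarith, hs', hnext, fun z hz => hstep z.1 hz.1 z.2 hz.2⟩

end GrowthProperty

lemma interior_forwardCyl_nonempty (x : Eu n) (t : ℝ) (hr : 0 < r) :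
    (interior (forwardCyl x t r)).Nonempty := by
  refine ⟨(x, t + r ^ 2 / 2), ?_⟩
  have hr2 : 0 < r ^ 2 := by positivity
  rw [forwardCyl, interior_prod_eq, interior_Icc]
  exact ⟨ball_subset_interior_closedBall (mem_ball_self hr), by dsimp only; linarith,
    by dsimp only; linarith⟩

/-- The volume of the enlargement, in Vitali's covering lemma, of a forward cylinder of radius
one. -/
def vitaliConst (n : ℕ) : ℝ := volume.real (closedBall (0 : Eu n) 3 ×ˢ Icc (-7 : ℝ) 1)

lemma volume_box_ne_top (x : Eu n) (R a b : ℝ) : volume (closedBall x R ×ˢ Icc a b) ≠ ⊤ :=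
  ((isCompact_closedBall _ _).prod isCompact_Icc).measure_ne_top

lemma vitaliConst_pos (n : ℕ) : 0 < vitaliConst n := by
  refine ENNReal.toReal_pos (ne_of_gt ?_) (volume_box_ne_top _ _ _ _)
  have hsub : forwardCyl (0 : Eu n) 0 1 ⊆ closedBall 0 3 ×ˢ Icc (-7) 1 :=
    prod_mono (closedBall_subset_closedBall (by norm_num))
      (Icc_subset_Icc (by norm_num) (by norm_num))
  exact (Measure.measure_pos_of_nonempty_interior _
    (interior_forwardCyl_nonempty 0 0 one_pos)).trans_le (measure_mono hsub)

lemma volume_enlargement_le (x : Eu n) (t : ℝ) (hr : 0 < r) :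
    volume (closedBall x (3 * r) ×ˢ Icc (t - 7 * r ^ 2) (t + r ^ 2)) ≤
      ENNReal.ofReal (r ^ (n + 2)) * ENNReal.ofReal (vitaliConst n) := by
  have hr2 : 0 < r ^ 2 := by positivity
  have hsub : (fun z : Eu n × ℝ => (x + r • z.1, t + r ^ 2 * z.2)) ⁻¹'
      (closedBall x (3 * r) ×ˢ Icc (t - 7 * r ^ 2) (t + r ^ 2)) ⊆
      closedBall (0 : Eu n) 3 ×ˢ Icc (-7 : ℝ) 1 := by
    rintro z ⟨hz, hz₁, hz₂⟩
    rw [mem_closedBall, dist_self_add_left, norm_smul, Real.norm_of_nonneg hr.le] at hz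
    dsimp only at hz₁ hz₂
    refine ⟨mem_closedBall_zero_iff.2 ?_, ?_, ?_⟩ <;> nlinarith
  have hmono := measure_mono (μ := volume) hsub
  rw [volume_preimage_parabolic_scaling x t hr] at hmono
  rw [vitaliConst, Measure.real, ENNReal.ofReal_toReal (volume_box_ne_top _ _ _ _)]
  calc _ = ENNReal.ofReal (r ^ (n + 2)) * (ENNReal.ofReal ((r ^ (n + 2))⁻¹) *
      volume (closedBall x (3 * r) ×ˢ Icc (t - 7 * r ^ 2) (t + r ^ 2))) := by
        rw [← mul_assoc, ← ENNReal.ofReal_mul (by positivity), mul_inv_cancel₀ (by positivity),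
          ENNReal.ofReal_one, one_mul]
    _ ≤ _ := by gcongr

lemma mem_enlargement {a b : Eu n × ℝ} {sa sb ra rb : ℝ} (hra : 0 < ra) (hrb : ra ≤ 2 * rb)
    (hsa : sa ∈ Icc a.2 (a.2 + (2 / 3) * ra ^ 2))
    (hab : (forwardCyl a.1 sa ra ∩ forwardCyl b.1 sb rb).Nonempty) :
    a ∈ closedBall b.1 (3 * rb) ×ˢ Icc (sb - 7 * rb ^ 2) (sb + rb ^ 2) := by
  obtain ⟨y, ⟨hya, hya'⟩, hyb, hyb'⟩ := hab
  refine ⟨?_, ?_, ?_⟩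
  · rw [mem_closedBall] at *
    linarith [dist_triangle_left a.1 b.1 y.1]
  · have hsq : ra ^ 2 ≤ (2 * rb) ^ 2 := by gcongr
    linarith [hsa.2, hya'.2, hyb'.1, sq_nonneg rb]
  · linarith [hsa.1, hya'.1, hyb'.2]

lemma exists_vitali_subfamily {E : Set (Eu n × ℝ)} {s ϱ : Eu n × ℝ → ℝ} (hϱ : ∀ z ∈ E, 0 < ϱ z)
    (hϱ₁ : ∀ z ∈ E, ϱ z ≤ 1) (hs : ∀ z ∈ E, s z ∈ Icc z.2 (z.2 + (2 / 3) * ϱ z ^ 2)) :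
    ∃ u ⊆ E, u.Countable ∧ u.PairwiseDisjoint (fun z => forwardCyl z.1 (s z) (ϱ z)) ∧
      E ⊆ ⋃ z ∈ u, closedBall z.1 (3 * ϱ z) ×ˢ Icc (s z - 7 * ϱ z ^ 2) (s z + ϱ z ^ 2) := by
  obtain ⟨u, huE, hdisj, hcov⟩ := Vitali.exists_disjoint_subfamily_covering_enlargement
    (fun z : Eu n × ℝ => forwardCyl z.1 (s z) (ϱ z)) E ϱ 2 (by norm_num) (fun z hz => (hϱ z hz).le)
    1 hϱ₁ (fun z hz => (interior_forwardCyl_nonempty z.1 (s z) (hϱ z hz)).mono interior_subset)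
  refine ⟨u, huE, hdisj.countable_of_nonempty_interior fun z hz =>
    interior_forwardCyl_nonempty z.1 (s z) (hϱ z (huE hz)), hdisj, fun a ha => ?_⟩
  obtain ⟨b, hb, hmeet, hab⟩ := hcov a ha
  exact mem_biUnion hb (mem_enlargement (hϱ a ha) hab (hs a ha) hmeet)

lemma volume_le_of_vitali (hμ : 0 < μ) {E F : Set (Eu n × ℝ)} (hF : MeasurableSet F)
    (h : ∀ z ∈ E, ∃ s ϱ : ℝ, 0 < ϱ ∧ ϱ ≤ 1 ∧ s ∈ Icc z.2 (z.2 + (2 / 3) * ϱ ^ 2) ∧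
      ENNReal.ofReal (μ * ϱ ^ (n + 2)) ≤ volume (forwardCyl z.1 s ϱ ∩ F)) :
    ENNReal.ofReal μ * volume E ≤ ENNReal.ofReal (vitaliConst n) * volume F := by
  choose! s ϱ hϱ hϱ₁ hs hvol using h
  obtain ⟨u, huE, hcount, hdisj, hcov⟩ := exists_vitali_subfamily hϱ hϱ₁ hs
  have hcyl (z : u) : ENNReal.ofReal μ * volume (closedBall z.1.1 (3 * ϱ z) ×ˢ
      Icc (s z - 7 * ϱ z ^ 2) (s z + ϱ z ^ 2)) ≤
      ENNReal.ofReal (vitaliConst n) * volume (forwardCyl z.1.1 (s z) (ϱ z) ∩ F) := by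
    calc _ ≤ ENNReal.ofReal μ * (ENNReal.ofReal (ϱ z ^ (n + 2)) * ENNReal.ofReal (vitaliConst n)) :=
          by gcongr; exact volume_enlargement_le z.1.1 (s z) (hϱ z (huE z.2))
      _ = ENNReal.ofReal (vitaliConst n) * ENNReal.ofReal (μ * ϱ z ^ (n + 2)) := by
          rw [ENNReal.ofReal_mul hμ.le]; ring
      _ ≤ _ := by gcongr; exact hvol z (huE z.2)
  calc ENNReal.ofReal μ * volume E
      ≤ ENNReal.ofReal μ * ∑' z : u, volume (closedBall z.1.1 (3 * ϱ z) ×ˢ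
          Icc (s z - 7 * ϱ z ^ 2) (s z + ϱ z ^ 2)) := by
        gcongr
        exact (measure_mono hcov).trans (measure_biUnion_le _ hcount _)
    _ ≤ ∑' z : u, ENNReal.ofReal (vitaliConst n) *
          volume (forwardCyl z.1.1 (s z) (ϱ z) ∩ F) := by
        rw [← ENNReal.tsum_mul_left]
        exact ENNReal.tsum_le_tsum hcyl
    _ = ENNReal.ofReal (vitaliConst n) *
          volume (⋃ z ∈ u, forwardCyl z.1 (s z) (ϱ z) ∩ F) := by
        rw [ENNReal.tsum_mul_left, measure_biUnion hcount]
        · exact fun a ha b hb hab => (hdisj ha hb hab).mono inter_subset_left inter_subset_left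
        · exact fun z _ => (isClosed_closedBall.prod isClosed_Icc).measurableSet.inter hF
    _ ≤ _ := by
        gcongr
        exact iUnion₂_subset fun z _ => inter_subset_right

/-- The part of the cylinder `closedBall 0 R × [0, R]` where `w` exceeds `lam`. -/
def superlevel (w : Eu n → ℝ → ℝ) (lam R : ℝ) : Set (Eu n × ℝ) :=
  {z | z ∈ closedBall (0 : Eu n) R ×ˢ Icc 0 R ∧ lam < w z.1 z.2}

lemma measurableSet_superlevel {R : ℝ}
    (h : ContinuousOn (fun z : Eu n × ℝ => w z.1 z.2) (closedBall (0 : Eu n) R ×ˢ Icc 0 R)) :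
    MeasurableSet (superlevel w lam R) := by
  obtain ⟨U, hU, he⟩ := (_root_.continuousOn_iff'.1 h) (Ioi lam) isOpen_Ioi
  have heq : superlevel w lam R = U ∩ (closedBall (0 : Eu n) R ×ˢ Icc 0 R) := by
    rw [← he, inter_comm]
    rfl
  rw [heq]
  exact hU.measurableSet.inter (isClosed_closedBall.prod isClosed_Icc).measurableSet

lemma superlevel_subset_box (w : Eu n → ℝ → ℝ) (lam R : ℝ) :
    superlevel w lam R ⊆ closedBall 0 R ×ˢ Icc 0 R := fun _ hz => hz.1

lemma superlevel_mono {lam' R R' : ℝ} (hlam : lam' ≤ lam) (hR : R ≤ R') :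
    superlevel w lam R ⊆ superlevel w lam' R' := fun _ hz =>
  ⟨prod_mono (closedBall_subset_closedBall hR) (Icc_subset_Icc le_rfl hR) hz.1,
    hlam.trans_lt hz.2⟩

lemma volume_superlevel_ne_top (w : Eu n → ℝ → ℝ) (lam R : ℝ) :
    volume (superlevel w lam R) ≠ ⊤ :=
  measure_ne_top_of_subset (superlevel_subset_box w lam R) (volume_box_ne_top _ _ _ _)

lemma eventually_forall_mem_forwardCyl {P : Eu n × ℝ → Prop}
    (h : ∀ᶠ z in 𝓝[univ ×ˢ Ici t] (x, t), P z) :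
    ∀ᶠ ϱ in 𝓝[>] (0 : ℝ), ∀ z ∈ forwardCyl x t ϱ, P z := by
  rw [eventually_nhdsWithin_iff, Metric.eventually_nhds_iff] at h
  obtain ⟨e, he, h⟩ := h
  filter_upwards [Ioo_mem_nhdsGT (lt_min he one_pos)] with ϱ hϱ z hz
  have hϱe : ϱ < e := hϱ.2.trans_le (min_le_left _ _)
  have hϱ2 : ϱ ^ 2 ≤ ϱ := pow_le_of_le_one hϱ.1.le (hϱ.2.le.trans (min_le_right _ _)) two_ne_zero
  refine h ?_ ⟨mem_univ _, hz.2.1⟩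
  rw [Prod.dist_eq, max_lt_iff, Real.dist_eq, abs_lt]
  exact ⟨(mem_closedBall.1 hz.1).trans_lt hϱe, by linarith [hz.2.1], by linarith [hz.2.2]⟩

lemma IsNonnegSol.exists_mostlyAbove_dyadic {T : ℝ} (hsol : IsNonnegSol θ (0 : Eu n) 18 0 T w)
    (hx : ‖x‖ < 18) (ht : t ∈ Ico 0 T) (hlt : lam < w x t) (hr : 0 < r) (μ : ℝ) :
    ∃ j : ℕ, MostlyAbove μ w lam x t (2⁻¹ ^ j * r) := by
  have hnhds : closedBall (0 : Eu n) 18 ×ˢ Icc 0 T ∈ 𝓝[univ ×ˢ Ici t] (x, t) := by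
    rw [nhdsWithin_prod_eq, nhdsWithin_univ]
    exact prod_mem_prod (closedBall_mem_nhds_of_mem (by simpa using hx)) (Icc_mem_nhdsGE_of_mem ht)
  have hcont : ContinuousWithinAt (fun z : Eu n × ℝ => w z.1 z.2) (univ ×ˢ Ici t) (x, t) :=
    (hsol.1.continuousOn (x, t)
      (mk_mem_prod (mem_closedBall_zero_iff.2 hx.le) ⟨ht.1, ht.2.le⟩)).mono_of_mem_nhdsWithin hnhds
  have hj : Tendsto (fun j : ℕ => (2 : ℝ)⁻¹ ^ j * r) atTop (𝓝[>] 0) := by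
    refine tendsto_nhdsWithin_iff.2 ⟨?_, .of_forall fun j => mem_Ioi.2 (by positivity)⟩
    simpa using (tendsto_pow_atTop_nhds_zero_of_lt_one (r := (2 : ℝ)⁻¹) (by norm_num)
      (by norm_num)).mul_const r
  obtain ⟨j, hj⟩ := (hj.eventually
    (eventually_forall_mem_forwardCyl (hcont.eventually (lt_mem_nhds hlt)))).exists
  exact ⟨j, mostlyAbove_of_forall_lt fun y hy s hs => hj (y, s) ⟨hy, hs⟩⟩

lemma GrowthProperty.volume_superlevel_le (hG : GrowthProperty n θ μ c) (hμ : 0 < μ)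
    {R R' T : ℝ} (hlam : 0 < lam) (hr : 0 < r) (hr₁ : r ≤ 1) (hRR' : R + 2 * r ≤ R') (hR' : R' ≤ 2)
    (hT : 13 ≤ T) (hsol : IsNonnegSol θ (0 : Eu n) 18 0 T w)
    (hno : ∀ x ∈ closedBall (0 : Eu n) 2, ∀ s ∈ Icc (0 : ℝ) 2, ¬ MostlyAbove μ w lam x s r) :
    ENNReal.ofReal μ * volume (superlevel w lam R) ≤ ENNReal.ofReal (vitaliConst n) *
      volume (superlevel w (c * lam) R' \ superlevel w lam R') := by
  have hcont : ContinuousOn (fun z : Eu n × ℝ => w z.1 z.2) (closedBall 0 R' ×ˢ Icc 0 R') :=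
    hsol.1.continuousOn.mono (prod_mono (closedBall_subset_closedBall (by linarith))
      (Icc_subset_Icc le_rfl (by linarith)))
  refine volume_le_of_vitali hμ
    ((measurableSet_superlevel hcont).diff (measurableSet_superlevel hcont)) ?_
  rintro ⟨x, t⟩ ⟨⟨hx, ht⟩, hw⟩
  dsimp only at hx ht hw ⊢
  have hr2 : r ^ 2 ≤ r := pow_le_of_le_one hr.le hr₁ two_ne_zero
  have hx2 : ‖x‖ ≤ 2 := by linarith [mem_closedBall_zero_iff.1 hx]
  obtain ⟨j, hj⟩ := hsol.exists_mostlyAbove_dyadic (by linarith) ⟨ht.1, by linarith [ht.2]⟩ hw hr μ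
  obtain ⟨s, ϱ, hϱ, hϱr, hs, hnot, hgt⟩ := hG.exists_not_mostlyAbove hlam hr₁
    (by linarith [ht.2]) (hsol.mono (by rw [dist_zero_right]; linarith) ht.1 le_rfl)
    (fun s hs => hno x (mem_closedBall_zero_iff.2 hx2) s
      ⟨by linarith [ht.1, hs.1], by linarith [hs.2, ht.2]⟩) j t
    ((2 : ℝ)⁻¹ ^ j * r) (by positivity) (by rw [← mul_assoc, ← mul_pow]; norm_num)
    ⟨le_rfl, le_add_of_nonneg_right (by positivity)⟩ hj
  have hϱ2 : ϱ ^ 2 ≤ r ^ 2 := by gcongr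
  refine ⟨s, ϱ, hϱ, hϱr.trans hr₁, hs, (not_le.1 hnot).le.trans (measure_mono ?_)⟩
  rintro z ⟨hz, hzlam⟩
  refine ⟨hz, ⟨⟨mem_closedBall.2 ?_, ?_, ?_⟩, hgt z hz⟩, fun hz' => hz'.2.not_ge hzlam⟩
  · linarith [dist_triangle z.1 x 0, mem_closedBall.1 hz.1, mem_closedBall.1 hx]
  · linarith [hz.2.1, hs.1, ht.1]
  · linarith [hz.2.2, hs.2, ht.2]

lemma GrowthProperty.mul_volume_superlevel_le (hG : GrowthProperty n θ μ c) (hμ : 0 < μ)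
    (hc : c ≤ 1) {R R' T : ℝ} (hlam : 0 < lam) (hr : 0 < r) (hr₁ : r ≤ 1) (hRR' : R + 2 * r ≤ R')
    (hR' : R' ≤ 2) (hT : 13 ≤ T) (hsol : IsNonnegSol θ (0 : Eu n) 18 0 T w)
    (hno : ∀ x ∈ closedBall (0 : Eu n) 2, ∀ s ∈ Icc (0 : ℝ) 2, ¬ MostlyAbove μ w lam x s r) :
    (1 + μ / vitaliConst n) * volume.real (superlevel w lam R) ≤
      volume.real (superlevel w (c * lam) R') := by
  have hV := vitaliConst_pos n
  have hcont : ContinuousOn (fun z : Eu n × ℝ => w z.1 z.2) (closedBall 0 R' ×ˢ Icc 0 R') :=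
    hsol.1.continuousOn.mono (prod_mono (closedBall_subset_closedBall (by linarith))
      (Icc_subset_Icc le_rfl (by linarith)))
  have hstep := ENNReal.toReal_mono (ENNReal.mul_ne_top ENNReal.ofReal_ne_top
      (measure_ne_top_of_subset sdiff_subset (volume_superlevel_ne_top w (c * lam) R')))
    (hG.volume_superlevel_le hμ hlam hr hr₁ hRR' hR' hT hsol hno)
  rw [ENNReal.toReal_mul, ENNReal.toReal_mul, ENNReal.toReal_ofReal hμ.le,
    ENNReal.toReal_ofReal hV.le] at hstep
  have hdiff : volume.real (superlevel w (c * lam) R' \ superlevel w lam R') =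
      volume.real (superlevel w (c * lam) R') - volume.real (superlevel w lam R') :=
    measureReal_sdiff (superlevel_mono (mul_le_of_le_one_left hlam.le hc) le_rfl)
      (measurableSet_superlevel hcont) (volume_superlevel_ne_top _ _ _)
  have hmono : volume.real (superlevel w lam R) ≤ volume.real (superlevel w lam R') :=
    measureReal_mono (superlevel_mono le_rfl (by linarith)) (volume_superlevel_ne_top _ _ _)
  rw [← Measure.real, ← Measure.real, hdiff, mul_comm (vitaliConst n), ← div_le_iff₀ hV,
    ← div_mul_eq_mul_div] at hstep
  linarith

lemma GrowthProperty.mul_pow_le_volume_superlevel (hG : GrowthProperty n θ μ c) (hμ : 0 < μ)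
    (hc : c ∈ Ioo (0 : ℝ) 1) {T : ℝ} (hr : 0 < r) (hr₁ : r ≤ 1) (hT : 13 ≤ T)
    (hsol : IsNonnegSol θ (0 : Eu n) 18 0 T w) (k : ℕ) (hk : 1 + k * (2 * r) ≤ 2)
    (hno : ∀ j < k, ∀ x ∈ closedBall (0 : Eu n) 2, ∀ s ∈ Icc (0 : ℝ) 2,
      ¬ MostlyAbove μ w (c ^ j) x s r) :
    (1 + μ / vitaliConst n) ^ k * volume.real (superlevel w 1 1) ≤
      volume.real (superlevel w (c ^ k) (1 + k * (2 * r))) := by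
  have hq : 0 < μ / vitaliConst n := div_pos hμ (vitaliConst_pos n)
  induction k with
  | zero => simp
  | succ k ih =>
    push_cast at hk ⊢
    have hstep := hG.mul_volume_superlevel_le (R := 1 + k * (2 * r))
      (R' := 1 + (k + 1) * (2 * r)) hμ hc.2.le (pow_pos hc.1 k) hr hr₁ (by linarith) hk hT hsol
      (hno k k.lt_succ_self)
    rw [← pow_succ'] at hstep
    rw [pow_succ', mul_assoc]
    exact (mul_le_mul_of_nonneg_left (ih (by linarith) fun j hj => hno j (hj.trans k.lt_succ_self))
      (by positivity)).trans hstep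

-- Otherwise the superlevel sets would outgrow the box of radius two.
lemma GrowthProperty.exists_mostlyAbove (hG : GrowthProperty n θ μ c) (hμ : 0 < μ)
    (hc : c ∈ Ioo (0 : ℝ) 1) {μ₀ : ℝ} (hμ₀ : 0 < μ₀) :
    ∃ N i : ℕ, ∀ (w : Eu n → ℝ → ℝ) (T : ℝ), 13 ≤ T → IsNonnegSol θ (0 : Eu n) 18 0 T w →
      ENNReal.ofReal μ₀ ≤ volume (superlevel w 1 1) →
      ∃ k < N, ∃ x ∈ closedBall (0 : Eu n) 2, ∃ t ∈ Icc (0 : ℝ) 2,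
        MostlyAbove μ w (c ^ k) x t (2⁻¹ ^ i) := by
  have hq : 0 < μ / vitaliConst n := div_pos hμ (vitaliConst_pos n)
  obtain ⟨N, hN⟩ := pow_unbounded_of_one_lt
    (volume.real (closedBall (0 : Eu n) 2 ×ˢ Icc (0 : ℝ) 2) / μ₀)
    (show 1 < 1 + μ / vitaliConst n by linarith)
  rw [div_lt_iff₀ hμ₀] at hN
  obtain ⟨i, hi⟩ := exists_pow_lt_of_lt_one (show 0 < 1 / (2 * ((N : ℝ) + 1)) by positivity)
    (show (2 : ℝ)⁻¹ < 1 by norm_num)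
  have hradius : 1 + N * (2 * (2 : ℝ)⁻¹ ^ i) ≤ 2 := by
    have hpos : 0 < (2 : ℝ)⁻¹ ^ i := by positivity
    rw [lt_div_iff₀ (by positivity)] at hi
    linarith
  refine ⟨N, i, fun w T hT hsol hvol => ?_⟩
  by_contra! hno
  have hgrow := hG.mul_pow_le_volume_superlevel hμ hc (by positivity)
    (pow_le_one₀ (by norm_num) (by norm_num)) hT hsol N hradius hno
  have hbox := measureReal_mono ((superlevel_subset_box w (c ^ N) _).trans
    (prod_mono (closedBall_subset_closedBall hradius) (Icc_subset_Icc le_rfl hradius)))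
    (volume_box_ne_top (0 : Eu n) 2 0 2)
  have hμ₀le : μ₀ ≤ volume.real (superlevel w 1 1) :=
    (ENNReal.ofReal_le_iff_le_toReal (volume_superlevel_ne_top _ _ _)).1 hvol
  have hpow : 0 ≤ (1 + μ / vitaliConst n) ^ N := by positivity
  linarith [mul_le_mul_of_nonneg_left hμ₀le hpow]

lemma GrowthProperty.exists_le_of_le_volume_superlevel (hG : GrowthProperty n θ μ c) (hμ : 0 < μ)
    (hc : c ∈ Ioo (0 : ℝ) 1) {μ₀ : ℝ} (hμ₀ : 0 < μ₀) :
    ∃ c₁ > 0, ∀ (w : Eu n → ℝ → ℝ) (s : ℝ), s ∈ Icc (13 : ℝ) 16 →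
      IsNonnegSol θ (0 : Eu n) 18 0 s w → ENNReal.ofReal μ₀ ≤ volume (superlevel w 1 1) →
      ∀ y ∈ closedBall (0 : Eu n) 2, c₁ ≤ w y s := by
  obtain ⟨N, i, hexists⟩ := hG.exists_mostlyAbove hμ hc hμ₀
  have hc₀ := hc.1
  refine ⟨c ^ (i + 2) * c ^ N, by positivity, fun w s hs hsol hvol y hy => ?_⟩
  obtain ⟨k, hk, x, hx, t, ht, habove⟩ := hexists w s hs.1 hsol hvol
  rw [mem_closedBall] at hx hy
  have hlt := hG.pow_mul_lt_of_dyadic hc.1 rfl (pow_pos hc.1 k)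
    ⟨by linarith [ht.2, hs.1], by linarith [ht.1, hs.2]⟩
    (hsol.mono (by linarith) ht.1 le_rfl) habove y
    (mem_closedBall.2 (by linarith [dist_triangle_right y x 0]))
  calc c ^ (i + 2) * c ^ N ≤ c ^ (i + 2) * c ^ k := by
        gcongr ?_ * ?_
        exact pow_le_pow_of_le_one hc.1.le hc.2.le hk.le
    _ ≤ w y s := hlt.le

end Propagation

/-! ### The Harnack inequality -/

section Harnack

open MeasureTheory

variable {θ μ c r t : ℝ} {x : Eu n} {w : Eu n → ℝ → ℝ}

lemma GrowthProperty.not_mostlyAbove_sub (hG : GrowthProperty n θ μ c) (hc : 0 < c) (hr : 0 < r)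
    (hr₄ : r ≤ 4) {A : ℝ} (hA : A ≤ 1 + c / 4) (hpos : 0 < w x t)
    (hsol : IsCylSol θ 1 x (8 * r) (t - 6 * r ^ 2) t w)
    (hle : ∀ y ∈ closedBall x (8 * r), ∀ τ ∈ Icc (t - 6 * r ^ 2) t, w y τ ≤ A * w x t) :
    ¬ MostlyAbove μ (fun y τ => A * w x t + -1 * w y τ) (w x t / 4) x (t - 6 * r ^ 2) r := by
  intro h
  have hgrow := hG _ x (t - 6 * r ^ 2) r t (w x t / 4) hr hr₄ (by positivity)
    ⟨by linarith [sq_nonneg r], by linarith⟩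
    ⟨IsSolOn.const_add_const_mul hsol (A * w x t) (-1),
      fun y hy τ hτ => by linarith [hle y hy τ hτ]⟩ h x (mem_closedBall_self (by positivity))
  linarith [mul_le_mul_of_nonneg_right hA hpos.le, mul_pos hc hpos]

lemma le_volume_superlevel_of_not_mostlyAbove (hr : 0 < r) {W A : ℝ} (hW : 0 < W) (hA : 1 ≤ A)
    (h : ¬ MostlyAbove μ (fun y τ => A * W + -1 * w y τ) (W / 4) x t r) :
    ENNReal.ofReal μ ≤
      volume (superlevel (fun y τ => 0 + (W / 2)⁻¹ * w (x + r • y) (t + r ^ 2 * τ)) 1 1) := by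
  rw [MostlyAbove, not_le] at h
  have hsub : (fun z : Eu n × ℝ => (x + r • z.1, t + r ^ 2 * z.2)) ⁻¹'
      {z | z ∈ forwardCyl x t r ∧ A * W + -1 * w z.1 z.2 ≤ W / 4} ⊆
      superlevel (fun y τ => 0 + (W / 2)⁻¹ * w (x + r • y) (t + r ^ 2 * τ)) 1 1 := by
    rintro ⟨y, τ⟩ ⟨⟨hy, hτ₀, hτ₁⟩, hle⟩
    have hr2 : 0 < r ^ 2 := by positivity
    dsimp only at hy hτ₀ hτ₁ hle
    rw [mem_closedBall, dist_self_add_left, norm_smul, Real.norm_of_nonneg hr.le] at hy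
    refine ⟨⟨?_, ?_, ?_⟩, ?_⟩
    · exact mem_closedBall_zero_iff.2 (le_of_mul_le_mul_left (by linarith) hr)
    · exact le_of_mul_le_mul_left (by linarith) hr2
    · exact le_of_mul_le_mul_left (by linarith) hr2
    · dsimp only
      rw [zero_add, inv_mul_eq_div, lt_div_iff₀ (by positivity)]
      linarith [mul_le_mul_of_nonneg_right hA hW.le]
  refine le_trans ?_ (measure_mono hsub)
  rw [volume_preimage_parabolic_scaling x t hr]
  calc ENNReal.ofReal μ
      = ENNReal.ofReal ((r ^ (n + 2))⁻¹) * ENNReal.ofReal (μ * r ^ (n + 2)) := by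
        rw [← ENNReal.ofReal_mul (by positivity)]
        congr 1
        field_simp
    _ ≤ _ := by gcongr

-- At a point where `w` is almost maximal, `A * w x t - w` cannot be large on most of a cylinder
-- just before, so `w` itself is large on a set of positive density there.
lemma GrowthProperty.exists_lt_after_almost_max (hG : GrowthProperty n θ μ c) (hμ : 0 < μ)
    (hc : c ∈ Ioo (0 : ℝ) 1) :
    ∃ c₁ > 0, ∀ (w : Eu n → ℝ → ℝ) (x : Eu n) (t r A : ℝ), 0 < r → r ≤ 1 → 1 ≤ A →
      A ≤ 1 + c / 4 → 0 < w x t → IsNonnegSol θ x (18 * r) (t - 6 * r ^ 2) (t + 8 * r ^ 2) w →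
      (∀ y ∈ closedBall x (8 * r), ∀ τ ∈ Icc (t - 6 * r ^ 2) t, w y τ ≤ A * w x t) →
      ∀ y ∈ closedBall x r, ∀ s ∈ Icc (t + 7 * r ^ 2) (t + 8 * r ^ 2), c₁ * w x t < w y s := by
  obtain ⟨c₁, hc₁, hlow⟩ := hG.exists_le_of_le_volume_superlevel hμ hc hμ
  refine ⟨c₁ / 4, by positivity, fun w x t r A hr hr₁ hA₁ hA hpos hsol hle y hy s hs => ?_⟩
  have hr2 : 0 < r ^ 2 := by positivity
  have hvol := le_volume_superlevel_of_not_mostlyAbove hr hpos hA₁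
    (hG.not_mostlyAbove_sub hc.1 hr (by linarith) hA hpos
      (hsol.1.mono le_rfl (by rw [dist_self]; linarith) le_rfl (by linarith)) hle)
  obtain ⟨S, rfl⟩ : ∃ S, s = t - 6 * r ^ 2 + r ^ 2 * S :=
    ⟨(s - (t - 6 * r ^ 2)) / r ^ 2, by field_simp; ring⟩
  have hS : S ∈ Icc (13 : ℝ) 16 := ⟨le_of_mul_le_mul_left (by linarith [hs.1]) hr2,
    le_of_mul_le_mul_left (by linarith [hs.2]) hr2⟩
  obtain ⟨hscaled, hnonneg⟩ := IsNonnegSol.rescale (lam := w x t / 2) (R := 18) hr (by positivity)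
    (hsol.mono (x' := x) (by rw [dist_self]; linarith) le_rfl hs.2)
  have hge := hlow _ S hS ⟨hscaled.mono hr₁ (by simp) le_rfl le_rfl, hnonneg⟩ hvol
    (r⁻¹ • (y - x)) (by
      rw [mem_closedBall_zero_iff, norm_smul, norm_inv, Real.norm_of_nonneg hr.le,
        inv_mul_le_iff₀ hr, ← dist_eq_norm]
      linarith [mem_closedBall.1 hy])
  rw [zero_add, smul_smul, mul_inv_cancel₀ hr.ne', one_smul, add_sub_cancel, inv_mul_eq_div,
    le_div_iff₀ (by positivity)] at hge
  linarith [mul_pos hc₁ hpos]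

lemma GrowthProperty.exists_le_of_almost_max (hG : GrowthProperty n θ μ c) (hμ : 0 < μ)
    (hc : c ∈ Ioo (0 : ℝ) 1) :
    ∃ c₁ > 0, ∀ (w : Eu n → ℝ → ℝ) (s r A : ℝ) (k : ℕ) (x : Eu n) (t : ℝ), s ∈ Icc (12 : ℝ) 16 →
      IsNonnegSol θ (0 : Eu n) 20 0 s w → x ∈ closedBall (0 : Eu n) 1 → t ≤ 1 → r = 2⁻¹ ^ k →
      r ≤ 1 / 16 → (8 * r) ^ 2 ≤ t → 1 ≤ A → A ≤ 1 + c / 4 → 0 < w x t →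
      (∀ y ∈ closedBall x (8 * r), ∀ τ ∈ Icc (t - (8 * r) ^ 2) t, w y τ ≤ A * w x t) →
      ∀ y ∈ closedBall (0 : Eu n) 3, c ^ k * c₁ * w x t ≤ w y s := by
  obtain ⟨c₁, hc₁, hlow⟩ := hG.exists_lt_after_almost_max hμ hc
  have hc₀ := hc.1
  refine ⟨c ^ 2 * c₁, by positivity,
    fun w s r A k x t hs hsol hx ht hr hr₁ hrt hA₁ hA hpos hle y hy => ?_⟩
  have hr₀ : 0 < r := by rw [hr]; positivity
  have hr2 : r ^ 2 ≤ 1 / 256 := by nlinarith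
  have hs₁ := hs.1
  have hs₂ := hs.2
  rw [mem_closedBall] at hx hy
  have hafter := hlow w x t r A hr₀ (by linarith) hA₁ hA hpos
    (hsol.mono (by linarith) (by linarith [sq_nonneg r]) (by linarith))
    fun y hy τ hτ => hle y hy τ ⟨by linarith [hτ.1, sq_nonneg r], hτ.2⟩
  have hlt := hG.pow_mul_lt_of_dyadic (t := t + 7 * r ^ 2) hc.1 hr (mul_pos hc₁ hpos)
    ⟨by linarith, by linarith [sq_nonneg r]⟩
    (hsol.mono (by linarith) (by linarith [sq_nonneg r]) le_rfl)
    (mostlyAbove_of_forall_lt fun y hy s hs => hafter y hy s ⟨hs.1, by linarith [hs.2]⟩) y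
    (mem_closedBall.2 (by linarith [dist_triangle_right y x 0]))
  calc c ^ k * (c ^ 2 * c₁) * w x t = c ^ (k + 2) * (c₁ * w x t) := by ring
    _ ≤ w y s := hlt.le

/-- The parabolic distance from `z` to the lateral and bottom boundary of the cylinder
`closedBall 0 1 ×ˢ Icc 0 1`, used as the weight in the choice of an almost maximal point. -/
def boundaryDist (z : Eu n × ℝ) : ℝ := min (1 - ‖z.1‖) (√z.2)

lemma continuous_boundaryDist : Continuous (boundaryDist (n := n)) := by
  unfold boundaryDist
  fun_prop

lemma boundaryDist_sub_le {y : Eu n} {τ d : ℝ} (hy : dist y x ≤ d) (hτ : t - d ^ 2 ≤ τ)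
    (hτ₀ : 0 ≤ τ) : boundaryDist (x, t) - d ≤ boundaryDist (y, τ) := by
  have hd : 0 ≤ d := dist_nonneg.trans hy
  have hnorm : ‖y‖ ≤ ‖x‖ + d := by linarith [norm_le_norm_add_norm_sub' y x, dist_eq_norm y x]
  have hsqrt : √t ≤ √τ + d := by
    rw [Real.sqrt_le_left (by positivity)]
    linarith [mul_nonneg (Real.sqrt_nonneg τ) hd, Real.sq_sqrt hτ₀]
  refine le_min ?_ ?_
  · linarith [min_le_left (1 - ‖x‖) √t, show boundaryDist (x, t) = min (1 - ‖x‖) √t from rfl]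
  · linarith [min_le_right (1 - ‖x‖) √t, show boundaryDist (x, t) = min (1 - ‖x‖) √t from rfl]

lemma exists_max_mul_boundaryDist_rpow {g : ℝ} (hg : 0 < g)
    (hw : ContinuousOn (fun z : Eu n × ℝ => w z.1 z.2) (closedBall 0 1 ×ˢ Icc 0 1))
    (hone : 1 ≤ w 0 1) :
    ∃ x ∈ closedBall (0 : Eu n) 1, ∃ t ∈ Icc (0 : ℝ) 1, 0 < boundaryDist (x, t) ∧
      1 ≤ w x t * boundaryDist (x, t) ^ g ∧
      ∀ z ∈ closedBall (0 : Eu n) 1 ×ˢ Icc (0 : ℝ) 1,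
        w z.1 z.2 * boundaryDist z ^ g ≤ w x t * boundaryDist (x, t) ^ g := by
  obtain ⟨⟨x, t⟩, ⟨hx, ht⟩, hmax⟩ := ((isCompact_closedBall (0 : Eu n) 1).prod
    (isCompact_Icc (a := (0 : ℝ)) (b := 1))).exists_isMaxOn
    (f := fun z => w z.1 z.2 * boundaryDist z ^ g) ⟨(0, 0), by simp⟩
    (hw.mul (continuous_boundaryDist.rpow_const fun _ => Or.inr hg.le).continuousOn)
  have hge : 1 ≤ w x t * boundaryDist (x, t) ^ g := by
    have htop : boundaryDist ((0 : Eu n), (1 : ℝ)) = 1 := by simp [boundaryDist]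
    have := hmax (show ((0 : Eu n), (1 : ℝ)) ∈ _ by simp)
    simp only [htop, Real.one_rpow, mul_one, mem_ofPred_eq] at this
    exact hone.trans this
  have hnonneg : 0 ≤ boundaryDist (x, t) :=
    le_min (sub_nonneg.2 (mem_closedBall_zero_iff.1 hx)) (Real.sqrt_nonneg _)
  refine ⟨x, hx, t, ht, hnonneg.lt_of_ne' fun h => ?_, hge, fun z hz => hmax hz⟩
  rw [h, Real.zero_rpow hg.ne', mul_zero] at hge
  exact absurd hge (by norm_num)

lemma le_inv_rpow_mul_of_max {g η : ℝ} (hg : 0 < g) (hη : η ∈ Ioo (0 : ℝ) 1)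
    (ht : t ≤ 1) (hρ : 0 < boundaryDist (x, t))
    (hw : ∀ z ∈ closedBall (0 : Eu n) 1 ×ˢ Icc (0 : ℝ) 1, 0 ≤ w z.1 z.2)
    (hmax : ∀ z ∈ closedBall (0 : Eu n) 1 ×ˢ Icc (0 : ℝ) 1,
      w z.1 z.2 * boundaryDist z ^ g ≤ w x t * boundaryDist (x, t) ^ g)
    {y : Eu n} {τ : ℝ} (hy : dist y x ≤ η * boundaryDist (x, t))
    (hτ : τ ∈ Icc (t - (η * boundaryDist (x, t)) ^ 2) t) :
    w y τ ≤ ((1 - η) ^ g)⁻¹ * w x t := by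
  have hρt : boundaryDist (x, t) ^ 2 ≤ t := Real.le_sqrt' hρ |>.1 (min_le_right _ _)
  have hτ₀ : 0 ≤ τ := by
    have hle : η * boundaryDist (x, t) ≤ boundaryDist (x, t) := mul_le_of_le_one_left hρ.le hη.2.le
    have := pow_le_pow_left₀ (mul_pos hη.1 hρ).le hle 2
    linarith [hτ.1]
  have hρy : (1 - η) * boundaryDist (x, t) ≤ boundaryDist (y, τ) := by
    linarith [boundaryDist_sub_le hy hτ.1 hτ₀]
  have hη₁ : 0 < 1 - η := by linarith [hη.2]
  have hy₁ : ‖y‖ ≤ 1 := by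
    have hρy' : boundaryDist (y, τ) ≤ 1 - ‖y‖ := min_le_left _ _
    linarith [mul_pos hη₁ hρ]
  have hyτ : (y, τ) ∈ closedBall (0 : Eu n) 1 ×ˢ Icc (0 : ℝ) 1 :=
    mk_mem_prod (mem_closedBall_zero_iff.2 hy₁) ⟨hτ₀, hτ.2.trans ht⟩
  have hpow : 0 < (1 - η) ^ g := Real.rpow_pos_of_pos hη₁ g
  rw [inv_mul_eq_div, le_div_iff₀ hpow]
  refine le_of_mul_le_mul_right ?_ (Real.rpow_pos_of_pos hρ g)
  calc w y τ * (1 - η) ^ g * boundaryDist (x, t) ^ g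
      = w y τ * ((1 - η) * boundaryDist (x, t)) ^ g := by
        rw [Real.mul_rpow hη₁.le hρ.le, mul_assoc]
    _ ≤ w y τ * boundaryDist (y, τ) ^ g :=
        mul_le_mul_of_nonneg_left
          (Real.rpow_le_rpow (mul_pos hη₁ hρ).le hρy hg.le) (hw (y, τ) hyτ)
    _ ≤ w x t * boundaryDist (x, t) ^ g := hmax (y, τ) hyτ

lemma exists_half_rpow_eq (hc : c ∈ Ioo (0 : ℝ) 1) : ∃ g : ℝ, 0 < g ∧ (2⁻¹ : ℝ) ^ g = c :=
  ⟨-Real.logb 2 c, neg_pos.2 (Real.logb_neg one_lt_two hc.1 hc.2), by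
    rw [Real.inv_rpow zero_le_two, Real.rpow_neg zero_le_two, inv_inv,
      Real.rpow_logb two_pos (by norm_num) hc.1]⟩

lemma exists_inv_one_sub_rpow_le (g : ℝ) {A : ℝ} (hA : 1 < A) :
    ∃ η ∈ Ioo (0 : ℝ) (1 / 2), ((1 - η) ^ g)⁻¹ ≤ A := by
  have hcont : ContinuousAt (fun η : ℝ => ((1 - η) ^ g)⁻¹) 0 :=
    ContinuousAt.inv₀ (ContinuousAt.rpow_const (by fun_prop) (Or.inl (by norm_num))) (by norm_num)
  have hlim : Tendsto (fun η : ℝ => ((1 - η) ^ g)⁻¹) (𝓝[>] 0) (𝓝 1) := by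
    simpa using hcont.tendsto.mono_left nhdsWithin_le_nhds
  obtain ⟨η, hle, hη⟩ := ((hlim.eventually (gt_mem_nhds hA)).and
    (Ioo_mem_nhdsGT (show (0 : ℝ) < 1 / 2 by norm_num))).exists
  exact ⟨η, hη, hle.le⟩

lemma exists_almost_max {g η : ℝ} (hg : 0 < g) (hη : η ∈ Ioo (0 : ℝ) (1 / 2))
    (hw : ContinuousOn (fun z : Eu n × ℝ => w z.1 z.2) (closedBall 0 1 ×ˢ Icc 0 1))
    (hnonneg : ∀ z ∈ closedBall (0 : Eu n) 1 ×ˢ Icc (0 : ℝ) 1, 0 ≤ w z.1 z.2) (hone : 1 ≤ w 0 1) :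
    ∃ x ∈ closedBall (0 : Eu n) 1, ∃ t ≤ 1, ∃ (k : ℕ) (r : ℝ), r = 2⁻¹ ^ k ∧ r ≤ 1 / 16 ∧
      (8 * r) ^ 2 ≤ t ∧ 0 < w x t ∧ (η / 16) ^ g ≤ r ^ g * w x t ∧
      ∀ y ∈ closedBall x (8 * r), ∀ τ ∈ Icc (t - (8 * r) ^ 2) t,
        w y τ ≤ ((1 - η) ^ g)⁻¹ * w x t := by
  obtain ⟨x, hx, t, ht, hρ, hge, hmax⟩ := exists_max_mul_boundaryDist_rpow hg hw hone
  have hpos : 0 < w x t := pos_of_mul_pos_left (one_pos.trans_le hge) (Real.rpow_nonneg hρ.le g)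
  have hρt : boundaryDist (x, t) ^ 2 ≤ t := Real.le_sqrt' hρ |>.1 (min_le_right _ _)
  have hρ₁ : boundaryDist (x, t) ≤ 1 := (min_le_left _ _).trans (sub_le_self _ (norm_nonneg x))
  obtain ⟨ρ, hρdef⟩ : ∃ ρ, ρ = boundaryDist (x, t) := ⟨_, rfl⟩
  rw [← hρdef] at hρ hge hρt hρ₁
  have hη₀ := hη.1
  have hηρ : η * ρ ≤ 1 / 2 * ρ := by gcongr; exact hη.2.le
  obtain ⟨k, hrlt, hler⟩ := exists_nat_pow_near_of_lt_one (show 0 < η * ρ / 8 by positivity)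
    (by linarith) (show (0 : ℝ) < 2⁻¹ by norm_num) (by norm_num)
  obtain ⟨r, hr⟩ : ∃ r : ℝ, r = 2⁻¹ ^ (k + 1) := ⟨_, rfl⟩
  have h2r : (2⁻¹ : ℝ) ^ k = 2 * r := by rw [hr, pow_succ]; ring
  have hr₀ : 0 < r := by rw [hr]; positivity
  rw [← hr] at hrlt
  rw [h2r] at hler
  have hsq : (8 * r) ^ 2 ≤ (η * ρ) ^ 2 := pow_le_pow_left₀ (by positivity) (by linarith) 2
  have hsq' : (η * ρ) ^ 2 ≤ ρ ^ 2 := pow_le_pow_left₀ (by positivity) (by linarith) 2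
  refine ⟨x, hx, t, ht.2, k + 1, r, hr, by linarith, by linarith, hpos, ?_, fun y hy τ hτ => ?_⟩
  · calc (η / 16) ^ g ≤ (η / 16) ^ g * (w x t * ρ ^ g) := le_mul_of_one_le_right (by positivity) hge
      _ = (η / 16 * ρ) ^ g * w x t := by rw [Real.mul_rpow (by positivity) hρ.le]; ring
      _ ≤ r ^ g * w x t := by
        gcongr
        linarith
  · refine le_inv_rpow_mul_of_max hg ⟨hη₀, by linarith [hη.2]⟩ ht.2 (hρdef ▸ hρ) hnonneg hmax ?_ ?_
    · rw [← hρdef]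
      linarith [mem_closedBall.1 hy]
    · rw [← hρdef]
      exact ⟨by linarith [hτ.1], hτ.2⟩

-- The weight `boundaryDist ^ g` with `2⁻¹ ^ g = c` absorbs exactly the factor `c ^ k` lost when
-- positivity spreads from radius `2⁻¹ ^ k` to radius one.
theorem IsNonnegSol.exists_harnack (n : ℕ) (hθ : 0 < θ) :
    ∃ c₂ ∈ Ioo (0 : ℝ) 1, ∀ (w : Eu n → ℝ → ℝ) (s : ℝ), s ∈ Icc (12 : ℝ) 16 →
      IsNonnegSol θ (0 : Eu n) 20 0 s w → 1 ≤ w 0 1 →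
      ∀ y ∈ closedBall (0 : Eu n) 3, c₂ ≤ w y s := by
  obtain ⟨μ, hμ, c, hc, hG⟩ := exists_growthProperty n hθ
  obtain ⟨c₁, hc₁, hlow⟩ := hG.exists_le_of_almost_max hμ hc
  obtain ⟨g, hg, hgc⟩ := exists_half_rpow_eq hc
  obtain ⟨η, hη, hηA⟩ := exists_inv_one_sub_rpow_le g (show 1 < 1 + c / 4 by linarith [hc.1])
  have hη₀ := hη.1
  have hη₁ : 0 < 1 - η := by linarith [hη.2]
  have hA₁ : 1 ≤ ((1 - η) ^ g)⁻¹ :=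
    (one_le_inv₀ (Real.rpow_pos_of_pos hη₁ g)).2 (Real.rpow_le_one hη₁.le (by linarith) hg.le)
  refine ⟨min (c₁ * (η / 16) ^ g) (1 / 2), ⟨by positivity, (min_le_right _ _).trans_lt
    (by norm_num)⟩, fun w s hs hsol hone y hy => (min_le_left _ _).trans ?_⟩
  have hbox : closedBall (0 : Eu n) 1 ×ˢ Icc (0 : ℝ) 1 ⊆ closedBall 0 20 ×ˢ Icc 0 s :=
    prod_mono (closedBall_subset_closedBall (by norm_num))
      (Icc_subset_Icc le_rfl (by linarith [hs.1]))
  obtain ⟨x, hx, t, ht, k, r, hr, hr₁, hrt, hpos, hge, hle⟩ := exists_almost_max hg hη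
    (hsol.1.continuousOn.mono hbox) (fun z hz => hsol.2 z.1 (hbox hz).1 z.2 (hbox hz).2) hone
  have hck : r ^ g = c ^ k := by
    rw [hr, ← hgc, ← Real.rpow_natCast, ← Real.rpow_natCast, ← Real.rpow_mul (by norm_num),
      ← Real.rpow_mul (by norm_num), mul_comm]
  calc c₁ * (η / 16) ^ g ≤ c₁ * (r ^ g * w x t) := by gcongr
    _ = c ^ k * c₁ * w x t := by rw [hck]; ring
    _ ≤ w y s := hlow w s r _ k x t hs hsol hx ht hr hr₁ hrt hA₁ hηA hpos hle y hy

end Harnack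

/-! ### Decay near the origin -/

section Decay

variable {θ ε K k : ℝ} {𝓑 : Eu n → Set (Eu n)}

-- Under the scaling `x ↦ k √ε x`, `t ↦ k² t` the diffusivity `ε` becomes `1`, while a drift of size
-- `K |x|` becomes one of size `k² K |x|`, uniformly in `ε`.
lemma IsSolOn.isCylSol_comp_scaling {R t₀ s : ℝ} {w : Eu n → ℝ → ℝ} (hε : 0 < ε) (hk : 0 < k)
    (hK : 0 ≤ K) (h𝓑 : ∀ x, ∀ β ∈ 𝓑 x, ‖β‖ ≤ K * ‖x‖) (hkR : k ^ 2 * (K * R) ≤ 1)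
    (h : IsSolOn θ ε 𝓑 (closedBall 0 (k * √ε * R) ×ˢ Icc t₀ (t₀ + k ^ 2 * s)) w) :
    IsCylSol θ 1 0 R 0 s (fun x t => w ((k * √ε) • x) (t₀ + k ^ 2 * t)) := by
  have hl : 0 < k * √ε := by positivity
  have hscaled := h.comp_scaling 0 t₀ (k ^ 2) hl.ne'
  have hdiff : k ^ 2 * ε / (k * √ε) ^ 2 = 1 := by
    rw [mul_pow, Real.sq_sqrt hε.le, div_self (by positivity)]
  simp only [zero_add, hdiff] at hscaled
  refine hscaled.mono ?_ ?_
  · rintro ⟨x, t⟩ ⟨hx, ht₀, hts⟩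
    dsimp only at ht₀ hts
    refine mk_mem_prod ?_ ⟨?_, ?_⟩
    · rw [mem_closedBall_zero_iff] at hx ⊢
      rw [norm_smul, Real.norm_of_nonneg hl.le]
      gcongr
    · linarith [mul_nonneg (sq_nonneg k) ht₀]
    · gcongr
  · rintro ⟨x, t⟩ ⟨hx, -⟩ - ⟨β, hβ, rfl⟩
    rw [mem_closedBall_zero_iff] at hx ⊢
    have hβK := h𝓑 _ β hβ
    rw [norm_smul, Real.norm_of_nonneg hl.le] at hβK
    rw [norm_smul, Real.norm_of_nonneg (by positivity)]
    calc k ^ 2 / (k * √ε) * ‖β‖ ≤ k ^ 2 / (k * √ε) * (K * (k * √ε * ‖x‖)) := by gcongr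
      _ = k ^ 2 * (K * ‖x‖) := by field_simp
      _ ≤ k ^ 2 * (K * R) := by gcongr
      _ ≤ 1 := hkR

-- Harnack's inequality is applied to the nonnegative solution `1 - u / M`, which is at least `1` on
-- the axis `x = 0`.
lemma IsSolOn.exists_decay_step (n : ℕ) (hθ : 0 < θ) :
    ∃ c ∈ Ioo (0 : ℝ) 1, ∀ {𝓑 : Eu n → Set (Eu n)} {ε K k M t : ℝ} {u : Eu n → ℝ → ℝ}, 0 < ε →
      0 < k → 0 ≤ K → 0 < M → (∀ x, ∀ β ∈ 𝓑 x, ‖β‖ ≤ K * ‖x‖) → k ^ 2 * (K * 20) ≤ 1 →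
      IsSolOn θ ε 𝓑 (closedBall 0 (k * √ε * 20) ×ˢ Icc (t - k ^ 2 * 12) t) u →
      (∀ x ∈ closedBall (0 : Eu n) (k * √ε * 20), ∀ s ∈ Icc (t - k ^ 2 * 12) t, u x s ≤ M) →
      (∀ s ∈ Icc (t - k ^ 2 * 12) t, u 0 s ≤ 0) →
      ∀ x ∈ closedBall (0 : Eu n) (k * √ε * 3), u x t ≤ (1 - c) * M := by
  obtain ⟨c, hc, hH⟩ := IsNonnegSol.exists_harnack n hθ
  refine ⟨c, hc, fun {𝓑 ε K k M t u} hε hk hK hM h𝓑 hkK h hu hu₀ x hx => ?_⟩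
  have hl : 0 < k * √ε := by positivity
  have htime (s : ℝ) (hs : s ∈ Icc (0 : ℝ) 12) :
      t - k ^ 2 * 12 + k ^ 2 * s ∈ Icc (t - k ^ 2 * 12) t := by
    have h₁ := mul_nonneg (sq_nonneg k) hs.1
    have h₂ := mul_le_mul_of_nonneg_left hs.2 (sq_nonneg k)
    exact ⟨by linarith, by linarith⟩
  have hscaled := (IsSolOn.isCylSol_comp_scaling (t₀ := t - k ^ 2 * 12) (s := 12) hε hk hK h𝓑 hkK
    (by rwa [sub_add_cancel])).const_add_const_mul 1 (-M⁻¹)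
  have hharnack := hH _ 12 ⟨le_rfl, by norm_num⟩ ⟨hscaled, fun y hy s hs => ?_⟩ ?_
    ((k * √ε)⁻¹ • x) ?_
  · rw [smul_inv_smul₀ hl.ne', sub_add_cancel] at hharnack
    have := mul_le_mul_of_nonneg_right hharnack hM.le
    field_simp at this
    linarith
  · have hy' : (k * √ε) • y ∈ closedBall (0 : Eu n) (k * √ε * 20) := by
      rw [mem_closedBall_zero_iff] at hy ⊢
      rw [norm_smul, Real.norm_of_nonneg hl.le]
      gcongr
    have := (inv_mul_le_one₀ hM).2 (hu _ hy' _ (htime s hs))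
    linarith
  · rw [smul_zero]
    have := mul_nonneg (inv_pos.2 hM).le
      (neg_nonneg.2 (hu₀ _ (htime 1 ⟨zero_le_one, by norm_num⟩)))
    linarith
  · rw [mem_closedBall_zero_iff] at hx ⊢
    rwa [norm_smul, norm_inv, Real.norm_of_nonneg hl.le, inv_mul_le_iff₀ hl]

lemma IsSolOn.exists_geometric_decay (n : ℕ) (hθ : 0 < θ) :
    ∃ c ∈ Ioo (0 : ℝ) 1, ∀ {𝓑 : Eu n → Set (Eu n)} {ε K k r : ℝ} {T : ℝ≥0∞}
      {u : Eu n → ℝ → ℝ}, 0 < ε → 0 < k → 0 ≤ K → (∀ x, ∀ β ∈ 𝓑 x, ‖β‖ ≤ K * ‖x‖) →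
      k ^ 2 * (K * 20) ≤ 1 → k * √ε * 20 < r → IsSolOn θ ε 𝓑 (cylO (ball 0 r) T) u →
      (∀ x ∈ ball (0 : Eu n) r, ∀ t : ℝ, 0 < t → ENNReal.ofReal t < T → u x t ≤ 1) →
      (∀ t : ℝ, 0 < t → ENNReal.ofReal t < T → u 0 t ≤ 0) →
      ∀ j : ℕ, ∀ x ∈ closedBall (0 : Eu n) ((3 / 20) ^ j * k * √ε * 20), ∀ t : ℝ,
        k ^ 2 * 12 * j < t → ENNReal.ofReal t < T → u x t ≤ (1 - c) ^ j := by
  obtain ⟨c, hc, hstep⟩ := IsSolOn.exists_decay_step n hθ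
  refine ⟨c, hc, fun {𝓑 ε K k r T u} hε hk hK h𝓑 hkK hkr h hu hu₀ j => ?_⟩
  have hc₁ : 0 < 1 - c := by linarith [hc.2]
  induction j with
  | zero =>
    intro x hx t ht htT
    rw [pow_zero, one_mul] at hx
    rw [Nat.cast_zero, mul_zero] at ht
    exact hu x (closedBall_subset_ball hkr hx) t ht htT
  | succ j ih =>
    intro x hx t ht htT
    obtain ⟨l, hl⟩ : ∃ l : ℝ, l = (3 / 20) ^ j * k := ⟨_, rfl⟩
    have hlk : l ≤ k := hl ▸ mul_le_of_le_one_left hk.le (pow_le_one₀ (by norm_num) (by norm_num))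
    have hl₀ : 0 < l := by rw [hl]; positivity
    have hl2 : l ^ 2 ≤ k ^ 2 := by gcongr
    have hball : closedBall (0 : Eu n) (l * √ε * 20) ⊆ ball 0 r :=
      closedBall_subset_ball (lt_of_le_of_lt (by gcongr) hkr)
    have htime (s : ℝ) (hs : s ∈ Icc (t - l ^ 2 * 12) t) :
        k ^ 2 * 12 * j < s ∧ 0 < s ∧ ENNReal.ofReal s < T := by
      push_cast at ht
      have hpos : 0 ≤ k ^ 2 * 12 * j := by positivity
      exact ⟨by linarith [hs.1], by linarith [hs.1],
        (ENNReal.ofReal_le_ofReal hs.2).trans_lt htT⟩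
    rw [pow_succ']
    refine hstep hε hl₀ hK (pow_pos hc₁ j) h𝓑
      ((mul_le_mul_of_nonneg_right hl2 (by positivity)).trans hkK)
      (h.mono (fun z hz => ⟨hball hz.1, (htime z.2 hz.2).2⟩) fun _ _ => Subset.rfl)
      (fun y hy s hs => ih y (hl ▸ hy) s (htime s hs).1 (htime s hs).2.2)
      (fun s hs => hu₀ s (htime s hs).2.1 (htime s hs).2.2) x ?_
    convert hx using 2
    rw [hl]
    ring

lemma IsSolOn.exists_le_near_zero (n : ℕ) (hθ : 0 < θ) (hK : 0 ≤ K) {δ : ℝ} (hδ : 0 < δ) :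
    ∃ κ ρ t₀ : ℝ, 0 < ρ ∧ 0 ≤ t₀ ∧ ∀ {𝓑 : Eu n → Set (Eu n)} {ε r : ℝ} {T : ℝ≥0∞}
      {u : Eu n → ℝ → ℝ}, 0 < ε → (∀ x, ∀ β ∈ 𝓑 x, ‖β‖ ≤ K * ‖x‖) →
      κ * √ε < r → IsSolOn θ ε 𝓑 (cylO (ball 0 r) T) u →
      (∀ x ∈ ball (0 : Eu n) r, ∀ t : ℝ, 0 < t → ENNReal.ofReal t < T → u x t ≤ 1) →
      (∀ t : ℝ, 0 < t → ENNReal.ofReal t < T → u 0 t ≤ 0) →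
      ∀ x ∈ closedBall (0 : Eu n) (ρ * √ε), ∀ t : ℝ, t₀ < t → ENNReal.ofReal t < T →
        u x t ≤ δ := by
  obtain ⟨c, hc, hdecay⟩ := IsSolOn.exists_geometric_decay n hθ
  obtain ⟨J, hJ⟩ := exists_pow_lt_of_lt_one hδ (show 1 - c < 1 by linarith [hc.1])
  obtain ⟨k, hk₀, hkK⟩ : ∃ k : ℝ, 0 < k ∧ k ^ 2 * (K * 20) ≤ 1 := by
    refine ⟨(K * 20 + 1)⁻¹, by positivity, ?_⟩
    rw [inv_pow, inv_mul_le_one₀ (by positivity)]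
    nlinarith
  refine ⟨k * 20, (3 / 20) ^ J * k * 20, k ^ 2 * 12 * J, by positivity, by positivity,
    fun {𝓑 ε r T u} hε h𝓑 hr h hu hu₀ x hx t ht htT => ?_⟩
  refine (hdecay hε hk₀ hK h𝓑 hkK (by linarith) h hu hu₀ J x ?_ t ht htT).trans hJ.le
  rwa [mul_right_comm]

end Decay

/-! ### The logarithmic barrier -/

/-- The barrier `log (ζ / k) + M (1 - (k / ζ)^N)` on `ζ = |x|² ≥ k`. The logarithm decreases at unit
rate along the attracting drift; the concave correction dominates the diffusion where `ζ` is
comparable to `k`. -/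
def logBarrier (k M : ℝ) (N : ℕ) (ζ : ℝ) : ℝ :=
  Real.log ζ - Real.log k + M * (1 - (k / ζ) ^ N)

section LogBarrier

variable {k M ζ : ℝ}

lemma hasDerivAt_const_div_pow (k : ℝ) (N : ℕ) (hζ : ζ ≠ 0) :
    HasDerivAt (fun z => (k / z) ^ N) (-(N * (k / ζ) ^ N / ζ)) ζ := by
  refine (((hasDerivAt_inv hζ).const_mul k).fun_pow N).congr_deriv ?_
  cases N with
  | zero => simp
  | succ N =>
    rw [Nat.add_sub_cancel, ← div_eq_mul_inv, pow_succ (k / ζ)]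
    field_simp

lemma hasDerivAt_logBarrier (k M : ℝ) (N : ℕ) (hζ : ζ ≠ 0) :
    HasDerivAt (logBarrier k M N) ((1 + N * (M * (k / ζ) ^ N)) / ζ) ζ := by
  have hlog := (Real.hasDerivAt_log hζ).sub_const (Real.log k)
  have hpow := ((hasDerivAt_const_div_pow k N hζ).const_sub 1).const_mul M
  refine (hlog.add hpow).congr_deriv ?_
  field_simp

lemma hasDerivAt_deriv_logBarrier (k M : ℝ) (N : ℕ) (hζ : ζ ≠ 0) :
    HasDerivAt (fun z => (1 + N * (M * (k / z) ^ N)) / z)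
      (-((1 + (N + 1) * (N * (M * (k / ζ) ^ N))) / ζ ^ 2)) ζ := by
  have hnum := (((hasDerivAt_const_div_pow k N hζ).const_mul M).const_mul (N : ℝ)).const_add 1
  refine (hnum.div (hasDerivAt_id ζ) hζ).congr_deriv ?_
  dsimp only [id]
  field_simp
  ring

lemma logBarrier_nonneg (hk : 0 < k) (hM : 0 ≤ M) (N : ℕ) (hζ : k ≤ ζ) :
    0 ≤ logBarrier k M N ζ := by
  have hlog := Real.log_le_log hk hζ
  have hpow : (k / ζ) ^ N ≤ 1 :=
    pow_le_one₀ (div_nonneg hk.le (hk.le.trans hζ)) ((div_le_one (hk.trans_le hζ)).2 hζ)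
  have := mul_nonneg hM (sub_nonneg.2 hpow)
  rw [logBarrier]
  linarith

lemma logBarrier_le (hk : 0 < k) (hM : 0 ≤ M) (N : ℕ) {Z : ℝ} (hζ : 0 < ζ) (hZ : ζ ≤ Z) :
    logBarrier k M N ζ ≤ Real.log Z - Real.log k + M := by
  have hlog := Real.log_le_log hζ hZ
  have : 0 ≤ M * (k / ζ) ^ N := by positivity
  rw [logBarrier]
  linarith

lemma le_one_add_two_mul_natCast_mul_pow {y : ℝ} (hy : 0 ≤ y) {N : ℕ} (hN : N ≠ 0) :
    y ≤ 1 + 2 * (N * y ^ N) := by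
  have hN₁ : (1 : ℝ) ≤ N := by exact_mod_cast Nat.one_le_iff_ne_zero.2 hN
  have hNy : y ^ N ≤ N * y ^ N := le_mul_of_one_le_left (by positivity) hN₁
  rcases le_total y 1 with hy₁ | hy₁
  · linarith [pow_nonneg hy N]
  · linarith [le_self_pow₀ hy₁ hN]

variable {θ ε b₀ : ℝ} {N : ℕ} {A : Matrix (Fin n) (Fin n) ℝ} {x β : Eu n}

lemma trace_add_mquad_le (hθ : 0 < θ) (hN : n / θ ≤ 2 * θ * (N + 1)) (hA : memS θ A)
    (hx : x ≠ 0) {X : ℝ} (hX : 0 ≤ X) :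
    2 * ((1 + X) / ‖x‖ ^ 2) * A.trace + 4 * -((1 + (N + 1) * X) / (‖x‖ ^ 2) ^ 2) * mquad A x
      ≤ 2 * n / (θ * ‖x‖ ^ 2) := by
  calc 2 * ((1 + X) / ‖x‖ ^ 2) * A.trace + 4 * -((1 + (N + 1) * X) / (‖x‖ ^ 2) ^ 2) * mquad A x
      ≤ 2 * ((1 + X) / ‖x‖ ^ 2) * (n / θ)
          + 4 * -((1 + (N + 1) * X) / (‖x‖ ^ 2) ^ 2) * (θ * ‖x‖ ^ 2) := by
        refine add_le_add (mul_le_mul_of_nonneg_left hA.trace_le (by positivity))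
          (mul_le_mul_of_nonpos_left (hA.2 x).1 ?_)
        have : 0 ≤ (1 + (N + 1) * X) / (‖x‖ ^ 2) ^ 2 := by positivity
        linarith
    _ = (2 * (n / θ) + (2 * (X * (n / θ - 2 * θ * (N + 1))) - 4 * θ)) / ‖x‖ ^ 2 := by
        field_simp
        ring
    _ ≤ 2 * (n / θ) / ‖x‖ ^ 2 := by
        gcongr
        linarith [mul_nonpos_of_nonneg_of_nonpos hX (sub_nonpos.2 hN)]
    _ = 2 * n / (θ * ‖x‖ ^ 2) := by field_simp

lemma logBarrier_supersolution (hθ : 0 < θ) (hε : 0 < ε) (hb₀ : 0 < b₀) (hk : 0 < k) (hN₀ : N ≠ 0)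
    (hN : n / θ ≤ 2 * θ * (N + 1)) (hM : M = (2 * n * ε / (θ * b₀ * k)) ^ N) (hA : memS θ A)
    (hx : x ≠ 0) (hβ : inner ℝ β x ≤ -b₀ * ‖x‖ ^ 2) :
    ε * (2 * ((1 + N * (M * (k / ‖x‖ ^ 2) ^ N)) / ‖x‖ ^ 2) * A.trace
        + 4 * -((1 + (N + 1) * (N * (M * (k / ‖x‖ ^ 2) ^ N))) / (‖x‖ ^ 2) ^ 2) * mquad A x)
      + 2 * ((1 + N * (M * (k / ‖x‖ ^ 2) ^ N)) / ‖x‖ ^ 2) * inner ℝ β x ≤ -b₀ := by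
  obtain ⟨y, hy⟩ : ∃ y, y = 2 * n * ε / (θ * b₀ * ‖x‖ ^ 2) := ⟨_, rfl⟩
  have hy₀ : 0 ≤ y := by rw [hy]; positivity
  have hMy : M * (k / ‖x‖ ^ 2) ^ N = y ^ N := by
    rw [hM, hy, ← mul_pow]
    field_simp
  rw [hMy]
  have hdiff := mul_le_mul_of_nonneg_left
    (trace_add_mquad_le hθ hN hA hx (X := N * y ^ N) (by positivity)) hε.le
  have hdrift : 2 * ((1 + N * y ^ N) / ‖x‖ ^ 2) * inner ℝ β x ≤ -2 * b₀ * (1 + N * y ^ N) := by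
    calc 2 * ((1 + N * y ^ N) / ‖x‖ ^ 2) * inner ℝ β x
        ≤ 2 * ((1 + N * y ^ N) / ‖x‖ ^ 2) * (-b₀ * ‖x‖ ^ 2) := by gcongr
      _ = -2 * b₀ * (1 + N * y ^ N) := by field_simp
  have hby : ε * (2 * n / (θ * ‖x‖ ^ 2)) = b₀ * y := by
    rw [hy]
    field_simp
  linarith [mul_le_mul_of_nonneg_left (le_one_add_two_mul_natCast_mul_pow hy₀ hN₀) hb₀.le]

end LogBarrier

/-! ### Comparison on annuli and conclusion -/

lemma IsSolOn.le_radial_on_annulus {θ ε : ℝ} {𝓑 : Eu n → Set (Eu n)} {u : Eu n → ℝ → ℝ}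
    {m r t₀ t₁ c : ℝ} (hθ : 0 < θ) (hε : 0 ≤ ε) (hm : 0 < m)
    (h : IsSolOn θ ε 𝓑 ((closedBall 0 r \ ball 0 m) ×ˢ Icc t₀ t₁) u) {F F₁ F₂ : ℝ → ℝ}
    (hF : ∀ ζ ≠ 0, HasDerivAt F (F₁ ζ) ζ) (hF₁ : ∀ ζ ≠ 0, HasDerivAt F₁ (F₂ ζ) ζ)
    (hinit : ∀ x ∈ closedBall (0 : Eu n) r \ ball 0 m, u x t₀ ≤ F (‖x‖ ^ 2))
    (hbdry : ∀ x : Eu n, ‖x‖ = m ∨ ‖x‖ = r → ∀ t ∈ Icc t₀ t₁, u x t ≤ F (‖x‖ ^ 2) - c * (t - t₀))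
    (hsuper : ∀ x ∈ closedBall (0 : Eu n) r \ ball 0 m, ∀ A β, memS θ A → β ∈ 𝓑 x →
      ε * (2 * F₁ (‖x‖ ^ 2) * A.trace + 4 * F₂ (‖x‖ ^ 2) * mquad A x)
        + 2 * F₁ (‖x‖ ^ 2) * inner ℝ β x < -c)
    {x : Eu n} (hx : x ∈ closedBall (0 : Eu n) r \ ball 0 m) {t : ℝ} (ht : t ∈ Icc t₀ t₁) :
    u x t ≤ F (‖x‖ ^ 2) - c * (t - t₀) := by
  have hne (z : Eu n × ℝ) (hz : z ∈ (closedBall (0 : Eu n) r \ ball 0 m) ×ˢ Icc t₀ t₁) :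
      ‖z.1‖ ^ 2 ≠ 0 := by
    have : m ≤ ‖z.1‖ := by simpa using hz.1.2
    have := hm.trans_le this
    positivity
  have hcomp := IsSolOn.radial_le (h.const_add_const_mul 0 (-1)) hθ hε
    (((isCompact_closedBall 0 r).diff isOpen_ball).prod isCompact_Icc) Subset.rfl
    (Φ := fun ζ t => -F ζ + c * (t - t₀)) (Φ₁ := fun ζ _ => -F₁ ζ) (Φ₂ := fun ζ _ => -F₂ ζ)
    (Φₜ := fun _ _ => c) (fun z hz => ?_)
    (fun z hz => (isOpen_ne.eventually_mem (hne z hz)).mono fun ζ hζ => (hF ζ hζ).neg.add_const _)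
    (fun z hz => (hF₁ _ (hne z hz)).neg) (fun z _ => ?_) (fun y s hys hlt => ?_)
    (fun y s hys A β hA hβ => ?_) (mk_mem_prod hx ht)
  · dsimp only at hcomp
    linarith
  · have hFc : ContinuousAt (fun z : Eu n × ℝ => F (‖z.1‖ ^ 2)) z :=
      (hF _ (hne z hz)).continuousAt.comp (f := fun z : Eu n × ℝ => ‖z.1‖ ^ 2) (by fun_prop)
    exact (hFc.neg.add (by fun_prop)).continuousWithinAt
  · simpa using (((hasDerivAt_id z.2).sub_const t₀).const_mul c).const_add (-F (‖z.1‖ ^ 2))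
  · obtain ⟨hy, hs⟩ := hys
    have hmy : m < ‖y‖ := lt_of_le_of_ne (by simpa using hy.2) fun heq => by
      linarith [hbdry y (.inl heq.symm) s hs]
    have hyr : ‖y‖ < r := lt_of_le_of_ne (by simpa using hy.1) fun heq => by
      linarith [hbdry y (.inr heq) s hs]
    have hts : t₀ < s := lt_of_le_of_ne hs.1 fun heq => by
      subst heq
      linarith [hinit y hy, sub_self t₀]
    refine ⟨?_, ?_⟩
    · filter_upwards [continuous_norm.continuousAt.eventually (lt_mem_nhds hmy),
        continuous_norm.continuousAt.eventually (gt_mem_nhds hyr)] with z hmz hzr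
      exact mk_mem_prod ⟨by simpa using hzr.le, by simpa using hmz.le⟩ hs
    · filter_upwards [Ioo_mem_nhdsLT hts] with s' hs'
      exact mk_mem_prod hy ⟨hs'.1.le, hs'.2.le.trans hs.2⟩
  · linarith [hsuper y hys.1 A β hA hβ]

section Annulus

variable {θ ε b₀ m r τ M : ℝ} {N : ℕ}

lemma annulusBarrier_strict_supersolution {A : Matrix (Fin n) (Fin n) ℝ} {x β : Eu n} (hθ : 0 < θ)
    (hε : 0 < ε) (hb₀ : 0 < b₀) (hm : 0 < m) (hr : 0 < r) (hτ : 0 < τ) (hN₀ : N ≠ 0)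
    (hN : n / θ ≤ 2 * θ * (N + 1)) (hM : M = (2 * n * ε / (θ * b₀ * m ^ 2)) ^ N)
    (hετ : 2 * n / (θ * r ^ 2) * (ε * τ) < 1) (hA : memS θ A) (hx : x ≠ 0)
    (hβ : inner ℝ β x ≤ -b₀ * ‖x‖ ^ 2) {F₁ F₂ : ℝ → ℝ}
    (hF₁ : ∀ ζ, F₁ ζ = 2 / (b₀ * τ) * ((1 + N * (M * (m ^ 2 / ζ) ^ N)) / ζ) + 1 / r ^ 2)
    (hF₂ : ∀ ζ, F₂ ζ =
      2 / (b₀ * τ) * -((1 + (N + 1) * (N * (M * (m ^ 2 / ζ) ^ N))) / ζ ^ 2)) :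
    ε * (2 * F₁ (‖x‖ ^ 2) * A.trace + 4 * F₂ (‖x‖ ^ 2) * mquad A x)
      + 2 * F₁ (‖x‖ ^ 2) * inner ℝ β x < -τ⁻¹ := by
  have hlog := mul_le_mul_of_nonneg_left
    (logBarrier_supersolution hθ hε hb₀ (pow_pos hm 2) hN₀ hN hM hA hx hβ)
    (show 0 ≤ 2 / (b₀ * τ) by positivity)
  have hrate : 2 / (b₀ * τ) * -b₀ = -2 * τ⁻¹ := by field_simp
  have hβ₀ : inner ℝ β x ≤ 0 := by linarith [mul_nonneg hb₀.le (sq_nonneg ‖x‖)]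
  have hquad : 1 / r ^ 2 * (2 * (ε * A.trace) + 2 * inner ℝ β x) < τ⁻¹ := by
    calc 1 / r ^ 2 * (2 * (ε * A.trace) + 2 * inner ℝ β x)
        ≤ 1 / r ^ 2 * (2 * (ε * (n / θ))) := by
          have := mul_le_mul_of_nonneg_left hA.trace_le hε.le
          gcongr
          linarith
      _ = 2 * n / (θ * r ^ 2) * (ε * τ) * τ⁻¹ := by field_simp
      _ < τ⁻¹ := mul_lt_of_lt_one_left (inv_pos.2 hτ) hετ
  rw [hF₁, hF₂]
  linarith

-- The barrier decreases by one over the time span `τ`, so it forgets the bound `1` on the initial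
-- and outer boundaries.
lemma IsSolOn.le_add_log_of_le_on_sphere {𝓑 : Eu n → Set (Eu n)} {u : Eu n → ℝ → ℝ} {t₀ η : ℝ}
    (hθ : 0 < θ) (hε : 0 < ε) (hb₀ : 0 < b₀) (hm : 0 < m) (hτ : 0 < τ) (hη : 0 ≤ η)
    (hN₀ : N ≠ 0) (hN : n / θ ≤ 2 * θ * (N + 1)) (hM : M = (2 * n * ε / (θ * b₀ * m ^ 2)) ^ N)
    (hετ : 2 * n / (θ * r ^ 2) * (ε * τ) < 1)
    (h : IsSolOn θ ε 𝓑 ((closedBall 0 r \ ball 0 m) ×ˢ Icc t₀ (t₀ + τ)) u)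
    (h𝓑 : ∀ x, ∀ β ∈ 𝓑 x, inner ℝ β x ≤ -b₀ * ‖x‖ ^ 2)
    (hu : ∀ x ∈ closedBall (0 : Eu n) r, ∀ t ∈ Icc t₀ (t₀ + τ), u x t ≤ 1)
    (hum : ∀ x : Eu n, ‖x‖ = m → ∀ t ∈ Icc t₀ (t₀ + τ), u x t ≤ η)
    {x : Eu n} (hx : x ∈ closedBall (0 : Eu n) r \ ball 0 m) :
    u x (t₀ + τ) ≤ η + 2 / (b₀ * τ) * (Real.log (r ^ 2) - Real.log (m ^ 2) + M)
      + ‖x‖ ^ 2 / r ^ 2 := by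
  have hmem (y : Eu n) : y ∈ closedBall (0 : Eu n) r \ ball 0 m ↔ ‖y‖ ≤ r ∧ m ≤ ‖y‖ := by simp
  simp only [hmem] at hx
  have hr : 0 < r := by linarith
  have hM₀ : 0 ≤ M := by rw [hM]; positivity
  have ha : 0 ≤ 2 / (b₀ * τ) := by positivity
  have hlog (y : Eu n) (hy : m ≤ ‖y‖) :
      0 ≤ 2 / (b₀ * τ) * logBarrier (m ^ 2) M N (‖y‖ ^ 2) + ‖y‖ ^ 2 / r ^ 2 :=
    add_nonneg (mul_nonneg ha (logBarrier_nonneg (pow_pos hm 2) hM₀ N (by gcongr))) (by positivity)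
  have hbar := IsSolOn.le_radial_on_annulus (c := τ⁻¹) hθ hε.le hm h
    (F := fun ζ => η + 1 + 2 / (b₀ * τ) * logBarrier (m ^ 2) M N ζ + ζ / r ^ 2)
    (fun ζ hζ => (((hasDerivAt_logBarrier (m ^ 2) M N hζ).const_mul _).const_add _).add
      ((hasDerivAt_id ζ).div_const _))
    (fun ζ hζ => ((hasDerivAt_deriv_logBarrier (m ^ 2) M N hζ).const_mul _).add_const _)
    (fun y hy => ?_) (fun y hy t ht => ?_) (fun y hy A β hA hβ => ?_) ((hmem x).2 hx)
    (right_mem_Icc.2 (by linarith))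
  · have hbound := mul_le_mul_of_nonneg_left (logBarrier_le (pow_pos hm 2) hM₀ N
      (pow_pos (hm.trans_le hx.2) 2) (pow_le_pow_left₀ (norm_nonneg x) hx.1 2)) ha
    rw [add_sub_cancel_left, inv_mul_cancel₀ hτ.ne'] at hbar
    linarith
  · linarith [hu y hy.1 t₀ (left_mem_Icc.2 (by linarith)), hlog y ((hmem y).1 hy).2]
  · have hdec : τ⁻¹ * (t - t₀) ≤ 1 := by
      rw [inv_mul_le_one₀ hτ]
      linarith [ht.2]
    rcases hy with hy | hy
    · linarith [hum y hy t ht, hlog y hy.ge]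
    · have hone : ‖y‖ ^ 2 / r ^ 2 = 1 := by rw [hy, div_self (by positivity)]
      have hbar₀ := mul_nonneg ha (logBarrier_nonneg (pow_pos hm 2) hM₀ N (ζ := ‖y‖ ^ 2)
        (pow_le_pow_left₀ hm.le (by linarith) 2))
      linarith [hu y (by simpa using hy.le) t ht]
  · have hy₀ : y ≠ 0 := norm_pos_iff.1 (hm.trans_le ((hmem y).1 hy).2)
    exact annulusBarrier_strict_supersolution hθ hε hb₀ hm hr hτ hN₀ hN hM hετ hA hy₀ (h𝓑 y β hβ)
      (fun _ => rfl) fun _ => rfl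

lemma IsSolOn.le_add_log_of_le_near_zero {𝓑 : Eu n → Set (Eu n)} {u : Eu n → ℝ → ℝ}
    {T : ℝ≥0∞} {r₀ t₀ t η : ℝ} (hθ : 0 < θ) (hε : 0 < ε) (hb₀ : 0 < b₀) (hm : 0 < m)
    (hr : r < r₀) (hτ : 0 < τ) (hη : 0 ≤ η) (ht₀ : 0 ≤ t₀) (hN₀ : N ≠ 0)
    (hN : n / θ ≤ 2 * θ * (N + 1)) (hM : M = (2 * n * ε / (θ * b₀ * m ^ 2)) ^ N)
    (hετ : 2 * n / (θ * r ^ 2) * (ε * τ) < 1) (h : IsSolOn θ ε 𝓑 (cylO (ball 0 r₀) T) u)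
    (h𝓑 : ∀ x, ∀ β ∈ 𝓑 x, inner ℝ β x ≤ -b₀ * ‖x‖ ^ 2)
    (hu : ∀ x ∈ ball (0 : Eu n) r₀, ∀ t : ℝ, 0 < t → ENNReal.ofReal t < T → u x t ≤ 1)
    (hum : ∀ x ∈ closedBall (0 : Eu n) m, ∀ t : ℝ, t₀ < t → ENNReal.ofReal t < T → u x t ≤ η)
    (ht : t₀ + τ < t) (htT : ENNReal.ofReal t < T) {x : Eu n}
    (hx : x ∈ closedBall (0 : Eu n) r \ ball 0 m) :
    u x t ≤ η + 2 / (b₀ * τ) * (Real.log (r ^ 2) - Real.log (m ^ 2) + M) + ‖x‖ ^ 2 / r ^ 2 := by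
  have hball : closedBall (0 : Eu n) r ⊆ ball 0 r₀ := closedBall_subset_ball hr
  have htime (s : ℝ) (hs : s ∈ Icc (t - τ) (t - τ + τ)) : t₀ < s ∧ ENNReal.ofReal s < T :=
    ⟨by linarith [hs.1], (ENNReal.ofReal_le_ofReal (by linarith [hs.2])).trans_lt htT⟩
  rw [← sub_add_cancel t τ]
  refine IsSolOn.le_add_log_of_le_on_sphere hθ hε hb₀ hm hτ hη hN₀ hN hM hετ
    (h.mono (fun z hz => ⟨hball hz.1.1, ?_⟩) fun _ _ => Subset.rfl) h𝓑
    (fun y hy s hs => hu y (hball hy) s (ht₀.trans_lt (htime s hs).1) (htime s hs).2)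
    (fun y hy s hs => hum y (by simpa using hy.le) s (htime s hs).1 (htime s hs).2) hx
  exact ⟨ht₀.trans_lt (htime z.2 hz.2).1, (htime z.2 hz.2).2⟩

end Annulus

lemma exists_forall_mul_sqrt_lt_and_mul_log_lt (c₁ c₂ : ℝ) {r : ℝ} (hr : 0 < r) :
    ∃ ε₀ ∈ Ioo (0 : ℝ) 1, ∀ ε ∈ Ioc 0 ε₀,
      c₁ * √ε < r ∧ c₂ * (ε * (|Real.log ε| + 1)) < 1 := by
  have hsqrt : Continuous (fun ε : ℝ => c₁ * √ε) := by fun_prop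
  have hlog : Continuous (fun ε : ℝ => c₂ * (|ε * Real.log ε| + |ε|)) := by
    have := Real.continuous_mul_log
    fun_prop
  have hev : ∀ᶠ ε : ℝ in 𝓝 0, c₁ * √ε < r ∧ c₂ * (|ε * Real.log ε| + |ε|) < 1 :=
    (hsqrt.tendsto' 0 0 (by simp) |>.eventually_lt_const hr).and
      (hlog.tendsto' 0 0 (by simp) |>.eventually_lt_const one_pos)
  obtain ⟨e, he, hball⟩ := Metric.eventually_nhds_iff.1 hev
  refine ⟨min (e / 2) (1 / 2), ⟨by positivity, (min_le_right _ _).trans_lt (by norm_num)⟩,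
    fun ε hε => ?_⟩
  obtain ⟨h₁, h₂⟩ := hball (y := ε) (by
    rw [Real.dist_0_eq_abs, abs_of_pos hε.1]
    linarith [hε.2.trans (min_le_left _ _)])
  rw [abs_mul, abs_of_pos hε.1] at h₂
  exact ⟨h₁, by linarith⟩

lemma exists_log_waiting_time {b₀ δ ρ M : ℝ} (hb₀ : 0 < b₀) (hδ : 0 < δ) (hρ : 0 < ρ)
    (hM : 0 ≤ M) (r : ℝ) :
    ∃ C > 0, ∀ ε > 0, 2 / (b₀ * (C * (|Real.log ε| + 1)))
      * (Real.log (r ^ 2) - Real.log ((ρ * √ε) ^ 2) + M) ≤ δ := by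
  obtain ⟨L, hL⟩ : ∃ L, L = |Real.log (r ^ 2) - Real.log (ρ ^ 2)| + M + 1 := ⟨_, rfl⟩
  have habs := abs_nonneg (Real.log (r ^ 2) - Real.log (ρ ^ 2))
  have hL₁ : 1 ≤ L := by linarith
  refine ⟨2 * L / (b₀ * δ), by positivity, fun ε hε => ?_⟩
  have hle : Real.log (r ^ 2) - Real.log ((ρ * √ε) ^ 2) + M ≤ L * (|Real.log ε| + 1) := by
    rw [mul_pow, Real.sq_sqrt hε.le, Real.log_mul (by positivity) hε.ne']
    linarith [le_abs_self (Real.log (r ^ 2) - Real.log (ρ ^ 2)), neg_abs_le (Real.log ε),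
      le_mul_of_one_le_left (abs_nonneg (Real.log ε)) hL₁]
  calc 2 / (b₀ * (2 * L / (b₀ * δ) * (|Real.log ε| + 1)))
        * (Real.log (r ^ 2) - Real.log ((ρ * √ε) ^ 2) + M)
      ≤ 2 / (b₀ * (2 * L / (b₀ * δ) * (|Real.log ε| + 1))) * (L * (|Real.log ε| + 1)) := by gcongr
    _ = δ := by
      have : |Real.log ε| + 1 ≠ 0 := by positivity
      field_simp

/-- The drifts allowed at `x` for a vector field which grows at most linearly and points towards the
origin at rate `b₀`. -/
def attractingDrift (K b₀ : ℝ) (x : Eu n) : Set (Eu n) :=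
  {β | ‖β‖ ≤ K * ‖x‖ ∧ inner ℝ β x ≤ -b₀ * ‖x‖ ^ 2}

lemma isSolOn_attractingDrift_of_solveL {θ ε b₀ r : ℝ} {K : NNReal} {b : Eu n → Eu n}
    {Ω : Set (Eu n)} {T : ℝ≥0∞} {u : Eu n → ℝ → ℝ} {A : Eu n → ℝ → Matrix (Fin n) (Fin n) ℝ}
    (hK : LipschitzWith K b) (hb : b 0 = 0) (hΩ : closedBall (0 : Eu n) r ⊆ Ω)
    (hco : ∀ x ∈ ball (0 : Eu n) r, dotp (b x) x ≤ -b₀ * ‖x‖ ^ 2) (hA : MatC θ A Ω T)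
    (hu : Classical21 u Ω T) (hL : SolveL ε A b u Ω T) :
    IsSolOn θ ε (attractingDrift K b₀) (cylO (ball 0 r) T) u := by
  refine (isSolOn_of_solveL hA hu hL).mono
    (fun z hz => ⟨hΩ (ball_subset_closedBall hz.1), hz.2⟩) fun z hz => ?_
  rw [singleton_subset_iff]
  refine ⟨?_, dotp_eq_inner (b z.1) z.1 ▸ hco z.1 hz.1⟩
  simpa only [hb, dist_zero_right] using hK.dist_le_mul z.1 0

lemma norm_le_half_and_sq_div_sq_half_le {r δ : ℝ} (hr : 0 < r) {x : Eu n}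
    (hx : x ∈ ball (0 : Eu n) (min (1 / 4) (δ / 4) * r)) :
    ‖x‖ ≤ r / 2 ∧ ‖x‖ ^ 2 / (r / 2) ^ 2 ≤ δ / 4 := by
  have hx₄ : ‖x‖ ≤ r / 4 := (mem_ball_zero_iff.1 hx).le.trans
    ((mul_le_mul_of_nonneg_right (min_le_left _ _) hr.le).trans_eq (by ring))
  have hxδ : ‖x‖ ≤ δ / 4 * r := (mem_ball_zero_iff.1 hx).le.trans
    (mul_le_mul_of_nonneg_right (min_le_right _ _) hr.le)
  refine ⟨by linarith, ?_⟩
  rw [div_le_iff₀ (by positivity), pow_two]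
  exact (mul_le_mul hx₄ hxδ (norm_nonneg x) (by positivity)).trans_eq (by ring)

theorem stmt8_general (n : ℕ) {θ b₀ r₀ K δ : ℝ} (hθ : 0 < θ) (hb₀ : 0 < b₀) (hr₀ : 0 < r₀)
    (hK : 0 ≤ K) (hδ : 0 < δ) :
    ∃ ε₀ ∈ Ioo (0 : ℝ) 1, ∃ τ : ℝ → ℝ, ∃ γ ∈ Ioo (0 : ℝ) 1, ∃ C > (0 : ℝ),
      (∀ ε ∈ Ioc (0 : ℝ) ε₀, 0 < τ ε ∧ τ ε ≤ C * (|Real.log ε| + 1)) ∧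
      ∀ ε ∈ Ioc (0 : ℝ) ε₀, ∀ (T : ℝ≥0∞) (u : Eu n → ℝ → ℝ),
        IsSolOn θ ε (attractingDrift K b₀) (cylO (ball 0 r₀) T) u →
        (∀ x ∈ ball (0 : Eu n) r₀, ∀ t : ℝ, 0 < t → ENNReal.ofReal t < T → u x t ≤ 1) →
        (∀ t : ℝ, 0 < t → ENNReal.ofReal t < T → u 0 t ≤ 0) →
        ∀ x ∈ ball (0 : Eu n) (γ * r₀), ∀ t : ℝ, τ ε < t → ENNReal.ofReal t < T → u x t ≤ δ := by
  obtain ⟨κ, ρ, t₀, hρ, ht₀, hnear⟩ := IsSolOn.exists_le_near_zero n hθ hK (half_pos hδ)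
  obtain ⟨N, hN⟩ := exists_nat_ge (n / θ / (2 * θ))
  rw [div_le_iff₀ (by positivity)] at hN
  have hM : 0 ≤ (2 * n / (θ * b₀ * ρ ^ 2)) ^ (N + 1) := by positivity
  obtain ⟨C, hC, hwait⟩ :=
    exists_log_waiting_time hb₀ (show 0 < δ / 4 by positivity) hρ hM (r₀ / 2)
  obtain ⟨ε₀, hε₀, hsmall⟩ :=
    exists_forall_mul_sqrt_lt_and_mul_log_lt κ (2 * n / (θ * (r₀ / 2) ^ 2) * C) hr₀
  refine ⟨ε₀, hε₀, fun ε => t₀ + C * (|Real.log ε| + 1), min (1 / 4) (δ / 4),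
    ⟨by positivity, (min_le_left _ _).trans_lt (by norm_num)⟩, t₀ + C, by positivity,
    fun ε _ => ⟨by positivity, ?_⟩, fun ε hε T u h hu hu₀ x hx t ht htT => ?_⟩
  · linarith [mul_nonneg ht₀ (abs_nonneg (Real.log ε))]
  obtain ⟨hκ, hετ⟩ := hsmall ε hε
  have hε' := hε.1
  have hnear' := hnear hε' (fun x β hβ => hβ.1) hκ h hu hu₀
  rcases le_or_gt ‖x‖ (ρ * √ε) with hxρ | hxρ
  · have hτ : 0 ≤ C * (|Real.log ε| + 1) := by positivity
    linarith [hnear' x (mem_closedBall_zero_iff.2 hxρ) t (by linarith) htT]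
  obtain ⟨hx₂, hxδ⟩ := norm_le_half_and_sq_div_sq_half_le hr₀ hx
  have hbound := h.le_add_log_of_le_near_zero (m := ρ * √ε) (r := r₀ / 2) (N := N + 1) hθ hε' hb₀
    (by positivity) (half_lt_self hr₀) (by positivity) (half_pos hδ).le ht₀ N.succ_ne_zero
    (by push_cast; linarith) rfl (by linarith) (fun x β hβ => hβ.2) hu hnear' ht htT (x := x)
    ⟨by simpa using hx₂, by simpa using hxρ.le⟩
  have hM' : 2 * n * ε / (θ * b₀ * (ρ * √ε) ^ 2) = 2 * n / (θ * b₀ * ρ ^ 2) := by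
    rw [mul_pow, Real.sq_sqrt hε'.le]
    field_simp
  rw [hM'] at hbound
  linarith [hwait ε hε.1]

/-- Proposition 2.6: smallness near the origin after a time of order `|log ε|`. -/
theorem stmt8 {n : ℕ} (θ₀ : ℝ) (hθ : θ₀ ∈ Set.Ioc (0:ℝ) 1)
    (Ω : Set (Eu n)) (ν : Eu n → Eu n) (b : Eu n → Eu n) (b₀ r₀ : ℝ)
    (hdom : IsBdC1With Ω ν) (h0 : (0 : Eu n) ∈ Ω)
    (hbl : ∃ K : NNReal, LipschitzWith K b) (hb0 : b 0 = 0)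
    (hgas : ∃ X : ℝ → Eu n → Eu n, GAS b X)
    (hb₀ : 0 < b₀) (hr₀ : 0 < r₀) (hsub : closedBall (0 : Eu n) r₀ ⊆ Ω)
    (hco : ∀ x ∈ ball (0 : Eu n) r₀, dotp (b x) x ≤ -b₀ * ‖x‖ ^ 2)
    (δ : ℝ) (hδ : 0 < δ) :
    ∃ ε₀ ∈ Set.Ioo (0:ℝ) 1, ∃ τ : ℝ → ℝ, ∃ γ ∈ Set.Ioo (0:ℝ) 1, ∃ C > (0:ℝ),
      (∀ ε ∈ Set.Ioc (0:ℝ) ε₀, 0 < τ ε ∧ τ ε ≤ C * (|Real.log ε| + 1)) ∧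
      ∀ ε ∈ Set.Ioc (0:ℝ) ε₀,
      ∀ (A : Eu n → ℝ → Matrix (Fin n) (Fin n) ℝ) (T : ℝ≥0∞),
        ENNReal.ofReal (τ ε) < T → MatC θ₀ A Ω T →
        ∀ u : Eu n → ℝ → ℝ, Classical21 u Ω T → SolveL ε A b u Ω T →
        (∀ x ∈ ball (0 : Eu n) r₀, ∀ t : ℝ, 0 < t → ENNReal.ofReal t < T → u x t ≤ 1) →
        (∀ t : ℝ, 0 < t → ENNReal.ofReal t < T → u 0 t ≤ 0) →
        ∀ x ∈ ball (0 : Eu n) (γ * r₀), ∀ t : ℝ, τ ε < t → ENNReal.ofReal t < T →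
          u x t ≤ δ := by
  obtain ⟨K, hK⟩ := hbl
  obtain ⟨ε₀, hε₀, τ, γ, hγ, C, hC, hτ, hle⟩ := stmt8_general n hθ.1 hb₀ hr₀ K.coe_nonneg hδ
  exact ⟨ε₀, hε₀, τ, γ, hγ, C, hC, hτ, fun ε hε A T _ hA u hu hL =>
    hle ε hε T u (isSolOn_attractingDrift_of_solveL hK hb0 hsub hco hA hu hL)⟩
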